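/- For x → ∞, ∑_{n ≤ x} φ(n) = (3/π²)x² + O(x (log x)^{2/3} (log log x)^{4/3}), where φ is the Euler totient function. -/

import Mathlib

open Filter Finset Real

/-!
Since `φ = μ * id`, the totient sum up to `x` is `(3 / π²) x² - x ∑ μ(d) ψ(x / d) / d + O(x)`, where
`ψ` is the sawtooth function and `d` runs up to `x`. With `L = log x`, the ranges where `log d` is
`O(L^(2/3) (log L)^(4/3))` and where `log (x / d)` is `O(L^(2/3))` are estimated trivially. In
between, the Fourier expansion of the periodic primitive of `ψ` reduces a dyadic block to the sums
`∑ μ(d) e(h x / d)`, and Vaughan's identity reduces these to the sums `∑ e(X / n)`. The latter save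
any power of `L` by Vinogradov's method: shifting `n` by products turns the Taylor polynomial of
`X / n` into a bilinear form in vectors of powers, and Hölder's inequality bounds the resulting sum
by Vinogradov's mean value theorem, with its explicit dependence on the degree. The mean value
theorem itself follows from Linnik's count of the solutions of a system of congruences modulo powers
of a prime, by a recursion that passes to residue classes modulo that prime.
-/

namespace Walfisz

section Newton

variable {ι σ R : Type*} [Fintype ι] [Fintype σ] [CommRing R]

lemma newton_esymm (z : σ → R) (m : ℕ) :
    (m : R) * (univ.val.map z).esymm m = (-1) ^ (m + 1) *
      ∑ i ∈ range m, (-1) ^ i * (univ.val.map z).esymm i * ∑ j, z j ^ (m - i) := by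
  have h := congrArg (MvPolynomial.aeval z) (MvPolynomial.mul_esymm_eq_sum σ R m)
  simp only [map_mul, map_sum, map_pow, map_neg, map_one, map_natCast,
    MvPolynomial.aeval_esymm_eq_multiset_esymm, MvPolynomial.psum, MvPolynomial.aeval_X] at h
  rw [h, sum_filter, Finset.Nat.sum_antidiagonal_eq_sum_range_succ_mk, sum_range_succ]
  simp only [lt_self_iff_false, if_false, add_zero]
  congr 1
  exact sum_congr rfl fun i hi => if_pos (mem_range.mp hi)

lemma esymm_eq_of_sum_pow_eq {z w : σ → R} {k : ℕ}
    (hk : ∀ m : ℕ, 0 < m → m ≤ k → IsUnit (m : R))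
    (h : ∀ j, 0 < j → j ≤ k → ∑ i, z i ^ j = ∑ i, w i ^ j) {m : ℕ} (hm : m ≤ k) :
    (univ.val.map z).esymm m = (univ.val.map w).esymm m := by
  induction m using Nat.strong_induction_on with
  | _ m ih =>
    rcases Nat.eq_zero_or_pos m with rfl | hpos
    · simp [Multiset.esymm]
    · refine (hk m hpos hm).mul_left_cancel ?_
      rw [newton_esymm, newton_esymm]
      congr 1
      refine sum_congr rfl fun i hi => ?_
      have hi := mem_range.mp hi
      rw [ih i hi (by omega), h (m - i) (by omega) (by omega)]

lemma prod_sub_eq_zero_of_sum_pow_eq {z w : σ → R}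
    (hunit : ∀ m : ℕ, 0 < m → m ≤ Fintype.card σ → IsUnit (m : R))
    (h : ∀ j, 0 < j → j ≤ Fintype.card σ → ∑ i, z i ^ j = ∑ i, w i ^ j) (l : σ) :
    ∏ i, (z l - w i) = 0 := by
  have hpoly : ((univ.val.map z).map fun t => Polynomial.X - Polynomial.C t).prod =
      ((univ.val.map w).map fun t => Polynomial.X - Polynomial.C t).prod := by
    rw [Multiset.prod_X_sub_X_eq_sum_esymm, Multiset.prod_X_sub_X_eq_sum_esymm]
    simp only [Multiset.card_map, card_val, card_univ]
    refine sum_congr rfl fun j hj => ?_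
    rw [esymm_eq_of_sum_pow_eq hunit h (by simpa [Nat.lt_succ_iff] using hj)]
  calc ∏ i, (z l - w i)
      = ((univ.val.map w).map fun t => Polynomial.X - Polynomial.C t).prod.eval (z l) := by
        simp [Polynomial.eval_prod]
    _ = ((univ.val.map z).map fun t => Polynomial.X - Polynomial.C t).prod.eval (z l) := by
        rw [hpoly]
    _ = ∏ i, (z l - z i) := by simp [Polynomial.eval_prod]
    _ = 0 := prod_eq_zero (mem_univ l) (sub_self _)

lemma card_filter_injective_image_eq [DecidableEq ι] [DecidableEq σ] {A : Finset σ}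
    (hA : #A = Fintype.card ι) :
    #{a : ι → σ | Function.Injective a ∧ univ.image a = A} = (Fintype.card ι).factorial := by
  have hinj : Function.Injective fun (e : ι ≃ A) (i : ι) => (e i : σ) := fun e e' h =>
    Equiv.ext fun i => Subtype.ext (congrFun h i)
  have himage : ({a : ι → σ | Function.Injective a ∧ univ.image a = A} : Finset (ι → σ)) =
      univ.map ⟨_, hinj⟩ := by
    ext a
    simp only [mem_filter, mem_univ, true_and, Finset.mem_map, Function.Embedding.coeFn_mk]
    constructor
    · rintro ⟨ha, rfl⟩
      exact ⟨Equiv.ofBijective (fun i => ⟨a i, mem_image_of_mem _ (mem_univ i)⟩)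
        ⟨fun i j hij => ha (congrArg Subtype.val hij), fun ⟨y, hy⟩ => by simpa using hy⟩, rfl⟩
    · rintro ⟨e, rfl⟩
      refine ⟨Subtype.val_injective.comp e.injective, ?_⟩
      ext y
      simp only [mem_image, mem_univ, true_and]
      exact ⟨fun ⟨i, hi⟩ => hi ▸ (e i).2, fun hy => ⟨e.symm ⟨y, hy⟩, by simp⟩⟩
  rw [himage, card_map, card_univ,
    Fintype.card_equiv (Fintype.equivOfCardEq (by simp [hA]))]

lemma sum_injective_prod [DecidableEq ι] [DecidableEq σ] (z : σ → R) :
    ∑ a : ι → σ with Function.Injective a, ∏ i, z (a i) =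
      (Fintype.card ι).factorial * (univ.val.map z).esymm (Fintype.card ι) := by
  rw [Finset.esymm_map_val, mul_sum]
  have hmaps : ∀ a ∈ ({a : ι → σ | Function.Injective a} : Finset (ι → σ)),
      univ.image a ∈ powersetCard (Fintype.card ι) (univ : Finset σ) := by
    intro a ha
    simp [mem_powersetCard, card_image_of_injective _ (mem_filter.mp ha).2, card_univ]
  rw [← sum_fiberwise_of_maps_to hmaps]
  refine sum_congr rfl fun A hA => ?_
  have hprod : ∀ a ∈ ({a ∈ ({a : ι → σ | Function.Injective a} : Finset (ι → σ)) |
      univ.image a = A} : Finset (ι → σ)), ∏ i, z (a i) = ∏ i ∈ A, z i := by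
    intro a ha
    simp only [mem_filter, mem_univ, true_and] at ha
    rw [← ha.2, prod_image fun x _ y _ hxy => ha.1 hxy]
  rw [sum_congr rfl hprod, sum_const, nsmul_eq_mul, filter_filter,
    card_filter_injective_image_eq (mem_powersetCard.mp hA).2]

end Newton

section SquareFunction

variable {ι σ 𝕜 : Type*} [Fintype ι] [Fintype σ] [RCLike 𝕜] {S : ℝ}

lemma norm_sum_pow_le_of_sum_sq_le {z : σ → 𝕜} (hS : 0 ≤ S) (hz : ∑ i, ‖z i‖ ^ 2 ≤ S ^ 2)
    {j : ℕ} (hj : 2 ≤ j) : ‖∑ i, z i ^ j‖ ≤ S ^ j := by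
  have hle : ∀ i, ‖z i‖ ≤ S := fun i => le_of_sq_le_sq
    ((single_le_sum (f := fun i => ‖z i‖ ^ 2) (fun _ _ => by positivity) (mem_univ i)).trans hz) hS
  obtain ⟨j, rfl⟩ := Nat.exists_eq_add_of_le' hj
  calc ‖∑ i, z i ^ (j + 2)‖ ≤ ∑ i, ‖z i‖ ^ j * ‖z i‖ ^ 2 :=
        (norm_sum_le _ _).trans_eq (by simp only [pow_add, norm_mul, norm_pow])
    _ ≤ ∑ i, S ^ j * ‖z i‖ ^ 2 := by
        gcongr with i
        exact hle i
    _ ≤ S ^ (j + 2) := by rw [← mul_sum, pow_add]; gcongr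

lemma norm_sum_mul_norm_esymm_le {z : σ → 𝕜} (hS : 0 ≤ S) (hz : ∑ i, ‖z i‖ ^ 2 ≤ S ^ 2) (m : ℕ) :
    ‖∑ i, z i‖ * ‖(univ.val.map z).esymm m‖ ≤ (m + 1) * ‖(univ.val.map z).esymm (m + 1)‖ +
      ∑ i ∈ range m, ‖(univ.val.map z).esymm i‖ * S ^ (m + 1 - i) := by
  set E : ℕ → 𝕜 := (univ.val.map z).esymm
  set tail := ∑ i ∈ range m, (-1) ^ i * E i * ∑ l, z l ^ (m + 1 - i)
  have htail : ‖tail‖ ≤ ∑ i ∈ range m, ‖E i‖ * S ^ (m + 1 - i) := by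
    refine (norm_sum_le _ _).trans (sum_le_sum fun i hi => ?_)
    have hi := mem_range.mp hi
    simp only [norm_mul, norm_pow, norm_neg, norm_one, one_pow, one_mul]
    gcongr
    exact norm_sum_pow_le_of_sum_sq_le hS hz (by omega)
  have hnewton : ((m + 1 : ℕ) : 𝕜) * E (m + 1) =
      (-1) ^ (m + 1 + 1) * (tail + (-1) ^ m * E m * ∑ l, z l) := by
    rw [newton_esymm, sum_range_succ, Nat.add_sub_cancel_left]
    simp only [pow_one]
    rfl
  have hnorm := congrArg norm hnewton
  simp only [norm_mul, norm_pow, norm_neg, norm_one, one_pow, one_mul,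
    RCLike.norm_natCast] at hnorm
  have hmain : ‖(-1) ^ m * E m * ∑ l, z l‖ = ‖∑ i, z i‖ * ‖E m‖ := by simp [mul_comm]
  have hsub := norm_le_add_norm_add ((-1) ^ m * E m * ∑ l, z l) tail
  rw [hmain, add_comm (_ * _) tail, ← hnorm] at hsub
  push_cast at hsub
  linarith

lemma le_pow_mul_of_forall_le_mul {E : ℕ → ℝ} {c : ℝ} {n : ℕ} (hc : 0 ≤ c)
    (h : ∀ j < n, E j ≤ c * E (j + 1)) {i : ℕ} (hi : i ≤ n) : E i ≤ c ^ (n - i) * E n := by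
  induction hi using Nat.decreasingInduction with
  | self => simp
  | of_succ j hj ih =>
    calc E j ≤ c * E (j + 1) := h j hj
      _ ≤ c * (c ^ (n - (j + 1)) * E n) := by gcongr
      _ = c ^ (n - j) * E n := by rw [← mul_assoc, ← pow_succ']; congr 2; omega

lemma sum_range_half_pow_sub_le_one (n : ℕ) : ∑ i ∈ range n, (1 / 2 : ℝ) ^ (n - i) ≤ 1 := by
  calc ∑ i ∈ range n, (1 / 2 : ℝ) ^ (n - i)
      = ∑ i ∈ range n, 1 / 2 * (1 / 2 : ℝ) ^ i := by
        rw [← sum_range_reflect]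
        refine sum_congr rfl fun i hi => ?_
        rw [← pow_succ']
        congr 1
        have := mem_range.mp hi
        omega
    _ ≤ 1 := by rw [← mul_sum]; linarith [sum_geometric_two_le n]

lemma mul_le_two_mul_of_newton_bound {E : ℕ → ℝ} {f : ℝ} {k : ℕ} (hE : ∀ n, 0 ≤ E n) (hf : 0 < f)
    (hS : 0 ≤ S) (hkS : 4 * k * S ≤ f)
    (h : ∀ n < k, f * E n ≤ (n + 1) * E (n + 1) + ∑ i ∈ range n, E i * S ^ (n + 1 - i))
    {n : ℕ} (hn : n < k) : f * E n ≤ 2 * (n + 1) * E (n + 1) := by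
  induction n using Nat.strong_induction_on with
  | _ n ih =>
    have hn1 : (n + 1 : ℝ) ≤ k := by exact_mod_cast hn
    have hstep : ∀ j < n, E j ≤ 2 * k / f * E (j + 1) := fun j hj => by
      have hjk : (j + 1 : ℝ) ≤ k := by exact_mod_cast (by omega : j + 1 ≤ k)
      rw [div_mul_eq_mul_div, le_div_iff₀ hf, mul_comm]
      refine (ih j hj (hj.trans hn)).trans ?_
      gcongr
      exact hE _
    have hratio : 2 * k / f * S ≤ 1 / 2 := by
      rw [div_mul_eq_mul_div, div_le_iff₀ hf]; linarith
    have hterm : ∀ i ∈ range n, E i * S ^ (n + 1 - i) ≤ (1 / 2) ^ (n - i) * (E n * S) := by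
      intro i hi
      have hi := (mem_range.mp hi).le
      calc E i * S ^ (n + 1 - i) ≤ (2 * k / f) ^ (n - i) * E n * (S ^ (n - i) * S) := by
            rw [Nat.sub_add_comm hi, pow_succ]
            gcongr
            exact le_pow_mul_of_forall_le_mul (by positivity) hstep hi
        _ = (2 * k / f * S) ^ (n - i) * (E n * S) := by rw [mul_pow]; ring
        _ ≤ (1 / 2) ^ (n - i) * (E n * S) := by
            have := hE n
            gcongr
    have htail : ∑ i ∈ range n, E i * S ^ (n + 1 - i) ≤ f / 2 * E n := by
      calc ∑ i ∈ range n, E i * S ^ (n + 1 - i) ≤ 1 * (E n * S) := by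
            refine (sum_le_sum hterm).trans ?_
            rw [← sum_mul]
            exact mul_le_mul_of_nonneg_right (sum_range_half_pow_sub_le_one n)
              (mul_nonneg (hE n) hS)
        _ ≤ f / 2 * E n := by
            have hSf : S ≤ f / 2 := by nlinarith [(Nat.cast_nonneg n : (0 : ℝ) ≤ n)]
            rw [one_mul, mul_comm]
            exact mul_le_mul_of_nonneg_right hSf (hE n)
    linarith [h n hn]

lemma norm_sum_pow_le_factorial_mul_norm_esymm {z : σ → 𝕜} {k : ℕ} (hS : 0 ≤ S)
    (hz : ∑ i, ‖z i‖ ^ 2 ≤ S ^ 2) (hpos : 0 < ‖∑ i, z i‖) (hkS : 4 * k * S ≤ ‖∑ i, z i‖)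
    {m : ℕ} (hm : m ≤ k) :
    ‖∑ i, z i‖ ^ m ≤ 2 ^ m * (m.factorial * ‖(univ.val.map z).esymm m‖) := by
  induction m with
  | zero => simp [Multiset.esymm]
  | succ m ih =>
    set f := ‖∑ i, z i‖
    set E : ℕ → ℝ := fun n => ‖(univ.val.map z).esymm n‖
    have hstep : f * E m ≤ 2 * (m + 1) * E (m + 1) :=
      mul_le_two_mul_of_newton_bound (fun _ => norm_nonneg _) hpos hS hkS
        (fun n _ => norm_sum_mul_norm_esymm_le hS hz n) hm
    calc f ^ (m + 1) ≤ 2 ^ m * (m.factorial * E m) * f := by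
          rw [pow_succ]; gcongr; exact ih (by omega)
      _ = 2 ^ m * m.factorial * (f * E m) := by ring
      _ ≤ 2 ^ m * m.factorial * (2 * (m + 1) * E (m + 1)) := by gcongr
      _ = 2 ^ (m + 1) * ((m + 1).factorial * E (m + 1)) := by
          rw [Nat.factorial_succ]; push_cast; ring

-- Newton's identities: a sum much larger than its square function is dominated by the terms
-- with distinct indices.
theorem norm_sum_le_or_pow_le_sum_injective [DecidableEq ι] [DecidableEq σ] {z : σ → 𝕜}
    (hS : 0 ≤ S) (hz : ∑ i, ‖z i‖ ^ 2 ≤ S ^ 2) :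
    ‖∑ i, z i‖ ≤ 4 * Fintype.card ι * S ∨ ‖∑ i, z i‖ ^ Fintype.card ι ≤
      2 ^ Fintype.card ι * ‖∑ a : ι → σ with Function.Injective a, ∏ i, z (a i)‖ := by
  refine or_iff_not_imp_left.mpr fun h => ?_
  rw [not_le] at h
  rw [sum_injective_prod, norm_mul, RCLike.norm_natCast]
  have hpos : 0 < ‖∑ i, z i‖ := lt_of_le_of_lt (by positivity) h
  exact norm_sum_pow_le_factorial_mul_norm_esymm hS hz hpos h.le le_rfl

end SquareFunction

section Congruences

lemma card_filter_Ico_mul_modEq {m : ℕ} (hm : 0 < m) (n : ℕ) (c : ℤ) :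
    #{t ∈ Ico (0 : ℤ) ((n * m : ℕ) : ℤ) | t ≡ c [ZMOD m]} = n := by
  have hcard := Int.Ico_filter_modEq_card 0 ((n * m : ℕ) : ℤ) (r := m) (by exact_mod_cast hm) c
  have hdiv : (((n * m : ℕ) - c : ℤ) : ℚ) / ((m : ℤ) : ℚ) =
      ((0 - c : ℤ) : ℚ) / ((m : ℤ) : ℚ) + ((n : ℤ) : ℚ) := by
    have : (m : ℚ) ≠ 0 := by positivity
    push_cast
    field_simp
    ring
  push_cast at hdiv hcard ⊢
  rw [hdiv, show (n : ℚ) = ((n : ℤ) : ℚ) by simp, Int.ceil_add_intCast, add_sub_cancel_left,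
    max_eq_left (by positivity)] at hcard
  exact_mod_cast hcard

lemma card_piFinset_filter_modEq_pow {p : ℕ} (hp : 0 < p) {k : ℕ} (c : Fin k → ℤ) :
    #(Fintype.piFinset fun j : Fin k =>
      {t ∈ Ico (0 : ℤ) (p ^ k) | t ≡ c j [ZMOD p ^ (j.1 + 1)]}) = p ^ (k * (k - 1) / 2) := by
  have hcard : ∀ j : Fin k, #{t ∈ Ico (0 : ℤ) (p ^ k) | t ≡ c j [ZMOD p ^ (j.1 + 1)]} =
      p ^ (k - 1 - j.1) := fun j => by
    have hpow : p ^ (k - 1 - j.1) * p ^ (j.1 + 1) = p ^ k := by rw [← pow_add]; congr 1; omega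
    have h := card_filter_Ico_mul_modEq (pow_pos hp (j.1 + 1)) (p ^ (k - 1 - j.1)) (c j)
    rw [hpow] at h
    exact_mod_cast h
  rw [Fintype.card_piFinset, prod_congr rfl fun j _ => hcard j, prod_pow_eq_pow_sum,
    Fin.sum_univ_eq_sum_range (fun j => k - 1 - j) k, sum_range_reflect (fun j => j) k,
    sum_range_id]

lemma exists_pow_dvd_sub_of_pow_dvd_prod {R ι : Type*} [CommRing R] [IsDomain R] [Fintype ι]
    {p : R} (hp : Prime p) {y : ι → R} (hy : ∀ i j, p ∣ y i - y j → i = j) {n : ℕ} (hn : n ≠ 0)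
    {t : R} (h : p ^ n ∣ ∏ i, (t - y i)) : ∃ i, p ^ n ∣ t - y i := by
  classical
  obtain ⟨i, -, hi⟩ := (hp.dvd_finsetProd_iff _).mp ((dvd_pow_self p hn).trans h)
  refine ⟨i, hp.pow_dvd_of_dvd_mul_right n (b := ∏ j ∈ univ.erase i, (t - y j)) ?_ ?_⟩
  · rw [hp.dvd_finsetProd_iff]
    rintro ⟨j, hj, hdvd⟩
    refine ne_of_mem_erase hj (hy i j ?_).symm
    simpa using dvd_sub hdvd hi
  · rwa [mul_prod_erase _ (fun j => t - y j) (mem_univ i)]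

lemma exists_pow_dvd_sub_of_sum_pow_modEq {p k : ℕ} (hp : p.Prime) (hkp : k < p) {a : ℤ}
    {x y : Fin k → ℤ} (hy : Function.Injective fun i => (y i : ZMod p))
    (h : ∀ j : Fin k, ∑ i, (x i - a) ^ (j.1 + 1) ≡ ∑ i, (y i - a) ^ (j.1 + 1) [ZMOD p ^ k])
    (l : Fin k) : ∃ i, (p : ℤ) ^ k ∣ x l - y i := by
  have hunit : ∀ m : ℕ, 0 < m → m ≤ Fintype.card (Fin k) → IsUnit (m : ZMod (p ^ k)) := by
    intro m h0 hm
    rw [Fintype.card_fin] at hm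
    rw [ZMod.isUnit_iff_coprime]
    exact Nat.Coprime.pow_right _
      (hp.coprime_iff_not_dvd.mpr (Nat.not_dvd_of_pos_of_lt h0 (by omega))).symm
  have hsum : ∀ j, 0 < j → j ≤ Fintype.card (Fin k) →
      ∑ i, ((x i - a : ℤ) : ZMod (p ^ k)) ^ j = ∑ i, ((y i - a : ℤ) : ZMod (p ^ k)) ^ j := by
    intro j h0 hj
    rw [Fintype.card_fin] at hj
    have hcast := (ZMod.intCast_eq_intCast_iff _ _ (p ^ k)).mpr
      (by exact_mod_cast h ⟨j - 1, by omega⟩)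
    simp only [Nat.sub_add_cancel h0] at hcast
    exact_mod_cast hcast
  have hzero := prod_sub_eq_zero_of_sum_pow_eq hunit hsum l
  refine exists_pow_dvd_sub_of_pow_dvd_prod (Nat.prime_iff_prime_int.mp hp) (fun i j hij => ?_)
    l.pos.ne' ?_
  · exact (hy ((ZMod.intCast_eq_intCast_iff_dvd_sub _ _ _).mpr hij)).symm
  · have hcast : ((∏ i, (x l - y i) : ℤ) : ZMod (p ^ k)) = 0 := by
      rw [← hzero]
      push_cast
      exact prod_congr rfl fun i _ => by ring
    exact_mod_cast (ZMod.intCast_zmod_eq_zero_iff_dvd _ _).mp hcast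

lemma card_filter_sum_pow_modEq_le {p k N : ℕ} (hp : p.Prime) (hkp : k < p) (hN : N ≤ p ^ k)
    (a : ℤ) (b : Fin k → ℤ) :
    #{x ∈ Fintype.piFinset fun _ : Fin k => Ico (0 : ℤ) N |
      Function.Injective (fun i => (x i : ZMod p)) ∧
      ∀ j : Fin k, ∑ i, (x i - a) ^ (j.1 + 1) ≡ b j [ZMOD p ^ k]} ≤ k ^ k := by
  set A := {x ∈ Fintype.piFinset fun _ : Fin k => Ico (0 : ℤ) N |
      Function.Injective (fun i => (x i : ZMod p)) ∧
      ∀ j : Fin k, ∑ i, (x i - a) ^ (j.1 + 1) ≡ b j [ZMOD p ^ k]} with hA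
  rcases A.eq_empty_or_nonempty with h | ⟨y, hy⟩
  · simp [h]
  have hsub : A ⊆ Fintype.piFinset fun _ : Fin k => univ.image y := by
    intro x hx
    simp only [hA, mem_filter, Fintype.mem_piFinset, mem_Ico] at hx hy ⊢
    intro l
    obtain ⟨i, hi⟩ := exists_pow_dvd_sub_of_sum_pow_modEq hp hkp hy.2.1
      (fun j => (hx.2.2 j).trans (hy.2.2 j).symm) l
    have hlt : |x l - y i| < (p : ℤ) ^ k := by
      have hN' : (N : ℤ) ≤ (p : ℤ) ^ k := by exact_mod_cast hN
      have hxl := hx.1 l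
      have hyi := hy.1 i
      rw [abs_lt]
      constructor <;> linarith [hN']
    exact mem_image.mpr ⟨i, mem_univ _, (sub_eq_zero.mp (Int.eq_zero_of_abs_lt_dvd hi hlt)).symm⟩
  refine (card_le_card hsub).trans ?_
  rw [Fintype.card_piFinset, prod_const, card_univ, Fintype.card_fin]
  exact Nat.pow_le_pow_left (card_image_le.trans (by simp)) _

-- Linnik's lemma: lift the congruences modulo `p ^ j` to congruences modulo `p ^ k`; each of the
-- `p ^ (k * (k - 1) / 2)` liftings determines the unknowns up to a permutation.
theorem card_filter_sum_pow_modEq_pow_le {p k N : ℕ} (hp : p.Prime) (hkp : k < p)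
    (hN : N ≤ p ^ k) (a : ℤ) (c : Fin k → ℤ) :
    #{x ∈ Fintype.piFinset fun _ : Fin k => Ico (0 : ℤ) N |
      Function.Injective (fun i => (x i : ZMod p)) ∧
      ∀ j : Fin k, ∑ i, (x i - a) ^ (j.1 + 1) ≡ c j [ZMOD p ^ (j.1 + 1)]} ≤
      k ^ k * p ^ (k * (k - 1) / 2) := by
  have hpos : (0 : ℤ) < p ^ k := by exact_mod_cast pow_pos hp.pos k
  set A := {x ∈ Fintype.piFinset fun _ : Fin k => Ico (0 : ℤ) N |
      Function.Injective (fun i => (x i : ZMod p)) ∧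
      ∀ j : Fin k, ∑ i, (x i - a) ^ (j.1 + 1) ≡ c j [ZMOD p ^ (j.1 + 1)]} with hA
  let lift : (Fin k → ℤ) → Fin k → ℤ := fun x j => (∑ i, (x i - a) ^ (j.1 + 1)) % (p : ℤ) ^ k
  have hlift : ∀ x ∈ A, lift x ∈ Fintype.piFinset fun j : Fin k =>
      {t ∈ Ico (0 : ℤ) (p ^ k) | t ≡ c j [ZMOD p ^ (j.1 + 1)]} := by
    intro x hx
    simp only [hA, mem_filter] at hx
    simp only [Fintype.mem_piFinset, mem_filter, mem_Ico, lift]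
    exact fun j => ⟨⟨Int.emod_nonneg _ hpos.ne', Int.emod_lt_of_pos _ hpos⟩,
      ((Int.mod_modEq _ _).of_dvd (pow_dvd_pow _ (by omega))).trans (hx.2.2 j)⟩
  have hfiber : ∀ b ∈ Fintype.piFinset fun j : Fin k =>
      {t ∈ Ico (0 : ℤ) (p ^ k) | t ≡ c j [ZMOD p ^ (j.1 + 1)]}, #{x ∈ A | lift x = b} ≤ k ^ k := by
    intro b _
    refine (card_le_card fun x hx => ?_).trans (card_filter_sum_pow_modEq_le hp hkp hN a b)
    simp only [hA, mem_filter] at hx ⊢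
    refine ⟨hx.1.1, hx.1.2.1, fun j => ?_⟩
    rw [← hx.2]
    exact (Int.mod_modEq _ _).symm
  rw [← card_piFinset_filter_modEq_pow hp.pos c]
  exact card_le_mul_card_image_of_maps_to hlift _ hfiber

end Congruences

section Torus

open MeasureTheory UnitAddTorus ComplexConjugate

section Characters

variable {d : Type*} [Fintype d]

/-- The normalized Haar measure on the torus `(ℝ / ℤ) ^ d`, over which moments are taken. -/
noncomputable def torusMeasure (d : Type*) [Fintype d] : Measure (UnitAddTorus d) :=
  Measure.pi fun _ => AddCircle.haarAddCircle

instance : IsProbabilityMeasure (torusMeasure d) := by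
  unfold torusMeasure; infer_instance

lemma integral_mFourier (n : d → ℤ) :
    ∫ t, mFourier n t ∂torusMeasure d = if n = 0 then 1 else 0 := by
  classical
  have h := orthonormal_iff_ite.mp (orthonormal_mFourier (d := d)) 0 n
  rw [L2.inner_def] at h
  refine Eq.trans ?_ (h.trans (by simp only [eq_comm]))
  refine integral_congr_ae ?_
  filter_upwards [coeFn_mFourierLp 2 (0 : d → ℤ), coeFn_mFourierLp 2 n] with t h0 hn
  rw [h0, hn]
  simp [mFourier_zero]

lemma mFourier_sum {ι : Type*} (s : Finset ι) (n : ι → d → ℤ) (t : UnitAddTorus d) :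
    mFourier (∑ i ∈ s, n i) t = ∏ i ∈ s, mFourier (n i) t := by
  classical
  induction s using Finset.induction_on with
  | empty => simp [mFourier_zero]
  | insert a s ha ih => rw [sum_insert ha, prod_insert ha, mFourier_add, ih]

lemma norm_mFourier_apply (n : d → ℤ) (t : UnitAddTorus d) : ‖mFourier n t‖ = 1 := by
  simp only [mFourier, fourier_apply, ContinuousMap.coe_mk, norm_prod, Circle.norm_coe,
    prod_const_one]

lemma norm_sum_mFourier_sq {ι : Type*} (s : Finset ι) (n : ι → d → ℤ) (t : UnitAddTorus d) :
    ((‖∑ i ∈ s, mFourier (n i) t‖ ^ 2 : ℝ) : ℂ) =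
      ∑ w ∈ s ×ˢ s, mFourier (n w.1 - n w.2) t := by
  push_cast
  rw [← Complex.mul_conj', map_sum, sum_mul_sum, ← sum_product']
  simp only [sub_eq_add_neg, mFourier_add, mFourier_neg]

lemma integrable_torusMeasure {E : Type*} [NormedAddCommGroup E] {f : UnitAddTorus d → E}
    (hf : Continuous f) : Integrable f (torusMeasure d) :=
  hf.integrable_of_hasCompactSupport (HasCompactSupport.of_compactSpace f)

end Characters

/-- The point `(x, x ^ 2, …, x ^ k)` of the moment curve: the frequency of `x` in a Weyl sum. -/
def momentCurve (k : ℕ) (x : ℤ) : Fin k → ℤ := fun j => x ^ (j.1 + 1)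

/-- The vector of the first `k` power sums of a tuple. Vinogradov's system of equations asks for two
tuples with the same vector. -/
def powerSums (k : ℕ) {ι : Type*} [Fintype ι] (u : ι → ℤ) : Fin k → ℤ := ∑ i, momentCurve k (u i)

lemma powerSums_apply {k : ℕ} {ι : Type*} [Fintype ι] (u : ι → ℤ) (j : Fin k) :
    powerSums k u j = ∑ i, u i ^ (j.1 + 1) := by
  simp [powerSums, momentCurve]

/-- The exponential sum of degree `k` over `S`, with the frequencies `t` as variable. -/
noncomputable def weylSum (k : ℕ) (S : Finset ℤ) (t : UnitAddTorus (Fin k)) : ℂ :=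
  ∑ x ∈ S, mFourier (momentCurve k x) t

/-- The `2 s`-th moment of `weylSum k S`: for `S = {0, …, N - 1}` this is Vinogradov's mean
value `J_{s,k}(N)`. -/
noncomputable def moment (k s : ℕ) (S : Finset ℤ) : ℝ :=
  ∫ t, ‖weylSum k S t‖ ^ (2 * s) ∂torusMeasure (Fin k)

variable (k s : ℕ) (S : Finset ℤ)

@[fun_prop]
lemma continuous_weylSum : Continuous (weylSum k S) := by
  unfold weylSum; fun_prop

lemma norm_weylSum_le (t : UnitAddTorus (Fin k)) : ‖weylSum k S t‖ ≤ #S :=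
  (norm_sum_le _ _).trans (by simp [norm_mFourier_apply])

lemma weylSum_pow (t : UnitAddTorus (Fin k)) :
    weylSum k S t ^ s =
      ∑ u ∈ Fintype.piFinset fun _ : Fin s => S, mFourier (powerSums k u) t := by
  rw [weylSum, sum_pow']
  exact sum_congr rfl fun u _ => (mFourier_sum _ _ _).symm

lemma moment_nonneg : 0 ≤ moment k s S :=
  integral_nonneg fun _ => by positivity

lemma integral_mFourier_mul_norm_weylSum_pow (l : Fin k → ℤ) :
    ∫ t, mFourier l t * ((‖weylSum k S t‖ ^ (2 * s) : ℝ) : ℂ) ∂torusMeasure (Fin k) =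
      #{w ∈ (Fintype.piFinset fun _ : Fin s => S) ×ˢ (Fintype.piFinset fun _ : Fin s => S) |
        l + powerSums k w.1 = powerSums k w.2} := by
  have hexpand : ∀ t, mFourier l t * ((‖weylSum k S t‖ ^ (2 * s) : ℝ) : ℂ) =
      ∑ w ∈ (Fintype.piFinset fun _ : Fin s => S) ×ˢ (Fintype.piFinset fun _ : Fin s => S),
        mFourier (l + (powerSums k w.1 - powerSums k w.2)) t := by
    intro t
    rw [pow_mul', ← norm_pow, weylSum_pow, norm_sum_mFourier_sq, mul_sum]
    simp only [mFourier_add]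
  simp_rw [hexpand]
  rw [integral_finsetSum _ fun w _ => integrable_torusMeasure (ContinuousMap.continuous _)]
  simp_rw [integral_mFourier, ← add_sub_assoc, sub_eq_zero]
  rw [sum_boole]

lemma moment_eq_card :
    moment k s S =
      #{w ∈ (Fintype.piFinset fun _ : Fin s => S) ×ˢ (Fintype.piFinset fun _ : Fin s => S) |
        powerSums k w.1 = powerSums k w.2} := by
  have h := integral_mFourier_mul_norm_weylSum_pow k s S 0
  simp only [mFourier_zero, ContinuousMap.one_apply, one_mul, zero_add] at h
  rw [integral_complex_ofReal] at h
  exact_mod_cast h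

lemma norm_integral_mFourier_mul_norm_weylSum_pow_le (l : Fin k → ℤ) :
    ‖∫ t, mFourier l t * ((‖weylSum k S t‖ ^ (2 * s) : ℝ) : ℂ) ∂torusMeasure (Fin k)‖ ≤
      moment k s S := by
  refine (norm_integral_le_integral_norm _).trans_eq ?_
  refine integral_congr_ae (Eventually.of_forall fun t => ?_)
  simp [norm_mFourier_apply]

lemma card_filter_powerSums_sub_le (l : Fin k → ℤ) :
    (#{w ∈ (Fintype.piFinset fun _ : Fin s => S) ×ˢ (Fintype.piFinset fun _ : Fin s => S) |
        powerSums k w.1 - powerSums k w.2 = l} : ℝ) ≤ moment k s S := by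
  have h := norm_integral_mFourier_mul_norm_weylSum_pow_le k s S (-l)
  rw [integral_mFourier_mul_norm_weylSum_pow, Complex.norm_natCast] at h
  simpa only [sub_eq_iff_eq_add, neg_add_eq_iff_eq_add] using h

lemma integral_norm_sq_mul_norm_weylSum_pow {r : ℕ} (X : Finset (Fin r → ℤ)) :
    ((∫ t, ‖∑ x ∈ X, mFourier (powerSums k x) t‖ ^ 2 *
      ‖weylSum k S t‖ ^ (2 * s) ∂torusMeasure (Fin k) : ℝ) : ℂ) =
      ∑ w ∈ X ×ˢ X, ∫ t, mFourier (powerSums k w.1 - powerSums k w.2) t *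
          ((‖weylSum k S t‖ ^ (2 * s) : ℝ) : ℂ) ∂torusMeasure (Fin k) := by
  rw [← integral_complex_ofReal,
    ← integral_finsetSum _ fun w _ => integrable_torusMeasure (by fun_prop)]
  congr 1 with t
  rw [Complex.ofReal_mul, norm_sum_mFourier_sq, sum_mul]

-- Expand the square: by orthogonality only the pairs satisfying `P` contribute, each of them at
-- most the pure moment.
lemma integral_norm_sq_mul_norm_weylSum_pow_le {r : ℕ} (X : Finset (Fin r → ℤ))
    (P : (Fin r → ℤ) → (Fin r → ℤ) → Prop) [DecidableRel P]
    (hP : ∀ x ∈ X, ∀ y ∈ X, ∀ u ∈ Fintype.piFinset fun _ : Fin s => S,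
      ∀ w ∈ Fintype.piFinset fun _ : Fin s => S,
      powerSums k x + powerSums k u = powerSums k y + powerSums k w → P x y) :
    ∫ t, ‖∑ x ∈ X, mFourier (powerSums k x) t‖ ^ 2 *
      ‖weylSum k S t‖ ^ (2 * s) ∂torusMeasure (Fin k) ≤
      #{w ∈ X ×ˢ X | P w.1 w.2} * moment k s S := by
  refine (le_norm_self _).trans ?_
  rw [← Complex.norm_real, integral_norm_sq_mul_norm_weylSum_pow, ← nsmul_eq_mul, ← sum_const,
    sum_filter]
  refine (norm_sum_le _ _).trans (sum_le_sum fun w hw => ?_)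
  split_ifs with hPw
  · exact norm_integral_mFourier_mul_norm_weylSum_pow_le _ _ _ _
  · rw [mem_product] at hw
    rw [integral_mFourier_mul_norm_weylSum_pow, card_eq_zero.mpr, Nat.cast_zero, norm_zero]
    rw [filter_eq_empty_iff]
    intro u hu heq
    rw [mem_product] at hu
    refine hPw (hP _ hw.1 _ hw.2 _ hu.1 _ hu.2 ?_)
    rw [← heq]; abel

variable {S} in
lemma moment_mono {S' : Finset ℤ} (h : S ⊆ S') : moment k s S ≤ moment k s S' := by
  rw [moment_eq_card, moment_eq_card]
  have hpi : (Fintype.piFinset fun _ : Fin s => S) ⊆ Fintype.piFinset fun _ : Fin s => S' :=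
    Fintype.piFinset_subset _ _ fun _ => h
  exact_mod_cast card_le_card (filter_subset_filter _ (product_subset_product hpi hpi))

lemma moment_add_le (r : ℕ) :
    moment k (s + r) S ≤ (#S : ℝ) ^ (2 * r) * moment k s S := by
  rw [moment, moment, ← integral_const_mul]
  refine integral_mono (integrable_torusMeasure (by fun_prop))
    (integrable_torusMeasure (by fun_prop)) fun t => ?_
  simp only [mul_add, pow_add]
  rw [mul_comm]
  gcongr
  exact norm_weylSum_le k S t

lemma moment_le_card_pow : moment k s S ≤ (#S : ℝ) ^ (2 * s) := by
  refine (integral_mono (integrable_torusMeasure (by fun_prop))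
    (integrable_const ((#S : ℝ) ^ (2 * s))) fun t => ?_).trans_eq (by simp)
  dsimp only
  gcongr
  exact norm_weylSum_le k S t

end Torus

section Recursion

open MeasureTheory UnitAddTorus

section Affine

variable {k : ℕ} {ι κ : Type*} [Fintype ι] [Fintype κ]

lemma powerSums_sumElim (x : ι → ℤ) (y : κ → ℤ) :
    powerSums k (Sum.elim x y) = powerSums k x + powerSums k y := by
  simp [powerSums]

lemma sum_sub_pow_eq_of_powerSums_eq {x y : ι → ℤ} (h : powerSums k x = powerSums k y) (a : ℤ)
    {j : ℕ} (hj : j ≤ k) : ∑ i, (x i - a) ^ j = ∑ i, (y i - a) ^ j := by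
  simp_rw [sub_eq_add_neg, add_pow]
  rw [sum_comm, sum_comm (s := univ)]
  refine sum_congr rfl fun m hm => ?_
  rw [← sum_mul, ← sum_mul, ← sum_mul, ← sum_mul]
  congr 2
  cases m with
  | zero => simp
  | succ m =>
    have hmk : m < k := by rw [mem_range] at hm; omega
    simpa only [powerSums_apply] using congrFun h ⟨m, hmk⟩

lemma powerSums_eq_of_powerSums_affine_eq {p : ℤ} (hp : p ≠ 0) (a : ℤ) {u v : ι → ℤ}
    (h : powerSums k (fun i => a + p * u i) = powerSums k fun i => a + p * v i) :
    powerSums k u = powerSums k v := by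
  ext j
  have hj := sum_sub_pow_eq_of_powerSums_eq h a (j := j.1 + 1) j.2
  simp only [add_sub_cancel_left, mul_pow, ← mul_sum] at hj
  rw [powerSums_apply, powerSums_apply]
  exact mul_left_cancel₀ (pow_ne_zero _ hp) hj

lemma moment_image_affine_le (k s : ℕ) (S : Finset ℤ) (a : ℤ) {p : ℤ} (hp : p ≠ 0) :
    moment k s (S.image fun w => a + p * w) ≤ moment k s S := by
  let f : (Fin s → ℤ) → Fin s → ℤ := fun u i => a + p * u i
  rw [moment_eq_card, moment_eq_card, Nat.cast_le]
  refine (card_le_card fun w hw => ?_).trans (card_image_le (f := Prod.map f f))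
  obtain ⟨x, y⟩ := w
  simp only [mem_filter, mem_product, Fintype.mem_piFinset, mem_image] at hw
  obtain ⟨⟨hx, hy⟩, hxy⟩ := hw
  choose u hu hux using hx
  choose v hv hvy using hy
  obtain rfl : f u = x := funext hux
  obtain rfl : f v = y := funext hvy
  refine mem_image.mpr ⟨(u, v), ?_, rfl⟩
  simp only [mem_filter, mem_product, Fintype.mem_piFinset]
  exact ⟨⟨hu, hv⟩, powerSums_eq_of_powerSums_affine_eq hp a hxy⟩

end Affine

section ResidueClass

variable {p : ℕ}

/-- The integers of `[0, N)` in a residue class modulo `p`: the recursion for the moments splits the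
Weyl sum over `[0, N)` accordingly. -/
noncomputable def residueClass (p N : ℕ) (a : ZMod p) : Finset ℤ :=
  {x ∈ Ico (0 : ℤ) N | (x : ZMod p) = a}

/-- Tuples in `[0, N)` with pairwise distinct residues modulo `p`: those for which Linnik's count of
solutions of congruences applies. -/
noncomputable def distinctTuples (p k N : ℕ) : Finset (Fin k → ℤ) :=
  {x ∈ Fintype.piFinset fun _ : Fin k => Ico (0 : ℤ) N |
    Function.Injective fun i => (x i : ZMod p)}

lemma card_distinctTuples_le (k N : ℕ) : #(distinctTuples p k N) ≤ N ^ k :=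
  (card_filter_le _ _).trans (by simp)

lemma piFinset_residueClass_eq_filter (N : ℕ) {k : ℕ} {a : Fin k → ZMod p}
    (ha : Function.Injective a) :
    (Fintype.piFinset fun i => residueClass p N (a i)) =
      {x ∈ distinctTuples p k N | (fun i => (x i : ZMod p)) = a} := by
  ext x
  simp only [residueClass, distinctTuples, Fintype.mem_piFinset, mem_filter]
  refine ⟨fun h => ?_, fun ⟨⟨hx, _⟩, hxa⟩ i => ⟨hx i, congrFun hxa i⟩⟩
  have hxa : (fun i => (x i : ZMod p)) = a := funext fun i => (h i).2
  exact ⟨⟨fun i => (h i).1, hxa ▸ ha⟩, hxa⟩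

lemma card_filter_distinctTuples_modEq_le (hp : p.Prime) {k : ℕ} (hkp : k < p) {N : ℕ}
    (hN : N ≤ p ^ k) (a : ℤ) :
    #{w ∈ distinctTuples p k N ×ˢ distinctTuples p k N |
      ∀ j : Fin k, ∑ i, (w.1 i - a) ^ (j.1 + 1) ≡ ∑ i, (w.2 i - a) ^ (j.1 + 1)
        [ZMOD p ^ (j.1 + 1)]} ≤
      N ^ k * (k ^ k * p ^ (k * (k - 1) / 2)) := by
  refine (card_le_mul_card_image_of_maps_to (f := Prod.snd) (t := distinctTuples p k N)
    (fun w hw => (mem_product.mp (mem_filter.mp hw).1).2) (k ^ k * p ^ (k * (k - 1) / 2))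
    fun y hy => ?_).trans ?_
  · refine le_trans (card_le_card_of_injOn Prod.fst ?_ ?_)
      (card_filter_sum_pow_modEq_pow_le hp hkp hN a fun j => ∑ i, (y i - a) ^ (j.1 + 1))
    · intro w hw
      simp only [distinctTuples, coe_filter, mem_filter, mem_product, Set.mem_ofPred_eq] at hw ⊢
      obtain ⟨⟨⟨hw1, -⟩, hmod⟩, rfl⟩ := hw
      exact ⟨hw1.1, hw1.2, hmod⟩
    · intro w hw v hv h
      simp only [coe_filter, Set.mem_ofPred_eq, mem_filter] at hw hv
      exact Prod.ext h (hw.2.trans hv.2.symm)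
  · rw [mul_comm]
    exact Nat.mul_le_mul_right _ (card_distinctTuples_le k N)

variable [NeZero p]

lemma weylSum_Ico_eq_sum_residueClass (k N : ℕ) (t : UnitAddTorus (Fin k)) :
    weylSum k (Ico 0 (N : ℤ)) t = ∑ a : ZMod p, weylSum k (residueClass p N a) t :=
  (sum_fiberwise _ _ _).symm

variable (N : ℕ) (a : ZMod p)

variable {N a} in
lemma dvd_sub_val_of_mem_residueClass {x : ℤ} (hx : x ∈ residueClass p N a) :
    (p : ℤ) ∣ x - a.val := by
  rw [← ZMod.intCast_zmod_eq_zero_iff_dvd]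
  push_cast
  rw [(mem_filter.mp hx).2, ZMod.natCast_zmod_val, sub_self]

lemma residueClass_subset_image :
    residueClass p N a ⊆
      (Ico (0 : ℤ) ((N / p + 1 : ℕ) : ℤ)).image fun w => (a.val : ℤ) + p * w := by
  intro x hx
  have hp0 : 0 < (p : ℤ) := by exact_mod_cast NeZero.pos p
  obtain ⟨w, hw⟩ := dvd_sub_val_of_mem_residueClass hx
  rw [residueClass, mem_filter, mem_Ico] at hx
  have hap : (a.val : ℤ) < p := by exact_mod_cast a.val_lt
  have ha0 : (0 : ℤ) ≤ a.val := by positivity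
  refine mem_image.mpr ⟨w, mem_Ico.mpr ⟨?_, ?_⟩, by linarith [hw]⟩
  · by_contra! hw0
    nlinarith [hw, hap, hx.1.1]
  · have hwN : w ≤ (N : ℤ) / p := by
      rw [Int.le_ediv_iff_mul_le hp0]
      nlinarith [hx.1.2, ha0]
    push_cast
    linarith [hwN]

lemma moment_residueClass_le (k s : ℕ) :
    moment k s (residueClass p N a) ≤ moment k s (Ico 0 ((N / p + 1 : ℕ) : ℤ)) :=
  (moment_mono k s (residueClass_subset_image N a)).trans
    (moment_image_affine_le _ _ _ _ (by exact_mod_cast NeZero.ne p))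

lemma card_residueClass_le : #(residueClass p N a) ≤ N / p + 1 := by
  refine (card_le_card (residueClass_subset_image N a)).trans (card_image_le.trans ?_)
  simp

lemma sum_injective_prod_weylSum (k : ℕ) (t : UnitAddTorus (Fin k)) :
    ∑ a : Fin k → ZMod p with Function.Injective a, ∏ i, weylSum k (residueClass p N (a i)) t =
      ∑ x ∈ distinctTuples p k N, mFourier (powerSums k x) t := by
  classical
  rw [← sum_fiberwise_of_maps_to (s := distinctTuples p k N)
    (t := {a : Fin k → ZMod p | Function.Injective a}) (g := fun x i => (x i : ZMod p))
    (fun x hx => by simpa using (mem_filter.mp hx).2)]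
  refine sum_congr rfl fun a ha => ?_
  rw [← piFinset_residueClass_eq_filter N (mem_filter.mp ha).2]
  unfold weylSum
  rw [prod_univ_sum]
  exact sum_congr rfl fun x _ => (mFourier_sum _ _ _).symm

variable {N a} in
-- All the `u i - a` and `w i - a` are divisible by `p`.
lemma sum_sub_pow_modEq_of_powerSums_add_eq {k s : ℕ} {x y : Fin k → ℤ}
    {u w : Fin s → ℤ} (hu : ∀ i, u i ∈ residueClass p N a) (hw : ∀ i, w i ∈ residueClass p N a)
    (h : powerSums k x + powerSums k u = powerSums k y + powerSums k w) {j : ℕ} (hj : j ≤ k) :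
    ∑ i, (x i - (a.val : ℤ)) ^ j ≡ ∑ i, (y i - (a.val : ℤ)) ^ j [ZMOD p ^ j] := by
  have hsum := sum_sub_pow_eq_of_powerSums_eq (x := Sum.elim x u) (y := Sum.elim y w)
    (by rwa [powerSums_sumElim, powerSums_sumElim]) (a.val : ℤ) hj
  simp only [Fintype.sum_sum_type, Sum.elim_inl, Sum.elim_inr] at hsum
  have hdvd {v : Fin s → ℤ} (hv : ∀ i, v i ∈ residueClass p N a) :
      (p : ℤ) ^ j ∣ ∑ i, (v i - (a.val : ℤ)) ^ j :=
    dvd_sum fun i _ => pow_dvd_pow_of_dvd (dvd_sub_val_of_mem_residueClass (hv i)) j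
  have hsub : ∑ i, (y i - (a.val : ℤ)) ^ j - ∑ i, (x i - (a.val : ℤ)) ^ j =
      ∑ i, (u i - (a.val : ℤ)) ^ j - ∑ i, (w i - (a.val : ℤ)) ^ j := by linarith [hsum]
  rw [Int.modEq_iff_dvd, hsub]
  exact dvd_sub (hdvd hu) (hdvd hw)

lemma integral_norm_distinctTuples_sq_mul_le (hp : p.Prime) {k : ℕ} (s : ℕ) (hkp : k < p) {N : ℕ}
    (hN : N ≤ p ^ k) :
    ∫ t, ‖∑ x ∈ distinctTuples p k N, mFourier (powerSums k x) t‖ ^ 2 *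
      ‖weylSum k (residueClass p N a) t‖ ^ (2 * s) ∂torusMeasure (Fin k) ≤
      (N ^ k * (k ^ k * p ^ (k * (k - 1) / 2)) : ℕ) *
        moment k s (Ico 0 ((N / p + 1 : ℕ) : ℤ)) := by
  classical
  refine (integral_norm_sq_mul_norm_weylSum_pow_le k s (residueClass p N a)
    (distinctTuples p k N) (fun x y => ∀ j : Fin k,
      ∑ i, (x i - (a.val : ℤ)) ^ (j.1 + 1) ≡ ∑ i, (y i - (a.val : ℤ)) ^ (j.1 + 1)
        [ZMOD p ^ (j.1 + 1)]) fun x _ y _ u hu w hw h j => ?_).trans ?_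
  · rw [Fintype.mem_piFinset] at hu hw
    exact sum_sub_pow_modEq_of_powerSums_add_eq hu hw h j.2
  · refine mul_le_mul ?_ (moment_residueClass_le N a k s) (moment_nonneg _ _ _) (by positivity)
    exact_mod_cast card_filter_distinctTuples_modEq_le hp hkp hN a.val

end ResidueClass

section MomentRecursion

lemma pow_sum_le_card_pow_mul_sum_pow {ι : Type*} {s : Finset ι} {z : ι → ℝ}
    (hz : ∀ i ∈ s, 0 ≤ z i) {n : ℕ} (hn : n ≠ 0) :
    (∑ i ∈ s, z i) ^ n ≤ (#s : ℝ) ^ (n - 1) * ∑ i ∈ s, z i ^ n := by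
  obtain ⟨n, rfl⟩ := Nat.exists_eq_succ_of_ne_zero hn
  rcases s.eq_empty_or_nonempty with rfl | hs
  · simp
  have h := pow_sum_div_card_le_sum_pow hz n
  rwa [div_le_iff₀ (by have := hs.card_pos; positivity), mul_comm] at h

variable {p : ℕ} [NeZero p] {k s : ℕ} (N : ℕ)

-- Either the sum is dominated by the square function of the residue classes, or it is controlled
-- by the tuples with distinct residues.
lemma norm_weylSum_pow_le_add (hs : s ≠ 0) (t : UnitAddTorus (Fin k)) :
    ‖weylSum k (Ico 0 (N : ℤ)) t‖ ^ (2 * (s + k)) ≤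
      4 ^ k * (p : ℝ) ^ (2 * s - 1) * ∑ a : ZMod p,
        ‖∑ x ∈ distinctTuples p k N, mFourier (powerSums k x) t‖ ^ 2 *
          ‖weylSum k (residueClass p N a) t‖ ^ (2 * s) +
      (16 * k ^ 2) ^ (s + k) * (p : ℝ) ^ (s + k - 1) *
        ∑ a : ZMod p, ‖weylSum k (residueClass p N a) t‖ ^ (2 * (s + k)) := by
  classical
  set z : ZMod p → ℂ := fun a => weylSum k (residueClass p N a) t with hz
  set f := weylSum k (Ico 0 (N : ℤ)) t
  set E := ∑ x ∈ distinctTuples p k N, mFourier (powerSums k x) t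
  have hf : f = ∑ a, z a := weylSum_Ico_eq_sum_residueClass k N t
  have hcard : (#(univ : Finset (ZMod p)) : ℝ) = p := by rw [card_univ, ZMod.card]
  rcases norm_sum_le_or_pow_le_sum_injective (ι := Fin k) (z := z)
    (Real.sqrt_nonneg (∑ a, ‖z a‖ ^ 2)) (Real.sq_sqrt (by positivity)).ge with h | h
  · refine le_add_of_nonneg_of_le (by positivity) ?_
    calc ‖f‖ ^ (2 * (s + k)) = (‖f‖ ^ 2) ^ (s + k) := pow_mul _ _ _
      _ ≤ ((4 * k * √(∑ a, ‖z a‖ ^ 2)) ^ 2) ^ (s + k) := by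
          rw [hf]
          gcongr
          simpa using h
      _ = (16 * k ^ 2) ^ (s + k) * (∑ a, ‖z a‖ ^ 2) ^ (s + k) := by
          rw [mul_pow _ (√_), Real.sq_sqrt (by positivity), ← mul_pow]
          ring
      _ ≤ (16 * k ^ 2) ^ (s + k) *
            (p ^ (s + k - 1) * ∑ a, (‖z a‖ ^ 2) ^ (s + k)) := by
          gcongr
          rw [← hcard]
          exact pow_sum_le_card_pow_mul_sum_pow (fun a _ => by positivity) (by omega)
      _ = _ := by simp only [hz, ← pow_mul, mul_assoc]
  · refine le_add_of_le_of_nonneg ?_ (by positivity)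
    simp only [hz, sum_injective_prod_weylSum, ← weylSum_Ico_eq_sum_residueClass,
      Fintype.card_fin] at h
    calc ‖f‖ ^ (2 * (s + k)) = ‖f‖ ^ (2 * s) * (‖f‖ ^ k) ^ 2 := by ring
      _ ≤ (∑ a, ‖z a‖) ^ (2 * s) * (2 ^ k * ‖E‖) ^ 2 := by
          gcongr
          exact hf ▸ norm_sum_le _ _
      _ ≤ (p ^ (2 * s - 1) * ∑ a, ‖z a‖ ^ (2 * s)) * (2 ^ k * ‖E‖) ^ 2 := by
          gcongr
          rw [← hcard]
          exact pow_sum_le_card_pow_mul_sum_pow (fun a _ => by positivity) (by omega)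
      _ = _ := by
          rw [← mul_sum, mul_pow _ ‖E‖, ← pow_mul, mul_comm k 2, pow_mul]
          norm_num
          ring

lemma moment_Ico_le_add (hs : s ≠ 0) :
    moment k (s + k) (Ico 0 (N : ℤ)) ≤
      4 ^ k * (p : ℝ) ^ (2 * s - 1) * ∑ a : ZMod p,
        ∫ t, ‖∑ x ∈ distinctTuples p k N, mFourier (powerSums k x) t‖ ^ 2 *
          ‖weylSum k (residueClass p N a) t‖ ^ (2 * s) ∂torusMeasure (Fin k) +
      (16 * k ^ 2) ^ (s + k) * (p : ℝ) ^ (s + k - 1) *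
        ∑ a : ZMod p, moment k (s + k) (residueClass p N a) := by
  unfold moment
  rw [← integral_finsetSum _ fun a _ => integrable_torusMeasure (by fun_prop),
    ← integral_finsetSum _ fun a _ => integrable_torusMeasure (by fun_prop),
    ← integral_const_mul, ← integral_const_mul,
    ← integral_add (integrable_torusMeasure (by fun_prop))
      (integrable_torusMeasure (by fun_prop))]
  exact integral_mono (integrable_torusMeasure (by fun_prop))
    (integrable_torusMeasure (by fun_prop)) (norm_weylSum_pow_le_add N hs)

variable {N} in
theorem moment_add_le_mul_moment_div (hp : p.Prime) (hs : s ≠ 0) (hkp : k < p)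
    (hN : N ≤ p ^ k) :
    moment k (s + k) (Ico 0 (N : ℤ)) ≤
      (4 ^ k * p ^ (2 * s) * (N ^ k * (k ^ k * p ^ (k * (k - 1) / 2))) +
        (16 * k ^ 2) ^ (s + k) * p ^ (s + k) * (N / p + 1 : ℕ) ^ (2 * k)) *
      moment k s (Ico 0 ((N / p + 1 : ℕ) : ℤ)) := by
  set J := moment k s (Ico 0 ((N / p + 1 : ℕ) : ℤ)) with hJ
  have hJ0 : 0 ≤ J := moment_nonneg _ _ _
  have hpow {n : ℕ} (hn : n ≠ 0) : (p : ℝ) ^ n = (p : ℝ) ^ (n - 1) * p := by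
    rw [← pow_succ, Nat.sub_add_cancel (Nat.pos_of_ne_zero hn)]
  have hsum {f : ZMod p → ℝ} {B : ℝ} (hf : ∀ a, f a ≤ B) : ∑ a, f a ≤ p * B := by
    refine (sum_le_card_nsmul _ _ _ fun a _ => hf a).trans_eq ?_
    rw [nsmul_eq_mul, card_univ, ZMod.card]
  have hdistinct :=
    hsum fun a : ZMod p => integral_norm_distinctTuples_sq_mul_le a hp s hkp hN
  have hclass : ∑ a : ZMod p, moment k (s + k) (residueClass p N a) ≤
      p * ((N / p + 1 : ℕ) ^ (2 * k) * J) := by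
    refine hsum fun a => (moment_add_le k s _ k).trans ?_
    gcongr
    · exact moment_nonneg _ _ _
    · exact card_residueClass_le N a
    · exact moment_residueClass_le N a k s
  refine (moment_Ico_le_add (p := p) N hs).trans ?_
  rw [add_mul, hpow (n := 2 * s) (by omega), hpow (n := s + k) (by omega)]
  calc _ ≤ 4 ^ k * (p : ℝ) ^ (2 * s - 1) *
          (p * ((N ^ k * (k ^ k * p ^ (k * (k - 1) / 2)) : ℕ) * J)) +
        (16 * k ^ 2) ^ (s + k) * (p : ℝ) ^ (s + k - 1) * (p * ((N / p + 1 : ℕ) ^ (2 * k) * J)) := by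
        gcongr
    _ = _ := by push_cast; ring

end MomentRecursion

end Recursion

section MeanValue

variable {k s N p : ℕ}

lemma exists_prime_near_root (hk : 4 ≤ k) (hN : k ^ k ≤ N) :
    ∃ p : ℕ, p.Prime ∧ k < p ∧ N ≤ p ^ k ∧ p ≤ N ∧ (p : ℝ) ≤ 4 * (N : ℝ) ^ (1 / (k : ℝ)) := by
  have hk4 : (4 : ℝ) ≤ k := by exact_mod_cast hk
  have hkN : (k : ℝ) ≤ (N : ℝ) ^ (1 / (k : ℝ)) := by
    rw [one_div, Real.le_rpow_inv_iff_of_pos (by positivity) (by positivity) (by positivity),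
      Real.rpow_natCast]
    exact_mod_cast hN
  set y := (N : ℝ) ^ (1 / (k : ℝ)) with hy
  have hyk : y ^ k = N := by
    rw [hy, one_div, Real.rpow_inv_natCast_pow (by positivity) (by omega)]
  have hy1 : 1 ≤ y := by linarith
  obtain ⟨p, hp, hyp, hpy⟩ := Nat.exists_prime_lt_and_le_two_mul ⌈y⌉₊ (by positivity)
  have hylt : y < p := (Nat.le_ceil y).trans_lt (by exact_mod_cast hyp)
  have hp4 : (p : ℝ) ≤ 4 * y := by
    have hp2 : (p : ℝ) ≤ 2 * ⌈y⌉₊ := by exact_mod_cast hpy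
    linarith [Nat.ceil_lt_add_one (zero_le_one.trans hy1)]
  refine ⟨p, hp, by exact_mod_cast hkN.trans_lt hylt, ?_, ?_, hp4⟩
  · rw [← Nat.cast_le (α := ℝ), ← hyk, Nat.cast_pow]
    gcongr
  · rw [← Nat.cast_le (α := ℝ), ← hyk]
    calc (p : ℝ) ≤ y * y := hp4.trans (by gcongr; linarith)
      _ = y ^ 2 := by ring
      _ ≤ y ^ k := pow_le_pow_right₀ hy1 (by omega)

lemma natDiv_add_one_le (hp : p ≠ 0) (hpN : p ≤ N) :
    ((N / p + 1 : ℕ) : ℝ) ≤ 2 * (N / p) := by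
  have hdiv : (1 : ℝ) ≤ N / p := by
    rw [one_le_div (by positivity)]
    exact_mod_cast hpN
  push_cast
  linarith [Nat.cast_div_le (α := ℝ) (m := N) (n := p)]

lemma pow_mul_natDiv_add_one_pow_le (hs : k ^ 2 ≤ s) (hp : p ≠ 0) (hN : N ≤ p ^ k)
    (hpN : p ≤ N) :
    (p : ℝ) ^ (s + k) * ((N / p + 1 : ℕ) : ℝ) ^ (2 * k) ≤
      4 ^ k * (p ^ (2 * s + k * (k - 1) / 2) * N ^ k) := by
  have hp1 : (1 : ℝ) ≤ p := by exact_mod_cast Nat.one_le_iff_ne_zero.mpr hp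
  have hNs : (N : ℝ) ^ k ≤ p ^ s := by
    calc (N : ℝ) ^ k ≤ ((p : ℝ) ^ k) ^ k := by gcongr; exact_mod_cast hN
      _ = p ^ (k ^ 2) := by rw [← pow_mul, sq]
      _ ≤ p ^ s := pow_le_pow_right₀ hp1 hs
  calc (p : ℝ) ^ (s + k) * ((N / p + 1 : ℕ) : ℝ) ^ (2 * k)
      ≤ (p : ℝ) ^ (s + k) * (2 * (N / p)) ^ (2 * k) := by
        gcongr
        exact natDiv_add_one_le hp hpN
    _ ≤ (p : ℝ) ^ (s + 2 * k) * (2 * (N / p)) ^ (2 * k) := by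
        gcongr
        omega
    _ = 4 ^ k * (p ^ s * N ^ k * N ^ k) := by
        rw [mul_pow, div_pow, pow_mul (2 : ℝ), pow_add]
        field_simp
        norm_num
        ring
    _ ≤ 4 ^ k * (p ^ s * p ^ s * N ^ k) := by gcongr
    _ ≤ 4 ^ k * (p ^ (2 * s + k * (k - 1) / 2) * N ^ k) := by
        gcongr
        rw [← pow_add]
        exact pow_le_pow_right₀ hp1 (by omega)

lemma recursion_factor_le (hk : 1 ≤ k) (hs : k ^ 2 ≤ s) (hp : p ≠ 0) (hN : N ≤ p ^ k)
    (hpN : p ≤ N) :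
    (4 ^ k * p ^ (2 * s) * (N ^ k * (k ^ k * p ^ (k * (k - 1) / 2))) +
        (16 * k ^ 2) ^ (s + k) * p ^ (s + k) * ((N / p + 1 : ℕ) : ℝ) ^ (2 * k) : ℝ) ≤
      2 * (4 ^ k * (16 * k ^ 2) ^ (s + k)) * (p ^ (2 * s + k * (k - 1) / 2) * N ^ k) := by
  have hk1 : (1 : ℝ) ≤ k := by exact_mod_cast hk
  have hkk : (k : ℝ) ^ k ≤ (16 * k ^ 2) ^ (s + k) := by
    calc (k : ℝ) ^ k ≤ (16 * k ^ 2) ^ k := by gcongr; nlinarith [hk1]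
      _ ≤ _ := pow_le_pow_right₀ (by nlinarith [hk1]) (by omega)
  rw [mul_assoc 2, two_mul (_ * _)]
  refine add_le_add ?_ ?_
  · calc (4 ^ k * p ^ (2 * s) * (N ^ k * (k ^ k * p ^ (k * (k - 1) / 2))) : ℝ)
        = 4 ^ k * (k : ℝ) ^ k * (p ^ (2 * s + k * (k - 1) / 2) * N ^ k) := by
          rw [pow_add]; ring
      _ ≤ _ := by gcongr
  · calc ((16 * k ^ 2) ^ (s + k) * p ^ (s + k) * ((N / p + 1 : ℕ) : ℝ) ^ (2 * k) : ℝ)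
        = (16 * k ^ 2 : ℝ) ^ (s + k) *
          ((p : ℝ) ^ (s + k) * ((N / p + 1 : ℕ) : ℝ) ^ (2 * k)) := by ring
      _ ≤ (16 * k ^ 2 : ℝ) ^ (s + k) * (4 ^ k * (p ^ (2 * s + k * (k - 1) / 2) * N ^ k)) :=
          mul_le_mul_of_nonneg_left (pow_mul_natDiv_add_one_pow_le hs hp hN hpN) (by positivity)
      _ = _ := by ring

lemma recursion_constant_le (hk : 1 ≤ k) (hs : s + k ≤ 10 * k ^ 2) :
    2 * (4 ^ k * (16 * k ^ 2 : ℝ) ^ (s + k)) * 2 ^ (2 * s) * 4 ^ (k ^ 2) ≤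
      (4 * k : ℝ) ^ (50 * k ^ 2) := by
  have hk1 : (1 : ℝ) ≤ k := by exact_mod_cast hk
  have h16 : (16 * k ^ 2 : ℝ) ^ (s + k) ≤ (4 * k : ℝ) ^ (20 * k ^ 2) := by
    rw [show (16 * k ^ 2 : ℝ) = (4 * k) ^ 2 by ring, ← pow_mul]
    exact pow_le_pow_right₀ (by linarith) (by omega)
  have h2 : (2 : ℝ) * 4 ^ k * 2 ^ (2 * s) * 4 ^ (k ^ 2) ≤ (4 * k : ℝ) ^ (30 * k ^ 2) := by
    rw [show (4 : ℝ) = 2 ^ 2 by norm_num, ← pow_mul, ← pow_mul, ← pow_succ', ← pow_add,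
      ← pow_add]
    refine (pow_le_pow_right₀ one_le_two (?_ : _ ≤ 30 * k ^ 2)).trans
      (pow_le_pow_left₀ zero_le_two (by linarith) _)
    nlinarith [hk, hs]
  calc 2 * (4 ^ k * (16 * k ^ 2 : ℝ) ^ (s + k)) * 2 ^ (2 * s) * 4 ^ (k ^ 2)
      = (2 * 4 ^ k * 2 ^ (2 * s) * 4 ^ (k ^ 2)) * (16 * k ^ 2 : ℝ) ^ (s + k) := by ring
    _ ≤ (4 * k : ℝ) ^ (30 * k ^ 2) * (4 * k : ℝ) ^ (20 * k ^ 2) := by gcongr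
    _ = (4 * k : ℝ) ^ (50 * k ^ 2) := by rw [← pow_add]; congr 1; ring

lemma natDiv_add_one_rpow_le (hp : p ≠ 0) (hpN : p ≤ N) {e : ℝ} (he : 0 ≤ e)
    (hes : e ≤ 2 * s) :
    ((N / p + 1 : ℕ) : ℝ) ^ e ≤ 2 ^ (2 * s) * ((N : ℝ) ^ e / (p : ℝ) ^ e) := by
  calc ((N / p + 1 : ℕ) : ℝ) ^ e ≤ (2 * (N / p)) ^ e :=
        Real.rpow_le_rpow (by positivity) (natDiv_add_one_le hp hpN) he
    _ = 2 ^ e * ((N : ℝ) ^ e / (p : ℝ) ^ e) := by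
        rw [Real.mul_rpow zero_le_two (by positivity),
          Real.div_rpow (by positivity) (by positivity)]
    _ ≤ 2 ^ (2 * s) * ((N : ℝ) ^ e / (p : ℝ) ^ e) := by
        gcongr
        rw [← Real.rpow_natCast]
        exact Real.rpow_le_rpow_of_exponent_le one_le_two (by exact_mod_cast hes)

lemma pow_div_rpow_le_of_le_root (hk : 1 ≤ k) (hp : p ≠ 0)
    (hpN : (p : ℝ) ≤ 4 * (N : ℝ) ^ (1 / (k : ℝ))) {η : ℝ} (hη0 : 0 ≤ η) (hηk : η ≤ k ^ 2) :
    (p : ℝ) ^ (2 * s + k * (k - 1) / 2) / (p : ℝ) ^ (2 * s - k * (k + 1) / 2 + η : ℝ) ≤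
      4 ^ (k ^ 2) * (N : ℝ) ^ (k - η / k : ℝ) := by
  have hk0 : (k : ℝ) ≠ 0 := by positivity
  have hexp : ((2 * s + k * (k - 1) / 2 : ℕ) : ℝ) - (2 * s - k * (k + 1) / 2 + η) =
      k ^ 2 - η := by
    rw [Nat.cast_add, Nat.cast_div (Nat.even_mul_pred_self k).two_dvd (by norm_num)]
    push_cast [Nat.cast_sub hk]
    ring
  rw [← Real.rpow_natCast, ← Real.rpow_sub (by positivity), hexp]
  calc (p : ℝ) ^ ((k : ℝ) ^ 2 - η) ≤ (4 * (N : ℝ) ^ (1 / (k : ℝ))) ^ ((k : ℝ) ^ 2 - η) :=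
        Real.rpow_le_rpow (by positivity) hpN (by linarith)
    _ = 4 ^ ((k : ℝ) ^ 2 - η) * (N : ℝ) ^ (k - η / k : ℝ) := by
        rw [Real.mul_rpow (by norm_num) (by positivity), ← Real.rpow_mul (by positivity)]
        congr 2
        field_simp [hk0]
    _ ≤ _ := by
        gcongr
        rw [← Real.rpow_natCast 4 (k ^ 2)]
        refine Real.rpow_le_rpow_of_exponent_le (by norm_num) ?_
        push_cast
        linarith

lemma moment_Ico_le_pow (k s N : ℕ) : moment k s (Ico 0 (N : ℤ)) ≤ (N : ℝ) ^ (2 * s) := by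
  simpa using moment_le_card_pow k s (Ico 0 (N : ℤ))

lemma moment_Ico_le_of_le_pow_self (hk : 1 ≤ k) (hN : 1 ≤ N) (hNk : N ≤ k ^ k) {δ : ℝ}
    (hδ : 0 ≤ δ) :
    moment k s (Ico 0 (N : ℤ)) ≤
      (k : ℝ) ^ (k ^ 3) * (N : ℝ) ^ (2 * s - k * (k + 1) / 2 + δ : ℝ) := by
  have hk1 : (1 : ℝ) ≤ k := by exact_mod_cast hk
  have hN1 : (1 : ℝ) ≤ N := by exact_mod_cast hN
  set κ : ℝ := k * (k + 1) / 2 with hκ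
  have hNκ : (N : ℝ) ^ κ ≤ (k : ℝ) ^ (k ^ 3) := by
    calc (N : ℝ) ^ κ ≤ ((k : ℝ) ^ k) ^ κ := by
          gcongr
          exact_mod_cast hNk
      _ = (k : ℝ) ^ (k * κ) := by rw [← Real.rpow_natCast, ← Real.rpow_mul (by positivity)]
      _ ≤ (k : ℝ) ^ ((k ^ 3 : ℕ) : ℝ) := by
          refine Real.rpow_le_rpow_of_exponent_le hk1 ?_
          push_cast
          rw [hκ]
          nlinarith [mul_nonneg (mul_nonneg (Nat.cast_nonneg (α := ℝ) k)
            (Nat.cast_nonneg (α := ℝ) k)) (sub_nonneg.mpr hk1)]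
      _ = _ := Real.rpow_natCast _ _
  calc moment k s (Ico 0 (N : ℤ)) ≤ (N : ℝ) ^ (2 * s) := moment_Ico_le_pow k s N
    _ ≤ (N : ℝ) ^ κ * (N : ℝ) ^ (2 * s - κ + δ) := by
        rw [← Real.rpow_add (by positivity), ← Real.rpow_natCast]
        refine Real.rpow_le_rpow_of_exponent_le hN1 ?_
        push_cast
        linarith
    _ ≤ _ := by gcongr

-- One step replaces the excess `η` of the exponent over its conjectured value by `η (1 - 1 / k)`.
lemma moment_Ico_le_of_forall_moment_Ico_le (hk : 4 ≤ k) (hks : k ^ 2 ≤ s)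
    (hsk : s + k ≤ 10 * k ^ 2) {C η : ℝ} (hη0 : 0 ≤ η) (hη : η ≤ k * (k + 1) / 2)
    (hmoment : ∀ M : ℕ, 1 ≤ M →
      moment k s (Ico 0 (M : ℤ)) ≤ C * (M : ℝ) ^ (2 * s - k * (k + 1) / 2 + η : ℝ))
    (hN : k ^ k ≤ N) :
    moment k (s + k) (Ico 0 (N : ℤ)) ≤ C * (4 * k) ^ (50 * k ^ 2) *
      (N : ℝ) ^ (2 * (s + k : ℕ) - k * (k + 1) / 2 + (η - η / k) : ℝ) := by
  have hk1 : (1 : ℝ) ≤ k := by exact_mod_cast (by omega : 1 ≤ k)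
  have hN0 : (0 : ℝ) < N := by exact_mod_cast (pow_pos (by omega) k).trans_le hN
  have hs : (k : ℝ) ^ 2 ≤ s := by exact_mod_cast hks
  have hκ : (k : ℝ) * (k + 1) / 2 ≤ k ^ 2 := by nlinarith [hk1]
  have hC : 0 ≤ C := by
    simpa using (moment_nonneg _ _ _).trans (hmoment 1 le_rfl)
  obtain ⟨p, hp, hkp, hNp, hpN, hp4⟩ := exists_prime_near_root hk hN
  have : NeZero p := ⟨hp.ne_zero⟩
  set e : ℝ := 2 * s - k * (k + 1) / 2 + η with he
  set K : ℝ := 2 * (4 ^ k * (16 * k ^ 2) ^ (s + k))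
  calc moment k (s + k) (Ico 0 (N : ℤ))
      ≤ (K * (p ^ (2 * s + k * (k - 1) / 2) * N ^ k)) *
          (C * (2 ^ (2 * s) * ((N : ℝ) ^ e / (p : ℝ) ^ e))) := by
        refine (moment_add_le_mul_moment_div hp (by nlinarith [hk, hks]) hkp hNp).trans
          (mul_le_mul (recursion_factor_le (by omega) hks hp.ne_zero hNp hpN) ?_
            (moment_nonneg _ _ _) (by positivity))
        refine (hmoment _ (Nat.le_add_left _ _)).trans (mul_le_mul_of_nonneg_left ?_ hC)
        exact natDiv_add_one_rpow_le hp.ne_zero hpN (by linarith) (by linarith)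
    _ = C * (K * 2 ^ (2 * s)) *
          ((p : ℝ) ^ (2 * s + k * (k - 1) / 2) / (p : ℝ) ^ e) * ((N : ℝ) ^ k * (N : ℝ) ^ e) := by
        ring
    _ ≤ C * (K * 2 ^ (2 * s)) * (4 ^ (k ^ 2) * (N : ℝ) ^ (k - η / k : ℝ)) *
          ((N : ℝ) ^ k * (N : ℝ) ^ e) := by
        gcongr
        exact pow_div_rpow_le_of_le_root (by omega) hp.ne_zero hp4 hη0 (hη.trans hκ)
    _ = C * (K * 2 ^ (2 * s) * 4 ^ (k ^ 2)) *
          ((N : ℝ) ^ (k - η / k : ℝ) * ((N : ℝ) ^ k * (N : ℝ) ^ e)) := by ring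
    _ ≤ C * (4 * k) ^ (50 * k ^ 2) *
          ((N : ℝ) ^ (k - η / k : ℝ) * ((N : ℝ) ^ k * (N : ℝ) ^ e)) := by
        gcongr
        exact recursion_constant_le (by omega) hsk
    _ = _ := by
        rw [← Real.rpow_natCast (N : ℝ) k, ← Real.rpow_add hN0, ← Real.rpow_add hN0, he]
        congr 2
        push_cast
        ring

lemma moment_Ico_le_iterate (hk : 4 ≤ k) {r : ℕ} (hr : r ≤ 9 * k) (hN : 1 ≤ N) :
    moment k (k ^ 2 + k * r) (Ico 0 (N : ℤ)) ≤
      (k : ℝ) ^ (k ^ 3) * ((4 * k : ℝ) ^ (50 * k ^ 2)) ^ r *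
      (N : ℝ) ^ (2 * (k ^ 2 + k * r : ℕ) - k * (k + 1) / 2 +
        k * (k + 1) / 2 * (1 - 1 / k) ^ r : ℝ) := by
  have hk1 : (1 : ℝ) ≤ k := by exact_mod_cast (by omega : 1 ≤ k)
  have hθ0 : (0 : ℝ) ≤ 1 - 1 / k := by rw [sub_nonneg, div_le_one (by positivity)]; exact hk1
  have hθ1 : (1 : ℝ) - 1 / k ≤ 1 := sub_le_self 1 (by positivity)
  induction r generalizing N with
  | zero =>
    refine (moment_Ico_le_pow _ _ _).trans ?_
    simp only [mul_zero, add_zero, pow_zero, mul_one, sub_add_cancel]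
    rw [← Real.rpow_natCast]
    push_cast
    exact le_mul_of_one_le_left (by positivity) (one_le_pow₀ hk1)
  | succ r ih =>
    rw [mul_add, mul_one, ← add_assoc]
    rcases lt_or_ge N (k ^ k) with hsmall | hlarge
    · refine (moment_Ico_le_of_le_pow_self (δ := k * (k + 1) / 2 * (1 - 1 / k) ^ (r + 1))
        (by omega) hN hsmall.le (by positivity)).trans ?_
      gcongr
      exact le_mul_of_one_le_right (by positivity)
        (one_le_pow₀ (one_le_pow₀ (by linarith)))
    · set η : ℝ := k * (k + 1) / 2 * (1 - 1 / k) ^ r with hη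
      have hηsucc : (k : ℝ) * (k + 1) / 2 * (1 - 1 / k) ^ (r + 1) = η - η / k := by
        rw [hη, pow_succ]; ring
      rw [hηsucc, pow_succ (_ ^ (50 * k ^ 2)), ← mul_assoc ((k : ℝ) ^ (k ^ 3))]
      refine moment_Ico_le_of_forall_moment_Ico_le hk (Nat.le_add_right _ _) ?_ (by positivity)
        (mul_le_of_le_one_right (by positivity) (pow_le_one₀ hθ0 hθ1))
        (fun M hM => ih (by omega) hM) hlarge
      nlinarith [hr]

lemma one_sub_one_div_pow_le (k : ℕ) (hk : 1 ≤ k) :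
    (1 - 1 / (k : ℝ)) ^ (9 * k) ≤ 1 / 4096 := by
  have hk1 : (1 : ℝ) ≤ k := by exact_mod_cast hk
  have hθ0 : (0 : ℝ) ≤ 1 - 1 / k := by rw [sub_nonneg, div_le_one (by positivity)]; exact hk1
  calc (1 - 1 / (k : ℝ)) ^ (9 * k) = ((1 - 1 / (k : ℝ)) ^ k) ^ 9 := pow_mul' _ _ _
    _ ≤ Real.exp (-1) ^ 9 := by
        gcongr
        exact Real.one_sub_div_pow_le_exp_neg hk1
    _ ≤ 0.37 ^ 9 := by
        gcongr
        linarith [Real.exp_neg_one_lt_d9]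
    _ ≤ 1 / 4096 := by norm_num

/-- **Vinogradov's mean value theorem.** -/
theorem moment_Ico_le (hk : 4 ≤ k) (hN : 1 ≤ N) :
    moment k (10 * k ^ 2) (Ico 0 (N : ℤ)) ≤ (4 * k : ℝ) ^ (451 * k ^ 3) *
      (N : ℝ) ^ (20 * k ^ 2 - k * (k + 1) / 2 + k * (k + 1) / 2 / 4096 : ℝ) := by
  have hk1 : (1 : ℝ) ≤ k := by exact_mod_cast (by omega : 1 ≤ k)
  have h := moment_Ico_le_iterate hk (r := 9 * k) le_rfl hN
  rw [show k ^ 2 + k * (9 * k) = 10 * k ^ 2 by ring] at h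
  refine h.trans ?_
  gcongr ?_ * ?_
  · rw [← pow_mul, show 451 * k ^ 3 = k ^ 3 + 50 * k ^ 2 * (9 * k) by ring, pow_add]
    gcongr
    linarith
  · refine Real.rpow_le_rpow_of_exponent_le (by exact_mod_cast hN) ?_
    have hη := mul_le_mul_of_nonneg_left (one_sub_one_div_pow_le k (by omega))
      (show (0 : ℝ) ≤ k * (k + 1) / 2 by positivity)
    push_cast
    linarith

end MeanValue

section Bilinear

open ComplexConjugate
open scoped FourierTransform

/-- The additive character `exp (2πit)`, as a complex number. -/
noncomputable def expi (t : ℝ) : ℂ := 𝐞 t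

lemma expi_eq_exp (t : ℝ) : expi t = Complex.exp ((2 * π * t : ℝ) * Complex.I) :=
  Real.fourierChar_apply t

@[simp]
lemma norm_expi (t : ℝ) : ‖expi t‖ = 1 := Circle.norm_coe _

@[simp]
lemma expi_zero : expi 0 = 1 := by simp [expi]

lemma expi_add (a b : ℝ) : expi (a + b) = expi a * expi b := by
  simp [expi, AddChar.map_add_eq_mul]

lemma expi_neg (a : ℝ) : expi (-a) = conj (expi a) := by
  simp [expi, AddChar.map_neg_eq_inv, ← Circle.coe_inv_eq_conj]

lemma expi_sum {ι : Type*} (s : Finset ι) (f : ι → ℝ) :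
    expi (∑ i ∈ s, f i) = ∏ i ∈ s, expi (f i) := by
  classical
  induction s using Finset.induction_on with
  | empty => simp
  | insert a s ha ih => rw [sum_insert ha, prod_insert ha, expi_add, ih]

/-- The bilinear form with diagonal matrix `α`. -/
noncomputable def diagForm {k : ℕ} (α : Fin k → ℝ) (l m : Fin k → ℤ) : ℝ :=
  ∑ j, α j * (l j * m j)

variable {k : ℕ} (α : Fin k → ℝ)

lemma diagForm_comm (l m : Fin k → ℤ) : diagForm α l m = diagForm α m l := by
  simp only [diagForm, mul_comm (l _ : ℝ)]

lemma diagForm_sum_right (l : Fin k → ℤ) {ι : Type*} (s : Finset ι) (m : ι → Fin k → ℤ) :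
    diagForm α l (∑ i ∈ s, m i) = ∑ i ∈ s, diagForm α l (m i) := by
  unfold diagForm
  rw [sum_comm]
  refine sum_congr rfl fun j _ => ?_
  simp [mul_sum]

lemma diagForm_sub_left (l l' m : Fin k → ℤ) :
    diagForm α (l - l') m = diagForm α l m + -diagForm α l' m := by
  unfold diagForm
  rw [← sum_neg_distrib, ← sum_add_distrib]
  exact sum_congr rfl fun j _ => by simp; ring

lemma sum_expi_diagForm_pow (l : Fin k → ℤ) (S : Finset ℤ) (c : ℤ → ℂ) (s : ℕ) :
    (∑ y ∈ S, c y * expi (diagForm α l (momentCurve k y))) ^ s =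
      ∑ u ∈ Fintype.piFinset fun _ : Fin s => S,
        (∏ i, c (u i)) * expi (diagForm α l (powerSums k u)) := by
  rw [sum_pow']
  refine sum_congr rfl fun u _ => ?_
  rw [prod_mul_distrib, powerSums, diagForm_sum_right, expi_sum]

lemma norm_sum_expi_diagForm_pow (l : Fin k → ℤ) (S : Finset ℤ) (c : ℤ → ℂ) (s : ℕ) :
    ((‖∑ x ∈ S, c x * expi (diagForm α l (momentCurve k x))‖ ^ (2 * s) : ℝ) : ℂ) =
      ∑ w ∈ (Fintype.piFinset fun _ : Fin s => S) ×ˢ Fintype.piFinset fun _ : Fin s => S,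
        (∏ i, c (w.1 i)) * conj (∏ i, c (w.2 i)) *
          expi (diagForm α (powerSums k w.1 - powerSums k w.2) l) := by
  rw [pow_mul', ← norm_pow, Complex.ofReal_pow, ← Complex.mul_conj', sum_expi_diagForm_pow,
    map_sum, sum_mul_sum, ← sum_product']
  refine sum_congr rfl fun w _ => ?_
  rw [map_mul, ← expi_neg, diagForm_sub_left, expi_add, diagForm_comm α l, diagForm_comm α l]
  ring

/-- The sum of the absolute values of the geometric sums attached to the multiples of `α`. -/
noncomputable def geomTotal (α : ℝ) (M : ℕ) : ℝ :=
  ∑ m ∈ Icc (-(M : ℤ)) M, ‖∑ l ∈ Icc (0 : ℤ) M, expi (α * (m * l))‖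

lemma prod_geomTotal (M : Fin k → ℕ) :
    ∏ j, geomTotal (α j) (M j) =
      ∑ m ∈ Fintype.piFinset fun j => Icc (-(M j : ℤ)) (M j),
        ‖∑ l ∈ Fintype.piFinset fun j => Icc (0 : ℤ) (M j), expi (diagForm α m l)‖ := by
  unfold geomTotal
  rw [prod_univ_sum]
  refine sum_congr rfl fun m _ => ?_
  rw [← norm_prod, prod_univ_sum]
  exact congrArg _ (sum_congr rfl fun l _ => (expi_sum _ _).symm)

section Fibers

variable {s : ℕ} {S : Finset ℤ}

lemma sum_sq_card_filter_powerSums_eq {L : Finset (Fin k → ℤ)}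
    (hL : ∀ u ∈ Fintype.piFinset fun _ : Fin s => S, powerSums k u ∈ L) :
    ∑ l ∈ L, (#{u ∈ Fintype.piFinset fun _ : Fin s => S | powerSums k u = l} : ℝ) ^ 2 =
      moment k s S := by
  rw [moment_eq_card, card_eq_sum_card_fiberwise (t := L) (f := fun w => powerSums k w.1)
    fun w hw => hL _ (mem_product.mp (mem_filter.mp hw).1).1, Nat.cast_sum]
  refine sum_congr rfl fun l _ => ?_
  rw [sq, ← Nat.cast_mul, ← card_product]
  congr 2
  ext w
  simp only [mem_product, mem_filter]
  constructor
  · rintro ⟨⟨h1, hl1⟩, h2, hl2⟩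
    exact ⟨⟨⟨h1, h2⟩, hl1.trans hl2.symm⟩, hl1⟩
  · rintro ⟨⟨⟨h1, h2⟩, h12⟩, hl1⟩
    exact ⟨⟨h1, hl1⟩, h2, h12 ▸ hl1⟩

lemma sq_sum_powerSums_le {L : Finset (Fin k → ℤ)}
    (hL : ∀ u ∈ Fintype.piFinset fun _ : Fin s => S, powerSums k u ∈ L)
    (f : (Fin k → ℤ) → ℝ) :
    (∑ u ∈ Fintype.piFinset fun _ : Fin s => S, f (powerSums k u)) ^ 2 ≤
      moment k s S * ∑ l ∈ L, f l ^ 2 := by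
  have hfiber : ∑ u ∈ Fintype.piFinset fun _ : Fin s => S, f (powerSums k u) =
      ∑ l ∈ L, (#{u ∈ Fintype.piFinset fun _ : Fin s => S | powerSums k u = l} : ℝ) * f l := by
    rw [← sum_fiberwise_of_maps_to hL]
    refine sum_congr rfl fun l _ => ?_
    rw [sum_congr rfl fun w hw => by rw [(mem_filter.mp hw).2], sum_const, nsmul_eq_mul]
  rw [hfiber, ← sum_sq_card_filter_powerSums_eq hL]
  exact sum_mul_sq_le_sq_mul_sq _ _ _

lemma sum_powerSums_sub_le {B : Finset (Fin k → ℤ)}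
    (hB : ∀ u ∈ Fintype.piFinset fun _ : Fin s => S, ∀ v ∈ Fintype.piFinset fun _ : Fin s => S,
      powerSums k u - powerSums k v ∈ B)
    {f : (Fin k → ℤ) → ℝ} (hf : ∀ m, 0 ≤ f m) :
    ∑ w ∈ (Fintype.piFinset fun _ : Fin s => S) ×ˢ (Fintype.piFinset fun _ : Fin s => S),
      f (powerSums k w.1 - powerSums k w.2) ≤ moment k s S * ∑ m ∈ B, f m := by
  rw [← sum_fiberwise_of_maps_to (t := B) (g := fun w => powerSums k w.1 - powerSums k w.2)
    fun w hw => hB _ (mem_product.mp hw).1 _ (mem_product.mp hw).2, mul_sum]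
  refine sum_le_sum fun m _ => ?_
  rw [sum_congr rfl fun w hw => by rw [(mem_filter.mp hw).2], sum_const, nsmul_eq_mul]
  exact mul_le_mul_of_nonneg_right (card_filter_powerSums_sub_le _ _ _ _) (hf _)

end Fibers

variable {s : ℕ} {S : Finset ℤ} {M : Fin k → ℕ}

lemma sum_norm_pow_le_moment_mul_prod_geomTotal
    (hM : ∀ u ∈ Fintype.piFinset fun _ : Fin s => S, ∀ j, powerSums k u j ∈ Icc (0 : ℤ) (M j))
    {c : ℤ → ℂ} (hc : ∀ x, ‖c x‖ ≤ 1) :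
    ∑ l ∈ Fintype.piFinset fun j => Icc (0 : ℤ) (M j),
      ‖∑ x ∈ S, c x * expi (diagForm α l (momentCurve k x))‖ ^ (2 * s) ≤
    moment k s S * ∏ j, geomTotal (α j) (M j) := by
  set L := Fintype.piFinset fun j => Icc (0 : ℤ) (M j)
  set T := Fintype.piFinset fun _ : Fin s => S
  have hprod (u : Fin s → ℤ) : ‖∏ i, c (u i)‖ ≤ 1 := by
    rw [norm_prod]
    exact prod_le_one (fun _ _ => norm_nonneg _) fun i _ => hc _
  have hexpand : ((∑ l ∈ L, ‖∑ x ∈ S, c x * expi (diagForm α l (momentCurve k x))‖ ^ (2 * s) :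
      ℝ) : ℂ) = ∑ w ∈ T ×ˢ T, (∏ i, c (w.1 i)) * conj (∏ i, c (w.2 i)) *
        ∑ l ∈ L, expi (diagForm α (powerSums k w.1 - powerSums k w.2) l) := by
    rw [Complex.ofReal_sum]
    simp_rw [norm_sum_expi_diagForm_pow, mul_sum]
    exact sum_comm
  refine (le_norm_self _).trans ?_
  rw [← Complex.norm_real, hexpand, prod_geomTotal]
  refine (norm_sum_le _ _).trans (le_trans (sum_le_sum fun w _ => ?_)
    (sum_powerSums_sub_le (s := s) (f := fun m => ‖∑ l ∈ L, expi (diagForm α m l)‖)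
      (fun u hu v hv => ?_) fun m => norm_nonneg _))
  · rw [norm_mul, norm_mul, RCLike.norm_conj]
    exact mul_le_of_le_one_left (norm_nonneg _)
      (mul_le_one₀ (hprod _) (norm_nonneg _) (hprod _))
  · rw [Fintype.mem_piFinset]
    intro j
    have hu := mem_Icc.mp (hM u hu j)
    have hv := mem_Icc.mp (hM v hv j)
    rw [mem_Icc, Pi.sub_apply]
    constructor <;> linarith [hu.1, hu.2, hv.1, hv.2]

lemma exists_phase_sum_norm_pow_le (S : Finset ℤ) (s : ℕ) :
    ∃ c : ℤ → ℂ, (∀ x, ‖c x‖ ≤ 1) ∧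
      ∑ x ∈ S, ‖∑ y ∈ S, expi (diagForm α (momentCurve k x) (momentCurve k y))‖ ^ s ≤
        ∑ u ∈ Fintype.piFinset fun _ : Fin s => S,
          ‖∑ x ∈ S, c x * expi (diagForm α (powerSums k u) (momentCurve k x))‖ := by
  set g : ℤ → ℂ := fun x => ∑ y ∈ S, expi (diagForm α (momentCurve k x) (momentCurve k y))
  choose c hc hcg using fun x => Complex.exists_norm_eq_mul_self (g x ^ s)
  refine ⟨c, fun x => (hc x).le, ?_⟩
  have hswap : ((∑ x ∈ S, ‖g x‖ ^ s : ℝ) : ℂ) = ∑ u ∈ Fintype.piFinset fun _ : Fin s => S,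
      ∑ x ∈ S, c x * expi (diagForm α (powerSums k u) (momentCurve k x)) := by
    rw [Complex.ofReal_sum, sum_comm]
    refine sum_congr rfl fun x _ => ?_
    have hpow := sum_expi_diagForm_pow α (momentCurve k x) S (fun _ => 1) s
    simp only [one_mul, prod_const_one] at hpow
    rw [← norm_pow, hcg, hpow, mul_sum]
    exact sum_congr rfl fun u _ => by rw [diagForm_comm]
  refine (le_norm_self _).trans ?_
  rw [← Complex.norm_real, hswap]
  exact norm_sum_le _ _

-- Hölder's inequality in each variable, followed by Cauchy–Schwarz over the values of the power
-- sums.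
theorem norm_bilinear_pow_le
    (hM : ∀ u ∈ Fintype.piFinset fun _ : Fin s => S, ∀ j, powerSums k u j ∈ Icc (0 : ℤ) (M j))
    (hs : s ≠ 0) :
    ‖∑ x ∈ S, ∑ y ∈ S, expi (diagForm α (momentCurve k x) (momentCurve k y))‖ ^ (2 * s ^ 2) ≤
      (#S : ℝ) ^ (4 * (s * (s - 1))) * moment k s S ^ 2 * ∏ j, geomTotal (α j) (M j) := by
  set T := Fintype.piFinset fun _ : Fin s => S with hT
  have hTcard : (#T : ℝ) = (#S : ℝ) ^ s := by simp [hT]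
  set g : ℤ → ℂ := fun x => ∑ y ∈ S, expi (diagForm α (momentCurve k x) (momentCurve k y))
  obtain ⟨c, hc, hgc⟩ := exists_phase_sum_norm_pow_le α S s
  set H : (Fin k → ℤ) → ℂ := fun l => ∑ x ∈ S, c x * expi (diagForm α l (momentCurve k x))
  have hcauchy : (∑ u ∈ T, ‖H (powerSums k u)‖ ^ s) ^ 2 ≤
      moment k s S * (moment k s S * ∏ j, geomTotal (α j) (M j)) := by
    refine (sq_sum_powerSums_le (fun u hu => Fintype.mem_piFinset.mpr (hM u hu))
      fun l => ‖H l‖ ^ s).trans (mul_le_mul_of_nonneg_left ?_ (moment_nonneg _ _ _))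
    simpa only [← pow_mul, mul_comm s 2] using
      sum_norm_pow_le_moment_mul_prod_geomTotal α hM hc
  calc ‖∑ x ∈ S, g x‖ ^ (2 * s ^ 2) = ((‖∑ x ∈ S, g x‖ ^ s) ^ s) ^ 2 := by
        rw [← pow_mul, ← pow_mul]; congr 1; ring
    _ ≤ (((#S : ℝ) ^ (s - 1) * ∑ x ∈ S, ‖g x‖ ^ s) ^ s) ^ 2 := by
        gcongr
        exact (pow_le_pow_left₀ (norm_nonneg _) (norm_sum_le _ _) s).trans
          (pow_sum_le_card_pow_mul_sum_pow (fun _ _ => norm_nonneg _) hs)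
    _ ≤ (((#S : ℝ) ^ (s - 1) * ∑ u ∈ T, ‖H (powerSums k u)‖) ^ s) ^ 2 := by gcongr
    _ ≤ (((#S : ℝ) ^ (s - 1)) ^ s *
          ((#T : ℝ) ^ (s - 1) * ∑ u ∈ T, ‖H (powerSums k u)‖ ^ s)) ^ 2 := by
        rw [mul_pow _ (∑ u ∈ T, _) s]
        gcongr
        exact pow_sum_le_card_pow_mul_sum_pow (fun _ _ => norm_nonneg _) hs
    _ = (#S : ℝ) ^ (4 * (s * (s - 1))) * (∑ u ∈ T, ‖H (powerSums k u)‖ ^ s) ^ 2 := by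
        rw [hTcard]
        ring
    _ ≤ (#S : ℝ) ^ (4 * (s * (s - 1))) *
          (moment k s S * (moment k s S * ∏ j, geomTotal (α j) (M j))) := by gcongr
    _ = _ := by ring

lemma powerSums_mem_Icc {k s q : ℕ} {u : Fin s → ℤ}
    (hu : u ∈ Fintype.piFinset fun _ : Fin s => Ico (0 : ℤ) q) (j : Fin k) :
    powerSums k u j ∈ Icc (0 : ℤ) ((s * q ^ (j.1 + 1) : ℕ) : ℤ) := by
  simp only [Fintype.mem_piFinset, mem_Ico] at hu
  rw [powerSums_apply, mem_Icc]
  refine ⟨sum_nonneg fun i _ => pow_nonneg (hu i).1 _, ?_⟩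
  refine (sum_le_card_nsmul _ _ ((q : ℤ) ^ (j.1 + 1)) fun i _ =>
    pow_le_pow_left₀ (hu i).1 (hu i).2.le _).trans_eq ?_
  simp

end Bilinear

section GeometricSums

open ComplexConjugate

lemma sum_Ico_zero_natCast {E : Type*} [AddCommMonoid E] (q : ℕ) (f : ℤ → E) :
    ∑ x ∈ Ico (0 : ℤ) q, f x = ∑ x ∈ range q, f x := by
  refine sum_nbij' Int.toNat (fun x : ℕ => (x : ℤ)) ?_ ?_ ?_ ?_ ?_ <;> intro x hx <;>
    simp only [mem_Ico, mem_range, Int.toNat_natCast] at hx ⊢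
  all_goals first | omega | rw [Int.toNat_of_nonneg hx.1]

lemma card_Icc_neg_natCast (M : ℕ) : #(Icc (-(M : ℤ)) M) = 2 * M + 1 := by
  rw [Int.card_Icc]
  omega

lemma card_Icc_ceil_floor_le {a b : ℝ} (hab : a ≤ b) : (#(Icc ⌈a⌉ ⌊b⌋) : ℝ) ≤ b - a + 1 := by
  rw [Int.card_Icc, ← Int.cast_natCast, Int.toNat_eq_max, Int.cast_max]
  push_cast
  exact max_le (by linarith [Int.floor_le b, Int.le_ceil a]) (by linarith)

lemma expi_mul_natCast (β : ℝ) (n : ℕ) : expi (β * n) = expi β ^ n := by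
  rw [expi, expi, mul_comm, ← nsmul_eq_mul, AddChar.map_nsmul_eq_pow, Circle.coe_pow]

lemma norm_expi_sub_one (t : ℝ) : ‖expi t - 1‖ = 2 * |sin (π * t)| := by
  rw [expi_eq_exp, mul_comm, Complex.norm_exp_I_mul_ofReal_sub_one, Real.norm_eq_abs, abs_mul,
    abs_two, mul_assoc, mul_div_cancel_left₀ _ two_ne_zero]

lemma expi_sub_intCast (t : ℝ) (n : ℤ) : expi (t - n) = expi t := by
  have hn : expi (-n : ℝ) = 1 := by
    rw [expi_eq_exp, Complex.exp_eq_one_iff]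
    exact ⟨-n, by push_cast; ring⟩
  rw [sub_eq_add_neg, expi_add, hn, mul_one]

lemma four_mul_abs_sub_round_le_norm_expi_sub_one (β : ℝ) :
    4 * |β - round β| ≤ ‖expi β - 1‖ := by
  rw [← expi_sub_intCast β (round β), norm_expi_sub_one]
  set t := β - round β
  have ht : |t| ≤ 1 / 2 := abs_sub_round β
  have hsin := Real.mul_abs_le_abs_sin (x := π * t) (by
    rw [abs_mul, abs_of_pos Real.pi_pos]; nlinarith [Real.pi_pos])
  rw [abs_mul, abs_of_pos Real.pi_pos, ← mul_assoc, div_mul_cancel₀ _ Real.pi_ne_zero] at hsin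
  linarith

lemma norm_sum_range_expi_mul_le {β δ : ℝ} (hδ : 0 < δ) (h : δ ≤ |β - round β|) (n : ℕ) :
    ‖∑ l ∈ range n, expi (β * l)‖ ≤ 1 / (2 * δ) := by
  have hdist := four_mul_abs_sub_round_le_norm_expi_sub_one β
  have hpos : 0 < ‖expi β - 1‖ := by linarith
  have hne : expi β ≠ 1 := fun h => by simp [h] at hpos
  have htwo : ‖expi β ^ n - 1‖ ≤ 2 := by
    refine (norm_sub_le _ _).trans_eq ?_
    rw [norm_pow, norm_expi, one_pow, norm_one, one_add_one_eq_two]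
  simp_rw [expi_mul_natCast]
  rw [geom_sum_eq hne, norm_div, div_le_div_iff₀ hpos (by positivity)]
  nlinarith

/- Group the `m` according to the nearest integer `n` to `α m`: there are at most `2αM + 2` such
`n`, and each of them captures an interval of length `2δ / α`. -/
lemma card_filter_abs_sub_round_lt_le {α δ : ℝ} (hα : 0 < α) (hδ : 0 < δ) (M : ℕ) :
    (#{m ∈ Icc (-(M : ℤ)) M | |α * (m : ℤ) - round (α * (m : ℤ))| < δ} : ℝ) ≤
      (2 * α * M + 2) * (2 * δ / α + 1) := by
  set B := Icc ⌈-(α * M + 1 / 2)⌉ ⌊α * M + 1 / 2⌋ with hB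
  set A := {m ∈ Icc (-(M : ℤ)) M | |α * (m : ℤ) - round (α * (m : ℤ))| < δ} with hA
  have hmaps : ∀ m ∈ A, round (α * m) ∈ B := by
    intro m hm
    simp only [hA, mem_filter, mem_Icc] at hm
    have hround := abs_le.mp (abs_sub_round (α * m))
    have hlow : (-(M : ℝ)) ≤ m := by exact_mod_cast hm.1.1
    have hup : (m : ℝ) ≤ M := by exact_mod_cast hm.1.2
    rw [hB, mem_Icc, Int.ceil_le, Int.le_floor]
    constructor <;> nlinarith
  have hfiber : ∀ n ∈ B, (#{m ∈ A | round (α * ((m : ℤ) : ℝ)) = n} : ℝ) ≤ 2 * δ / α + 1 := by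
    intro n _
    have hsub : {m ∈ A | round (α * ((m : ℤ) : ℝ)) = n} ⊆ Icc ⌈(n - δ) / α⌉ ⌊(n + δ) / α⌋ := by
      intro m hm
      simp only [hA, mem_filter] at hm
      have hnear := abs_lt.mp hm.1.2
      rw [hm.2] at hnear
      rw [mem_Icc, Int.ceil_le, Int.le_floor, div_le_iff₀ hα, le_div_iff₀ hα]
      constructor <;> linarith
    calc (#{m ∈ A | round (α * ((m : ℤ) : ℝ)) = n} : ℝ)
        ≤ #(Icc ⌈(n - δ) / α⌉ ⌊(n + δ) / α⌋) := by exact_mod_cast card_le_card hsub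
      _ ≤ (n + δ) / α - (n - δ) / α + 1 := card_Icc_ceil_floor_le (by gcongr; linarith)
      _ = 2 * δ / α + 1 := by ring
  rw [card_eq_sum_card_fiberwise hmaps, Nat.cast_sum]
  refine (sum_le_card_nsmul _ _ _ hfiber).trans ?_
  rw [nsmul_eq_mul]
  refine mul_le_mul_of_nonneg_right ?_ (by positivity)
  have hαM : 0 ≤ α * M := by positivity
  refine (card_Icc_ceil_floor_le (by linarith)).trans_eq (by ring)

lemma norm_sum_expi_le_card {ι : Type*} (s : Finset ι) (f : ι → ℝ) :
    ‖∑ i ∈ s, expi (f i)‖ ≤ #s :=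
  (norm_sum_le _ _).trans (by simp)

lemma geomTotal_neg (α : ℝ) (M : ℕ) : geomTotal (-α) M = geomTotal α M := by
  refine sum_congr rfl fun m _ => ?_
  rw [← RCLike.norm_conj (∑ l ∈ Icc (0 : ℤ) M, expi (α * (m * l))), map_sum]
  simp only [← expi_neg, neg_mul]

lemma geomTotal_nonneg (α : ℝ) (M : ℕ) : 0 ≤ geomTotal α M :=
  sum_nonneg fun _ _ => norm_nonneg _

lemma geomTotal_le_mul_sq (α : ℝ) {M : ℕ} (hM : 1 ≤ M) : geomTotal α M ≤ 6 * (M : ℝ) ^ 2 := by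
  have hM' : (1 : ℝ) ≤ M := by exact_mod_cast hM
  have hterm : ∀ m ∈ Icc (-(M : ℤ)) M, ‖∑ l ∈ Icc (0 : ℤ) M, expi (α * (m * l))‖ ≤ M + 1 :=
    fun m _ => (norm_sum_expi_le_card _ _).trans_eq (by simp)
  refine (sum_le_card_nsmul _ _ _ hterm).trans ?_
  rw [nsmul_eq_mul, card_Icc_neg_natCast]
  push_cast
  nlinarith

lemma norm_sum_Icc_expi_mul_le_ite {δ : ℝ} (hδ : 0 < δ) (β : ℝ) (M : ℕ) :
    ‖∑ l ∈ Icc (0 : ℤ) M, expi (β * l)‖ ≤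
      (if |β - round β| < δ then (M : ℝ) + 1 else 0) + 1 / (2 * δ) := by
  have hIcc : Icc (0 : ℤ) M = Ico (0 : ℤ) ((M + 1 : ℕ) : ℤ) := by
    ext x
    simp only [mem_Icc, mem_Ico]
    omega
  rw [hIcc, sum_Ico_zero_natCast]
  simp only [Int.cast_natCast]
  split_ifs with h
  · refine (norm_sum_expi_le_card _ _).trans ?_
    rw [card_range, Nat.cast_add_one]
    exact le_add_of_nonneg_right (by positivity)
  · rw [zero_add]
    exact norm_sum_range_expi_mul_le hδ (not_lt.mp h) _

/- The threshold `δ = √α` balances the multiples of `α` near an integer against the rest. -/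
lemma geomTotal_le_of_pos {α : ℝ} (hα : 0 < α) (hα1 : α ≤ 1) {M : ℕ} (hM : 1 ≤ M) :
    geomTotal α M ≤ 20 * (M : ℝ) ^ 2 * (√α + 1 / (M * √α)) := by
  have hM' : (1 : ℝ) ≤ M := by exact_mod_cast hM
  set d := √α
  have hd : 0 < d := Real.sqrt_pos.mpr hα
  have hdα : d ^ 2 = α := Real.sq_sqrt hα.le
  have hd1 : d ≤ 1 := Real.sqrt_le_one.mpr hα1
  have hwidth : 2 * d / α + 1 ≤ 3 / d := by
    rw [← hdα, div_add_one (by positivity), div_le_div_iff₀ (by positivity) hd]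
    nlinarith [sq_nonneg d]
  have hterm : ∀ m ∈ Icc (-(M : ℤ)) M, ‖∑ l ∈ Icc (0 : ℤ) M, expi (α * (m * l))‖ ≤
      (if |α * m - round (α * m)| < d then (M : ℝ) + 1 else 0) + 1 / (2 * d) := fun m _ => by
    simpa only [mul_assoc] using norm_sum_Icc_expi_mul_le_ite hd (α * m) M
  have hcount := card_filter_abs_sub_round_lt_le hα hd M
  refine (sum_le_sum hterm).trans ?_
  rw [sum_add_distrib, ← sum_filter, sum_const, sum_const, nsmul_eq_mul, nsmul_eq_mul,
    card_Icc_neg_natCast]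
  push_cast
  calc _ ≤ (2 * α * M + 2) * (3 / d) * ((M : ℝ) + 1) + (2 * M + 1) * (1 / (2 * d)) := by
        gcongr
        exact hcount.trans (by gcongr)
    _ ≤ (2 * α * M + 2) * (3 / d) * (2 * M) + (3 * M) * (1 / (2 * d)) := by gcongr <;> linarith
    _ = 12 * M ^ 2 * (α / d) + 13.5 * (M * (1 / d)) := by ring
    _ = 12 * M ^ 2 * d + 13.5 * (M * (1 / d)) := by
        congr 2; rw [← hdα]; field_simp
    _ ≤ 20 * M ^ 2 * d + 20 * (M * (1 / d)) := by gcongr <;> norm_num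
    _ = _ := by field_simp

lemma geomTotal_le {α : ℝ} (hα : α ≠ 0) (hα1 : |α| ≤ 1) {M : ℕ} (hM : 1 ≤ M) :
    geomTotal α M ≤ 20 * (M : ℝ) ^ 2 * (√|α| + 1 / (M * √|α|)) := by
  have habs : geomTotal |α| M = geomTotal α M := by
    rcases abs_cases α with ⟨h, -⟩ | ⟨h, -⟩ <;> rw [h]
    exact geomTotal_neg α M
  exact habs ▸ geomTotal_le_of_pos (abs_pos.mpr hα) hα1 hM

end GeometricSums

section BilinearBound

variable {r q k : ℕ}

lemma prod_pow_two_mul_succ (q k : ℕ) :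
    ∏ j : Fin k, (q : ℝ) ^ (2 * (j.1 + 1)) = (q : ℝ) ^ (k * (k + 1)) := by
  rw [prod_pow_eq_pow_sum, Fin.sum_univ_eq_sum_range (fun j => 2 * (j + 1)) k, ← mul_sum]
  have hgauss := sum_range_id_mul_two (k + 1)
  rw [sum_range_succ', add_zero, Nat.add_sub_cancel] at hgauss
  rw [mul_comm 2, hgauss, mul_comm]

lemma card_filter_mem_Ico_succ (hr : 1 ≤ r) (hk : 2 * r ≤ k + 1) :
    #{j : Fin k | j.1 + 1 ∈ Ico r (2 * r)} = r := by
  have hcard : #(Ico r (2 * r)) = r := by rw [Nat.card_Ico]; omega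
  refine (card_bij (fun j _ => j.1 + 1) (fun j hj => (mem_filter.mp hj).2)
    (fun a _ b _ h => Fin.ext (by omega)) fun b hb => ?_).trans hcard
  have hb' := mem_Ico.mp hb
  have hb1 : b - 1 + 1 = b := by omega
  exact ⟨⟨b - 1, by omega⟩, by simpa [hb1] using hb, hb1⟩

lemma prod_geomTotal_le {s : ℕ} (hr : 1 ≤ r) (hk : 2 * r ≤ k + 1) (hs : 1 ≤ s) (hq : 1 ≤ q)
    {α : Fin k → ℝ} {ρ : ℝ} (hρ : ∀ j : Fin k, j.1 + 1 ∈ Ico r (2 * r) → α j ≠ 0 ∧ |α j| ≤ 1 ∧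
      √|α j| + 1 / ((q : ℝ) ^ (j.1 + 1) * √|α j|) ≤ ρ) :
    ∏ j : Fin k, geomTotal (α j) (s * q ^ (j.1 + 1)) ≤
      (20 * (s : ℝ) ^ 2) ^ k * (q : ℝ) ^ (k * (k + 1)) * ρ ^ r := by
  have hsR : (1 : ℝ) ≤ s := by exact_mod_cast hs
  have hfactor (j : Fin k) : geomTotal (α j) (s * q ^ (j.1 + 1)) ≤
      (20 * (s : ℝ) ^ 2) * (q : ℝ) ^ (2 * (j.1 + 1)) *
        (if j.1 + 1 ∈ Ico r (2 * r) then ρ else 1) := by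
    have hM : 1 ≤ s * q ^ (j.1 + 1) := Nat.mul_pos hs (pow_pos hq _)
    have hcast : ((s * q ^ (j.1 + 1) : ℕ) : ℝ) ^ 2 = (s : ℝ) ^ 2 * (q : ℝ) ^ (2 * (j.1 + 1)) := by
      push_cast
      rw [mul_pow, ← pow_mul, mul_comm 2]
    split_ifs with h
    · obtain ⟨hα, hα1, hαρ⟩ := hρ j h
      refine (geomTotal_le hα hα1 hM).trans ?_
      rw [hcast, ← mul_assoc]
      refine mul_le_mul_of_nonneg_left (le_trans ?_ hαρ) (by positivity)
      gcongr _ + 1 / (?_ * _)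
      push_cast
      exact le_mul_of_one_le_left (by positivity) hsR
    · refine (geomTotal_le_mul_sq _ hM).trans ?_
      rw [hcast, mul_one, ← mul_assoc]
      gcongr
      norm_num
  refine (prod_le_prod (fun j _ => geomTotal_nonneg _ _) fun j _ => hfactor j).trans_eq ?_
  rw [prod_mul_distrib, prod_mul_distrib, prod_const, card_univ, Fintype.card_fin,
    prod_pow_two_mul_succ, prod_ite, prod_const_one, mul_one, prod_const,
    card_filter_mem_Ico_succ hr hk]

lemma natCast_le_pow_pred (r : ℕ) : (r : ℝ) ≤ 32 ^ (r - 1) := by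
  have : r ≤ 32 ^ (r - 1) := by
    have := Nat.lt_pow_self (n := r - 1) (a := 32) (by norm_num)
    omega
  exact_mod_cast this

lemma mean_value_const_le (hr : 1 ≤ r) :
    ((4 * (8 * r : ℕ) : ℝ) ^ (451 * (8 * r) ^ 3)) ^ 2 *
      (20 * ((10 * (8 * r) ^ 2 : ℕ) : ℝ) ^ 2) ^ (8 * r) ≤ 32 ^ (461900 * r ^ 4) := by
  have hr32 := natCast_le_pow_pred r
  have hbase : (4 * (8 * r : ℕ) : ℝ) ≤ 32 ^ r := by
    rw [show (32 : ℝ) ^ r = 32 * 32 ^ (r - 1) by rw [← pow_succ', Nat.sub_add_cancel hr]]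
    push_cast
    linarith
  have hbase' : 20 * ((10 * (8 * r) ^ 2 : ℕ) : ℝ) ^ 2 ≤ 32 ^ (9 * r) := by
    have hr32' : (r : ℝ) ≤ 32 ^ r := hr32.trans (pow_le_pow_right₀ (by norm_num) (by omega))
    calc 20 * ((10 * (8 * r) ^ 2 : ℕ) : ℝ) ^ 2 = 8192000 * (r : ℝ) ^ 4 := by push_cast; ring
      _ ≤ 32 ^ 5 * (32 ^ r) ^ 4 := by gcongr; norm_num
      _ = 32 ^ (5 + 4 * r) := by rw [← pow_mul, ← pow_add, mul_comm 4]
      _ ≤ _ := pow_le_pow_right₀ (by norm_num) (by omega)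
  calc _ ≤ (((32 : ℝ) ^ r) ^ (451 * (8 * r) ^ 3)) ^ 2 * (32 ^ (9 * r)) ^ (8 * r) := by gcongr
    _ = 32 ^ (461824 * r ^ 4 + 72 * r ^ 2) := by
        rw [← pow_mul, ← pow_mul, ← pow_mul, ← pow_add]; congr 1; ring
    _ ≤ _ := by
        refine pow_le_pow_right₀ (by norm_num) ?_
        have : r ^ 2 ≤ r ^ 4 := Nat.pow_le_pow_right hr (by norm_num)
        nlinarith

lemma norm_bilinear_le (hr : 1 ≤ r) (hq : 1 ≤ q) {α : Fin (8 * r) → ℝ} {ρ : ℝ} (hρ0 : 0 ≤ ρ)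
    (hρ : ∀ j : Fin (8 * r), j.1 + 1 ∈ Ico r (2 * r) → α j ≠ 0 ∧ |α j| ≤ 1 ∧
      √|α j| + 1 / ((q : ℝ) ^ (j.1 + 1) * √|α j|) ≤ ρ) :
    ‖∑ x ∈ Ico (0 : ℤ) q, ∑ y ∈ Ico (0 : ℤ) q,
      expi (diagForm α (momentCurve (8 * r) x) (momentCurve (8 * r) y))‖ ^ (819200 * r ^ 4) ≤
    ((q : ℝ) ^ 2) ^ (819200 * r ^ 4) *
      (32 ^ (461900 * r ^ 4) * (q : ℝ) ^ ((r : ℝ) ^ 2 * 72 / 4096) * ρ ^ r) := by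
  have hrR : (1 : ℝ) ≤ r := by exact_mod_cast hr
  have hqR : (1 : ℝ) ≤ q := by exact_mod_cast hq
  have hq0 : (0 : ℝ) < q := by linarith
  set s := 10 * (8 * r) ^ 2 with hs
  have hs1 : 1 ≤ s := by nlinarith [hs]
  have hexp : 2 * s ^ 2 = 819200 * r ^ 4 := by rw [hs]; ring
  have hsR : (s : ℝ) = 640 * (r : ℝ) ^ 2 := by rw [hs]; push_cast; ring
  have hmoment := moment_Ico_le (k := 8 * r) (by omega) hq
  set e : ℝ := 20 * (8 * r : ℕ) ^ 2 - (8 * r : ℕ) * ((8 * r : ℕ) + 1) / 2 +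
    (8 * r : ℕ) * ((8 * r : ℕ) + 1) / 2 / 4096 with he
  have hprod := prod_geomTotal_le hr (by omega) hs1 hq hρ
  have hqpow : (q : ℝ) ^ (4 * (s * (s - 1))) * ((q : ℝ) ^ e) ^ 2 *
      (q : ℝ) ^ (8 * r * (8 * r + 1)) ≤
      ((q : ℝ) ^ 2) ^ (819200 * r ^ 4) * (q : ℝ) ^ ((r : ℝ) ^ 2 * 72 / 4096) := by
    rw [← hexp, ← pow_mul]
    simp only [← Real.rpow_natCast, ← Real.rpow_mul hq0.le, ← Real.rpow_add hq0]
    refine Real.rpow_le_rpow_of_exponent_le hqR ?_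
    push_cast [Nat.cast_sub hs1]
    rw [hsR, he, Real.rpow_two]
    push_cast
    have hrr : (r : ℝ) ≤ r ^ 2 := le_self_pow₀ hrR two_ne_zero
    linarith
  rw [← hexp] at hqpow ⊢
  refine (norm_bilinear_pow_le α (fun u hu j => powerSums_mem_Icc hu j) (by omega)).trans ?_
  rw [Int.card_Ico, sub_zero, Int.toNat_natCast]
  calc _ ≤ (q : ℝ) ^ (4 * (s * (s - 1))) * (((4 * (8 * r : ℕ) : ℝ) ^ (451 * (8 * r) ^ 3)) *
          (q : ℝ) ^ e) ^ 2 *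
        ((20 * (s : ℝ) ^ 2) ^ (8 * r) * (q : ℝ) ^ (8 * r * (8 * r + 1)) * ρ ^ r) := by
        gcongr
        · exact prod_nonneg fun j _ => geomTotal_nonneg _ _
        · exact moment_nonneg _ _ _
    _ = (((4 * (8 * r : ℕ) : ℝ) ^ (451 * (8 * r) ^ 3)) ^ 2 * (20 * (s : ℝ) ^ 2) ^ (8 * r)) *
        ((q : ℝ) ^ (4 * (s * (s - 1))) * ((q : ℝ) ^ e) ^ 2 *
          (q : ℝ) ^ (8 * r * (8 * r + 1))) * ρ ^ r := by rw [mul_pow]; ac_rfl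
    _ ≤ 32 ^ (461900 * r ^ 4) *
        (((q : ℝ) ^ 2) ^ (2 * s ^ 2) * (q : ℝ) ^ ((r : ℝ) ^ 2 * 72 / 4096)) * ρ ^ r := by
        gcongr
        exact mean_value_const_le hr
    _ = _ := by ac_rfl

end BilinearBound

section Shifts

variable {E : Type*} [NormedAddCommGroup E] {f : ℕ → E} {a b : ℕ}

lemma sum_Ioc_sub_sum_Ioc_succ (f : ℕ → E) (hab : a ≤ b) (h : ℕ) :
    ∑ n ∈ Ioc a b, f (n + h) - ∑ n ∈ Ioc a b, f (n + (h + 1)) =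
      f (a + 1 + h) - f (b + 1 + h) := by
  induction b, hab using Nat.le_induction with
  | base => simp
  | succ b hb ihb =>
    rw [sum_Ioc_succ_top (by omega), sum_Ioc_succ_top (by omega),
      show b + 1 + (h + 1) = b + 1 + 1 + h by ring, add_sub_add_comm, ihb]
    abel

lemma norm_sum_sub_sum_shift_le (hf : ∀ n, ‖f n‖ ≤ 1) (hab : a ≤ b) (h : ℕ) :
    ‖∑ n ∈ Ioc a b, f n - ∑ n ∈ Ioc a b, f (n + h)‖ ≤ 2 * h := by
  induction h with
  | zero => simp
  | succ h ih =>
    have hends : ‖f (a + 1 + h) - f (b + 1 + h)‖ ≤ 2 :=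
      (norm_sub_le _ _).trans (by linarith [hf (a + 1 + h), hf (b + 1 + h)])
    rw [← sum_Ioc_sub_sum_Ioc_succ f hab h] at hends
    refine (norm_sub_le_norm_sub_add_norm_sub _ (∑ n ∈ Ioc a b, f (n + h)) _).trans ?_
    push_cast
    linarith

lemma norm_sum_le_of_shifts [NormedSpace ℝ E] {ι : Type*} (hf : ∀ n, ‖f n‖ ≤ 1) (hab : a ≤ b)
    {I : Finset ι} (hI : I.Nonempty) (s : ι → ℕ) {H B : ℝ} (hs : ∀ i ∈ I, (s i : ℝ) ≤ H)
    (hB : ∀ n ∈ Ioc a b, ‖∑ i ∈ I, f (n + s i)‖ ≤ #I * B) :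
    ‖∑ n ∈ Ioc a b, f n‖ ≤ ((b : ℝ) - a) * B + 2 * H := by
  have hdecomp : #I • ∑ n ∈ Ioc a b, f n =
      ∑ i ∈ I, (∑ n ∈ Ioc a b, f n - ∑ n ∈ Ioc a b, f (n + s i)) +
        ∑ n ∈ Ioc a b, ∑ i ∈ I, f (n + s i) := by
    rw [sum_sub_distrib, sum_const, sum_comm (s := I), sub_add_cancel]
  have hshift : ‖∑ i ∈ I, (∑ n ∈ Ioc a b, f n - ∑ n ∈ Ioc a b, f (n + s i))‖ ≤ #I * (2 * H) := by
    rw [← nsmul_eq_mul, ← sum_const]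
    exact norm_sum_le_of_le _ fun i hi =>
      (norm_sum_sub_sum_shift_le hf hab (s i)).trans (by linarith [hs i hi])
  have hlocal : ‖∑ n ∈ Ioc a b, ∑ i ∈ I, f (n + s i)‖ ≤ ((b : ℝ) - a) * (#I * B) := by
    refine (norm_sum_le_of_le _ hB).trans_eq ?_
    rw [sum_const, nsmul_eq_mul, Nat.card_Ioc, Nat.cast_sub hab]
  refine le_of_mul_le_mul_left ?_ (Nat.cast_pos.mpr hI.card_pos : (0 : ℝ) < #I)
  rw [← nsmul_eq_mul, ← RCLike.norm_nsmul ℝ, hdecomp]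
  refine (norm_add_le _ _).trans ?_
  linarith

end Shifts

section LocalExpansion

lemma norm_expi_add_sub_le (t u : ℝ) : ‖expi (t + u) - expi t‖ ≤ 2 * π * |u| := by
  rw [expi_add, ← mul_sub_one, norm_mul, norm_expi, one_mul, norm_expi_sub_one, mul_assoc]
  refine mul_le_mul_of_nonneg_left (abs_sin_le_abs.trans_eq ?_) two_pos.le
  rw [abs_mul, abs_of_pos pi_pos]

lemma norm_sum_expi_le_of_norm_sub_le {ι : Type*} {s : Finset ι} {f g : ι → ℝ} {c B : ℝ}
    (h : ∀ i ∈ s, ‖expi (f i) - expi (c + g i)‖ ≤ B) :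
    ‖∑ i ∈ s, expi (f i)‖ ≤ ‖∑ i ∈ s, expi (g i)‖ + #s * B := by
  have hrotate : ‖∑ i ∈ s, expi (g i)‖ = ‖∑ i ∈ s, expi (c + g i)‖ := by
    simp only [expi_add]
    rw [← mul_sum, norm_mul, norm_expi, one_mul]
  rw [hrotate, ← sub_le_iff_le_add', ← nsmul_eq_mul, ← sum_const]
  refine (norm_sub_norm_le _ _).trans ?_
  rw [← sum_sub_distrib]
  exact norm_sum_le_of_le _ h

/-- The coefficient of `z ^ (j + 1)` in the Taylor expansion of `z ↦ X / (n + z)` at `0`. The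
constant term is omitted, since it does not affect the absolute value of an exponential sum. -/
noncomputable def localCoeff (X n : ℝ) (k : ℕ) (j : Fin k) : ℝ :=
  X * (-1) ^ (j.1 + 1) / n ^ (j.1 + 2)

lemma div_add_eq_sum_localCoeff (X : ℝ) {n z : ℝ} (hn : n ≠ 0) (hnz : n + z ≠ 0) (k : ℕ) :
    X / (n + z) = X / n + ∑ j : Fin k, localCoeff X n k j * z ^ (j.1 + 1) +
      X * (-z) ^ (k + 1) / (n ^ (k + 1) * (n + z)) := by
  simp only [localCoeff]
  induction k with
  | zero => simp; field_simp; ring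
  | succ k ih =>
    have hrem : X * (-z) ^ (k + 1) / (n ^ (k + 1) * (n + z)) =
        X * (-1) ^ (k + 1) / n ^ (k + 2) * z ^ (k + 1) +
          X * (-z) ^ (k + 1 + 1) / (n ^ (k + 1 + 1) * (n + z)) := by
      rw [neg_pow z (k + 1), neg_pow z (k + 1 + 1)]
      field_simp
      ring
    rw [Fin.sum_univ_castSucc, ih, hrem]
    simp only [Fin.val_castSucc, Fin.val_last]
    ring

variable {X n : ℝ}

lemma abs_localCoeff (hX : 0 ≤ X) (hn : 0 < n) {k : ℕ} (j : Fin k) :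
    |localCoeff X n k j| = X / n ^ (j.1 + 2) := by
  rw [localCoeff, abs_div, abs_mul, abs_pow, abs_neg, abs_one, one_pow, mul_one, abs_of_nonneg hX,
    abs_of_pos (by positivity)]

lemma norm_expi_div_add_sub_le (hX : 0 ≤ X) (hn : 0 < n) {z Z : ℝ} (hz : 0 ≤ z) (hzZ : z ≤ Z)
    (k : ℕ) :
    ‖expi (X / (n + z)) - expi (X / n + ∑ j : Fin k, localCoeff X n k j * z ^ (j.1 + 1))‖ ≤
      2 * π * (X * Z ^ (k + 1) / n ^ (k + 2)) := by
  rw [div_add_eq_sum_localCoeff X hn.ne' (by positivity) k]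
  refine (norm_expi_add_sub_le _ _).trans ?_
  rw [abs_div, abs_mul, abs_pow, abs_neg, abs_of_nonneg hX, abs_of_nonneg hz,
    abs_of_pos (by positivity), pow_succ n (k + 1)]
  have hZ : 0 ≤ Z := hz.trans hzZ
  gcongr
  linarith

lemma norm_sum_expi_div_add_mul_le (hX : 0 ≤ X) (hn : 0 < n) (q k : ℕ) :
    ‖∑ p ∈ range q ×ˢ range q, expi (X / (n + p.1 * p.2))‖ ≤
      ‖∑ x ∈ Ico (0 : ℤ) q, ∑ y ∈ Ico (0 : ℤ) q,
        expi (diagForm (localCoeff X n k) (momentCurve k x) (momentCurve k y))‖ +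
      (q : ℝ) ^ 2 * (2 * π * (X * ((q : ℝ) ^ 2) ^ (k + 1) / n ^ (k + 2))) := by
  have hcard : (#(range q ×ˢ range q) : ℝ) = (q : ℝ) ^ 2 := by simp [sq]
  rw [← hcard, sum_Ico_zero_natCast]
  simp only [sum_Ico_zero_natCast]
  rw [← sum_product' (f := fun x y : ℕ =>
    expi (diagForm (localCoeff X n k) (momentCurve k x) (momentCurve k y)))]
  refine norm_sum_expi_le_of_norm_sub_le (c := X / n) fun p hp => ?_
  rw [mem_product, mem_range, mem_range] at hp
  have hpq : (p.1 : ℝ) * p.2 ≤ q ^ 2 := by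
    rw [sq]
    exact_mod_cast Nat.mul_le_mul hp.1.le hp.2.le
  have hdiag : diagForm (localCoeff X n k) (momentCurve k p.1) (momentCurve k p.2) =
      ∑ j : Fin k, localCoeff X n k j * ((p.1 : ℝ) * p.2) ^ (j.1 + 1) := by
    simp only [diagForm, momentCurve, Int.cast_pow, Int.cast_natCast, mul_pow]
  rw [hdiag, hcard]
  exact norm_expi_div_add_sub_le hX hn (by positivity) hpq k

end LocalExpansion

section VinogradovRange

lemma sqrt_rpow {K : ℝ} (hK : 0 ≤ K) (e : ℝ) : √(K ^ e) = K ^ (e / 2) := by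
  rw [Real.sqrt_eq_rpow, ← Real.rpow_mul hK, mul_one_div]

lemma exists_natCast_mem_Icc_half {x : ℝ} (hx : 1 ≤ x) :
    ∃ q : ℕ, 1 ≤ q ∧ (q : ℝ) ∈ Set.Icc (x / 2) x := by
  have hfloor : 1 ≤ ⌊x⌋₊ := (Nat.one_le_floor_iff _).2 hx
  refine ⟨⌊x⌋₊, hfloor, ?_, Nat.floor_le (by linarith)⟩
  have hlt := Nat.lt_floor_add_one x
  have hfloor' : (1 : ℝ) ≤ ⌊x⌋₊ := by exact_mod_cast hfloor
  linarith

variable {K θ n : ℝ} {r q J : ℕ}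

lemma rpow_div_pow_le (hK : 0 < K) (hn : K ≤ n) :
    K ^ (θ + 1) / n ^ (J + 1) ≤ K ^ (θ - J) := by
  have hn0 : 0 < n := by linarith
  rw [div_le_iff₀ (by positivity)]
  calc K ^ (θ + 1) = K ^ (θ - J) * K ^ (J + 1) := by
        rw [← Real.rpow_natCast K (J + 1), ← Real.rpow_add hK]; push_cast; ring_nf
    _ ≤ _ := by gcongr

lemma le_rpow_div_pow (hn0 : 0 < n) (hK : 0 < K) (hn : n ≤ 2 * K) (hJ : J < 2 * r) :
    K ^ (θ - J) / 4 ^ r ≤ K ^ (θ + 1) / n ^ (J + 1) := by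
  rw [le_div_iff₀ (by positivity), div_mul_eq_mul_div, div_le_iff₀ (by positivity)]
  calc K ^ (θ - J) * n ^ (J + 1) ≤ K ^ (θ - J) * (2 * K) ^ (J + 1) := by gcongr
    _ = K ^ (θ + 1) * 2 ^ (J + 1) := by
        rw [mul_pow, ← Real.rpow_natCast K (J + 1), mul_left_comm, ← Real.rpow_add hK]
        push_cast; ring_nf
    _ ≤ K ^ (θ + 1) * 4 ^ r := by
        rw [show (4 : ℝ) = 2 ^ 2 by norm_num, ← pow_mul]
        gcongr
        · norm_num
        · omega

lemma one_div_pow_mul_sqrt_le (hK : 1 ≤ K) (hn0 : 0 < n) (hn : n ≤ 2 * K) (hr : r ≤ 2 * θ + 1)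
    (hθ : 1 / 2 ≤ θ) (hq : K ^ ((7 : ℝ) / 16) / 2 ≤ q) (hJ : J ∈ Ico r (2 * r)) :
    1 / ((q : ℝ) ^ J * √(K ^ (θ + 1) / n ^ (J + 1))) ≤ 8 ^ r * K ^ (-(r : ℝ) / 32) := by
  have hJr := (mem_Ico.mp hJ).2
  have hJr' : (J : ℝ) + 1 ≤ 2 * r := by exact_mod_cast hJr
  have hK0 : 0 < K := by linarith
  have hsqrt : K ^ ((θ - J) / 2) / 2 ^ r ≤ √(K ^ (θ + 1) / n ^ (J + 1)) := by
    refine Eq.trans_le ?_ (Real.sqrt_le_sqrt (le_rpow_div_pow hn0 hK0 hn hJr))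
    rw [Real.sqrt_div (by positivity), sqrt_rpow hK0.le, show (4 : ℝ) ^ r = (2 ^ r) ^ 2 by
      rw [← pow_mul, mul_comm r, pow_mul]; norm_num, Real.sqrt_sq (by positivity)]
  have hqJ : K ^ ((7 : ℝ) / 16 * J) / 4 ^ r ≤ (q : ℝ) ^ J := by
    refine le_trans ?_ (pow_le_pow_left₀ (by positivity) hq J)
    rw [div_pow, Real.rpow_mul hK0.le, Real.rpow_natCast, show (4 : ℝ) = 2 ^ 2 by norm_num,
      ← pow_mul]
    gcongr
    norm_num
  have hprod : K ^ ((7 : ℝ) / 16 * J) / 4 ^ r * (K ^ ((θ - J) / 2) / 2 ^ r) ≤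
      (q : ℝ) ^ J * √(K ^ (θ + 1) / n ^ (J + 1)) := by gcongr
  refine (one_div_le_one_div_of_le (by positivity) hprod).trans ?_
  rw [div_mul_div_comm, ← Real.rpow_add hK0, ← mul_pow, one_div_div,
    show (4 : ℝ) * 2 = 8 by norm_num, div_eq_mul_inv, ← Real.rpow_neg hK0.le]
  gcongr
  linarith

lemma one_add_eight_pow_le (hr : r ≠ 0) : (1 : ℝ) + 8 ^ r ≤ 16 ^ r := by
  have height : (1 : ℝ) ≤ 8 ^ r := one_le_pow₀ (by norm_num)
  have htwo : (2 : ℝ) ≤ 2 ^ r := le_self_pow₀ (by norm_num) hr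
  calc (1 : ℝ) + 8 ^ r ≤ 2 * 8 ^ r := by linarith
    _ ≤ 2 ^ r * 8 ^ r := by gcongr
    _ = 16 ^ r := by rw [← mul_pow]; norm_num

lemma sqrt_add_one_div_le (hK : 1 ≤ K) (hKn : K ≤ n) (hn : n ≤ 2 * K) (hr : 2 * θ ≤ r)
    (hr' : r ≤ 2 * θ + 1) (hθ : 1 / 2 ≤ θ) (hq : K ^ ((7 : ℝ) / 16) / 2 ≤ q)
    (hJ : J ∈ Ico r (2 * r)) :
    √(K ^ (θ + 1) / n ^ (J + 1)) + 1 / ((q : ℝ) ^ J * √(K ^ (θ + 1) / n ^ (J + 1))) ≤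
      16 ^ r * K ^ (-(r : ℝ) / 32) := by
  have hrJ : (r : ℝ) ≤ J := by exact_mod_cast (mem_Ico.mp hJ).1
  have hr0 : r ≠ 0 := by
    rintro rfl
    norm_num at hr
    linarith
  have hsqrt : √(K ^ (θ + 1) / n ^ (J + 1)) ≤ K ^ (-(r : ℝ) / 32) := by
    refine (Real.sqrt_le_sqrt (rpow_div_pow_le (by linarith) hKn)).trans ?_
    rw [sqrt_rpow (by linarith)]
    exact Real.rpow_le_rpow_of_exponent_le hK (by linarith)
  calc _ ≤ K ^ (-(r : ℝ) / 32) + 8 ^ r * K ^ (-(r : ℝ) / 32) :=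
        add_le_add hsqrt (one_div_pow_mul_sqrt_le hK (by linarith) hn hr' hθ hq hJ)
    _ = (1 + 8 ^ r) * K ^ (-(r : ℝ) / 32) := by ring
    _ ≤ _ := by
        gcongr
        exact one_add_eight_pow_le hr0

end VinogradovRange

section VinogradovEstimate

variable {K θ n : ℝ} {r q : ℕ}

lemma sixteen_pow_mul_rpow_pow_le (hK : 0 < K) (hr : 1 ≤ r) :
    ((16 : ℝ) ^ r * K ^ (-(r : ℝ) / 32)) ^ r ≤ 32 ^ (r ^ 4) * K ^ (-(r : ℝ) ^ 2 / 32) := by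
  have hexp : r * r ≤ r ^ 4 := by
    rw [← sq]
    exact Nat.pow_le_pow_right hr (by norm_num)
  rw [mul_pow, ← pow_mul, ← Real.rpow_mul_natCast hK.le]
  gcongr ?_ * ?_
  · calc (16 : ℝ) ^ (r * r) ≤ 32 ^ (r * r) := by gcongr; norm_num
      _ ≤ 32 ^ (r ^ 4) := pow_le_pow_right₀ (by norm_num) hexp
  · exact le_of_eq (by ring_nf)

lemma norm_bilinear_localCoeff_le (hK : 1 ≤ K) (hKn : K ≤ n) (hn : n ≤ 2 * K) (hr : 2 * θ ≤ r)
    (hr' : r ≤ 2 * θ + 1) (hθ : 1 / 2 ≤ θ) (hq : 1 ≤ q)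
    (hqK : (q : ℝ) ∈ Set.Icc (K ^ ((7 : ℝ) / 16) / 2) (K ^ ((7 : ℝ) / 16))) :
    ‖∑ x ∈ Ico (0 : ℤ) q, ∑ y ∈ Ico (0 : ℤ) q,
        expi (diagForm (localCoeff (K ^ (θ + 1)) n (8 * r)) (momentCurve (8 * r) x)
          (momentCurve (8 * r) y))‖ ≤
      (q : ℝ) ^ 2 * (32 * K ^ (-(1 / (52428800 * (r : ℝ) ^ 2)))) := by
  have hK0 : 0 < K := by linarith
  have hn0 : 0 < n := by linarith
  have hr1 : 1 ≤ r := by exact_mod_cast (by linarith : (1 : ℝ) ≤ r)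
  have hexp : 819200 * r ^ 4 ≠ 0 := by positivity
  rw [← pow_le_pow_iff_left₀ (norm_nonneg _) (by positivity) hexp]
  refine (norm_bilinear_le hr1 hq (ρ := 16 ^ r * K ^ (-(r : ℝ) / 32)) (by positivity)
    fun j hj => ?_).trans ?_
  · have hcoeff := abs_localCoeff (X := K ^ (θ + 1)) (by positivity) hn0 j
    have hJ : (r : ℝ) ≤ (j.1 + 1 : ℕ) := by exact_mod_cast (mem_Ico.mp hj).1
    rw [← abs_pos, hcoeff]
    exact ⟨by positivity, (rpow_div_pow_le hK0 hKn).trans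
      (Real.rpow_le_one_of_one_le_of_nonpos hK (by linarith)),
      sqrt_add_one_div_le hK hKn hn hr hr' hθ hqK.1 hj⟩
  have hqpow : (q : ℝ) ^ ((r : ℝ) ^ 2 * 72 / 4096) ≤ K ^ ((r : ℝ) ^ 2 / 64) := by
    calc (q : ℝ) ^ ((r : ℝ) ^ 2 * 72 / 4096)
        ≤ (K ^ ((7 : ℝ) / 16)) ^ ((r : ℝ) ^ 2 * 72 / 4096) := by
          gcongr
          exact hqK.2
      _ = K ^ ((7 : ℝ) / 16 * ((r : ℝ) ^ 2 * 72 / 4096)) := by rw [Real.rpow_mul hK0.le]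
      _ ≤ _ := Real.rpow_le_rpow_of_exponent_le hK (by nlinarith [sq_nonneg (r : ℝ)])
  rw [mul_pow ((q : ℝ) ^ 2)]
  refine mul_le_mul_of_nonneg_left ?_ (by positivity)
  calc _ ≤ (32 : ℝ) ^ (461900 * r ^ 4) * K ^ ((r : ℝ) ^ 2 / 64) *
        (32 ^ (r ^ 4) * K ^ (-(r : ℝ) ^ 2 / 32)) := by
        gcongr
        exact sixteen_pow_mul_rpow_pow_le hK0 hr1
    _ = 32 ^ (461901 * r ^ 4) * K ^ (-(r : ℝ) ^ 2 / 64) := by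
        rw [mul_mul_mul_comm, ← pow_add, ← Real.rpow_add hK0]
        congr 2 <;> ring
    _ ≤ 32 ^ (819200 * r ^ 4) * K ^ (-(r : ℝ) ^ 2 / 64) := by
        gcongr
        · norm_num
        · omega
    _ = _ := by
        rw [mul_pow, ← Real.rpow_mul_natCast hK0.le]
        congr 2
        push_cast
        field_simp
        norm_num

lemma taylor_error_le (hK : 1 ≤ K) (hKn : K ≤ n) (hr : 2 * θ ≤ r) (hθ : 1 / 2 ≤ θ)
    (hqK : (q : ℝ) ≤ K ^ ((7 : ℝ) / 16)) :
    K ^ (θ + 1) * ((q : ℝ) ^ 2) ^ (8 * r + 1) / n ^ (8 * r + 2) ≤ K ^ (-(1 / 8) : ℝ) := by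
  have hK0 : 0 < K := by linarith
  have hn0 : 0 < n := by linarith
  rw [div_le_iff₀ (by positivity)]
  calc K ^ (θ + 1) * ((q : ℝ) ^ 2) ^ (8 * r + 1)
      ≤ K ^ (θ + 1) * ((K ^ ((7 : ℝ) / 16)) ^ 2) ^ (8 * r + 1) := by gcongr
    _ = K ^ (θ - (8 * r + 1) / 8) * K ^ (8 * r + 2) := by
        rw [← pow_mul, ← Real.rpow_mul_natCast hK0.le, ← Real.rpow_add hK0,
          ← Real.rpow_natCast K (8 * r + 2), ← Real.rpow_add hK0]
        congr 1
        push_cast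
        ring
    _ ≤ _ := by
        gcongr
        linarith

/- The order `8r ≈ 16θ` of the expansion makes the Taylor error negligible, and the number of
coefficients of moderate size is at least `r`. -/
lemma norm_sum_expi_rpow_div_add_mul_le (hK : 1 ≤ K) (hKn : K ≤ n) (hn : n ≤ 2 * K)
    (hθ : 1 / 2 ≤ θ) (hq : 1 ≤ q)
    (hqK : (q : ℝ) ∈ Set.Icc (K ^ ((7 : ℝ) / 16) / 2) (K ^ ((7 : ℝ) / 16))) :
    ‖∑ p ∈ range q ×ˢ range q, expi (K ^ (θ + 1) / (n + p.1 * p.2))‖ ≤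
      (q : ℝ) ^ 2 * (40 * K ^ (-(1 / (838860800 * θ ^ 2)))) := by
  set c := 1 / (838860800 * θ ^ 2)
  obtain ⟨r, hr, hr'⟩ : ∃ r : ℕ, 2 * θ ≤ r ∧ (r : ℝ) ≤ 2 * θ + 1 :=
    ⟨⌈2 * θ⌉₊, Nat.le_ceil _, (Nat.ceil_lt_add_one (by linarith)).le⟩
  have hr0 : (0 : ℝ) < r := by linarith
  have hmono : ∀ e, e ≤ -c → K ^ e ≤ K ^ (-c) := fun e he =>
    Real.rpow_le_rpow_of_exponent_le hK he
  have hc8 : c ≤ 1 / 8 := one_div_le_one_div_of_le (by norm_num) (by nlinarith)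
  have hcr : c ≤ 1 / (52428800 * (r : ℝ) ^ 2) :=
    one_div_le_one_div_of_le (by positivity) (by nlinarith)
  calc _ ≤ (q : ℝ) ^ 2 * (32 * K ^ (-(1 / (52428800 * (r : ℝ) ^ 2)))) +
        (q : ℝ) ^ 2 * (2 * π * K ^ (-(1 / 8) : ℝ)) := by
        refine (norm_sum_expi_div_add_mul_le (by positivity) (by linarith) q (8 * r)).trans ?_
        gcongr
        · exact norm_bilinear_localCoeff_le hK hKn hn hr hr' hθ hq hqK
        · exact taylor_error_le hK hKn hr hθ hqK.2
    _ ≤ (q : ℝ) ^ 2 * (32 * K ^ (-c)) + (q : ℝ) ^ 2 * (2 * 4 * K ^ (-c)) := by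
        gcongr (q : ℝ) ^ 2 * (32 * ?_) + (q : ℝ) ^ 2 * (2 * ?_ * ?_)
        · exact hmono _ (by linarith)
        · exact Real.pi_le_four
        · exact hmono _ (by linarith)
    _ = _ := by ring

lemma norm_sum_expi_div_le_rpow (hK : 1 ≤ K) (hθ : 1 / 2 ≤ θ) {a b : ℕ} (hab : a ≤ b)
    (ha : K ≤ a + 1) (hb : (b : ℝ) ≤ 2 * K) :
    ‖∑ n ∈ Ioc a b, expi (K ^ (θ + 1) / n)‖ ≤
      100 * K * K ^ (-(1 / (838860800 * θ ^ 2))) := by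
  have hK0 : 0 < K := by linarith
  obtain ⟨q, hq, hqK⟩ := exists_natCast_mem_Icc_half
    (Real.one_le_rpow hK (by norm_num : (0 : ℝ) ≤ 7 / 16))
  set c := 1 / (838860800 * θ ^ 2)
  have hc8 : c ≤ 1 / 8 := one_div_le_one_div_of_le (by norm_num) (by nlinarith)
  have hshift : (q : ℝ) ^ 2 ≤ K * K ^ (-c) := by
    calc (q : ℝ) ^ 2 ≤ (K ^ ((7 : ℝ) / 16)) ^ 2 := by gcongr; exact hqK.2
      _ = K ^ ((7 : ℝ) / 8) := by rw [← Real.rpow_mul_natCast hK0.le]; norm_num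
      _ ≤ K ^ (1 + -c) := Real.rpow_le_rpow_of_exponent_le hK (by linarith)
      _ = K * K ^ (-c) := by rw [Real.rpow_add hK0, Real.rpow_one]
  have hmain := norm_sum_le_of_shifts (f := fun n => expi (K ^ (θ + 1) / n)) (by simp) hab
    (I := range q ×ˢ range q) (by simp; omega) (fun p => p.1 * p.2) (H := K * K ^ (-c))
    (B := 40 * K ^ (-c)) (fun p hp => ?_) fun n hn => ?_
  · have hba : (b : ℝ) - a ≤ 2 * K := by linarith
    refine hmain.trans ?_
    calc _ ≤ 2 * K * (40 * K ^ (-c)) + 2 * (K * K ^ (-c)) := by gcongr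
      _ = 82 * (K * K ^ (-c)) := by ring
      _ ≤ 100 * (K * K ^ (-c)) := by gcongr; norm_num
      _ = _ := by ring
  · rw [mem_product, mem_range, mem_range] at hp
    refine le_trans ?_ hshift
    rw [sq]
    exact_mod_cast Nat.mul_le_mul hp.1.le hp.2.le
  · rw [mem_Ioc] at hn
    have hcard : (#(range q ×ˢ range q) : ℝ) = (q : ℝ) ^ 2 := by simp [sq]
    have hKn : K ≤ n := ha.trans (by exact_mod_cast hn.1)
    have hnK : (n : ℝ) ≤ 2 * K := le_trans (by exact_mod_cast hn.2) hb
    rw [hcard]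
    simpa only [Nat.cast_add, Nat.cast_mul] using
      norm_sum_expi_rpow_div_add_mul_le hK hKn hnK hθ hq hqK

end VinogradovEstimate

section SmallRange

variable {K G : ℝ}

lemma norm_sum_range_expi_mul_le_of_mem_Ico {β δ : ℝ} (hδ : 0 < δ) (hβ : -β ∈ Set.Ico δ (1 / 2))
    (H : ℕ) : ‖∑ l ∈ range H, expi (β * l)‖ ≤ 1 / (2 * δ) := by
  obtain ⟨hδβ, hβ2⟩ := hβ
  have hround : round β = 0 := by
    rw [round_eq_zero_iff]
    constructor <;> linarith
  refine norm_sum_range_expi_mul_le hδ ?_ H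
  rwa [hround, Int.cast_zero, sub_zero, abs_of_neg (by linarith)]

/- Here `X = K G ^ 3` is so small that a linear approximation to `X / (n + l)` suffices. -/
lemma norm_sum_range_expi_div_add_le {n : ℝ} {H : ℕ} (hG : 1 ≤ G) (hGK : 2 * G ^ 3 < K)
    (hKn : K ≤ n) (hn : n ≤ 2 * K) (hH : (H : ℝ) ∈ Set.Icc (K / G ^ 2 / 2) (K / G ^ 2)) :
    ‖∑ l ∈ range H, expi (K * G ^ 3 / (n + l))‖ ≤ H * (12 / G) := by
  have hG0 : 0 < G := by linarith
  have hK0 : 0 < K := lt_trans (mul_pos two_pos (pow_pos hG0 3)) hGK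
  have hn0 : 0 < n := by linarith
  set X := K * G ^ 3 with hX
  have hslope : -(-(X / n ^ 2)) ∈ Set.Ico (G ^ 3 / (4 * K)) (1 / 2) := by
    rw [neg_neg, hX]
    constructor
    · rw [div_le_div_iff₀ (by positivity) (by positivity)]
      calc G ^ 3 * n ^ 2 ≤ G ^ 3 * (2 * K) ^ 2 := by gcongr
        _ = _ := by ring
    · rw [div_lt_div_iff₀ (by positivity) two_pos]
      calc K * G ^ 3 * 2 < 1 * K ^ 2 := by nlinarith
        _ ≤ 1 * n ^ 2 := by gcongr
  have hgeom : ‖∑ l ∈ range H, expi (-(X / n ^ 2) * l)‖ ≤ H * (4 / G) := by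
    refine (norm_sum_range_expi_mul_le_of_mem_Ico (by positivity) hslope H).trans ?_
    calc 1 / (2 * (G ^ 3 / (4 * K))) = K / G ^ 2 / 2 * (4 / G) := by field_simp
      _ ≤ _ := by gcongr; exact hH.1
  have herror (l : ℕ) (hl : l ∈ range H) :
      ‖expi (X / (n + l)) - expi (X / n + -(X / n ^ 2) * l)‖ ≤ 8 / G := by
    have hlG : (l : ℝ) ≤ K / G ^ 2 := le_trans (by exact_mod_cast (mem_range.1 hl).le) hH.2
    have htaylor := norm_expi_div_add_sub_le (X := X) (by positivity) hn0 l.cast_nonneg hlG 1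
    have hlinear : ∑ j : Fin 1, localCoeff X n 1 j * (l : ℝ) ^ (j.1 + 1) =
        -(X / n ^ 2) * l := by
      simp only [univ_unique, Fin.default_eq_zero, sum_singleton, localCoeff, Fin.val_zero]
      ring
    rw [hlinear] at htaylor
    refine htaylor.trans ?_
    calc _ ≤ 2 * 4 * (X * (K / G ^ 2) ^ 2 / K ^ 3) := by gcongr; exact Real.pi_le_four
      _ = 8 / G := by rw [hX]; field_simp; norm_num
  refine (norm_sum_expi_le_of_norm_sub_le herror).trans ?_
  rw [card_range]
  calc _ ≤ H * (4 / G) + H * (8 / G) := by gcongr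
    _ = _ := by ring

lemma norm_sum_expi_div_le_of_small (hK : 4 < K) (hG : 1 ≤ G) (hGK : G ^ 6 ≤ K)
    {a b : ℕ} (hab : a ≤ b) (ha : K ≤ a + 1) (hb : (b : ℝ) ≤ 2 * K) :
    ‖∑ n ∈ Ioc a b, expi (K * G ^ 3 / n)‖ ≤ 30 * (K / G) := by
  have hK0 : 0 < K := by linarith
  have hG0 : 0 < G := by linarith
  have hKG : 1 ≤ K / G ^ 2 := by
    rw [one_le_div (by positivity)]
    exact (pow_le_pow_right₀ hG (by norm_num)).trans hGK
  obtain ⟨H, hH, hHG⟩ := exists_natCast_mem_Icc_half hKG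
  have hGK' : 2 * G ^ 3 < K := by
    have hsq : (G ^ 3) ^ 2 ≤ K := by rwa [← pow_mul]
    nlinarith [hsq, pow_pos hG0 3]
  have hmain := norm_sum_le_of_shifts (f := fun n => expi (K * G ^ 3 / n)) (by simp) hab
    (I := range H) (by simp; omega) (fun h => h) (H := K / G ^ 2) (B := 12 / G)
    (fun h hh => le_trans (by exact_mod_cast (mem_range.1 hh).le) hHG.2) fun n hn => ?_
  · have hba : (b : ℝ) - a ≤ 2 * K := by linarith
    have hpow : K / G ^ 2 ≤ K / G := by
      gcongr
      exact le_self_pow₀ hG two_ne_zero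
    refine hmain.trans ?_
    calc _ ≤ 2 * K * (12 / G) + 2 * (K / G) := by gcongr
      _ = 26 * (K / G) := by ring
      _ ≤ _ := mul_le_mul_of_nonneg_right (by norm_num) (div_pos hK0 hG0).le
  · rw [mem_Ioc] at hn
    have hKn : K ≤ n := ha.trans (by exact_mod_cast hn.1)
    have hnK : (n : ℝ) ≤ 2 * K := le_trans (by exact_mod_cast hn.2) hb
    rw [card_range]
    simpa only [Nat.cast_add] using norm_sum_range_expi_div_add_le hG hGK' hKn hnK hHG

end SmallRange

section UniformEstimate

variable {K X : ℝ} {a b : ℕ}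

lemma norm_sum_expi_div_le_of_log_le (hK : 4 < K) (hX : 0 < X) (h : log K / 2 ≤ log (X / K))
    (hab : a ≤ b) (ha : K ≤ a + 1) (hb : (b : ℝ) ≤ 2 * K) :
    ‖∑ n ∈ Ioc a b, expi (X / n)‖ ≤
      100 * K * exp (-(log K ^ 3 / (838860800 * log (X / K) ^ 2))) := by
  have hK0 : 0 < K := by linarith
  have hlogK : 0 < log K := Real.log_pos (by linarith)
  have hlogXK : 0 < log (X / K) := by linarith
  set θ := log (X / K) / log K with hθ
  have hθ2 : 1 / 2 ≤ θ := by
    rw [hθ, le_div_iff₀ hlogK]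
    linarith
  have hXθ : K ^ (θ + 1) = X := by
    rw [Real.rpow_add hK0, Real.rpow_one, Real.rpow_def_of_pos hK0, hθ,
      mul_div_cancel₀ _ hlogK.ne', Real.exp_log (div_pos hX hK0), div_mul_cancel₀ _ hK0.ne']
  have hsaving : K ^ (-(1 / (838860800 * θ ^ 2))) =
      exp (-(log K ^ 3 / (838860800 * log (X / K) ^ 2))) := by
    rw [Real.rpow_def_of_pos hK0, hθ]
    congr 1
    field_simp
  rw [← hsaving]
  simpa only [hXθ] using norm_sum_expi_div_le_rpow (by linarith) hθ2 hab ha hb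

lemma norm_sum_expi_div_le_of_le_log (hK : 4 < K) (hX : K ≤ X) (h : log (X / K) ≤ log K / 2)
    (hab : a ≤ b) (ha : K ≤ a + 1) (hb : (b : ℝ) ≤ 2 * K) :
    ‖∑ n ∈ Ioc a b, expi (X / n)‖ ≤ 100 * K * exp (-(log (X / K) / 3)) := by
  have hK0 : 0 < K := by linarith
  have hXK : 1 ≤ X / K := (one_le_div hK0).2 hX
  set G := exp (log (X / K) / 3) with hG
  have hG3 : K * G ^ 3 = X := by
    rw [hG, ← Real.exp_nat_mul, Nat.cast_ofNat, mul_div_cancel₀ _ three_ne_zero,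
      Real.exp_log (by positivity), mul_div_cancel₀ _ hK0.ne']
  have hG1 : 1 ≤ G := Real.one_le_exp (div_nonneg (Real.log_nonneg hXK) zero_le_three)
  have hG6 : G ^ 6 ≤ K := by
    rw [hG, ← Real.exp_nat_mul, ← Real.le_log_iff_exp_le hK0]
    push_cast
    linarith
  rw [← hG3]
  refine (norm_sum_expi_div_le_of_small hK hG1 hG6 hab ha hb).trans ?_
  rw [hG3, Real.exp_neg, ← hG, div_eq_mul_inv, ← mul_assoc]
  gcongr
  norm_num

theorem norm_sum_expi_div_le (hK : 4 < K) (hX : K ≤ X) (hab : a ≤ b)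
    (ha : K ≤ a + 1) (hb : (b : ℝ) ≤ 2 * K) :
    ‖∑ n ∈ Ioc a b, expi (X / n)‖ ≤
      100 * K * (exp (-(log K ^ 3 / (838860800 * log (X / K) ^ 2))) +
        exp (-(log (X / K) / 3))) := by
  rw [mul_add]
  rcases le_total (log K / 2) (log (X / K)) with h | h
  · exact (norm_sum_expi_div_le_of_log_le hK (by linarith) h hab ha hb).trans
      (le_add_of_nonneg_right (by positivity))
  · exact (norm_sum_expi_div_le_of_le_log hK hX h hab ha hb).trans
      (le_add_of_nonneg_left (by positivity))

end UniformEstimate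

section LogPowerSaving

lemma eventually_mul_add_le_pow_four_div (a b : ℝ) {c : ℝ} (hc : 0 < c) :
    ∀ᶠ t : ℝ in atTop, a * t + b ≤ t ^ 4 / c := by
  have hlittle : (fun t : ℝ => a * t + b) =o[atTop] fun t => t ^ 4 := by
    refine Asymptotics.IsLittleO.add ?_ ?_
    · simpa only [pow_one] using
        (Asymptotics.isLittleO_pow_pow_atTop_of_lt (by norm_num : 1 < 4)).const_mul_left a
    · exact Asymptotics.isLittleO_const_left.2
        (Or.inr (tendsto_norm_atTop_atTop.comp (tendsto_pow_atTop four_ne_zero)))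
  filter_upwards [hlittle.bound (inv_pos.2 hc)] with t ht
  rw [Real.norm_of_nonneg (by positivity : 0 ≤ t ^ 4)] at ht
  exact ((le_norm_self _).trans ht).trans_eq (by ring)

lemma eventually_mul_log_add_le_rpow_div (a b : ℝ) {r c : ℝ} (hr : 0 < r) (hc : 0 < c) :
    ∀ᶠ L : ℝ in atTop, a * log L + b ≤ L ^ r / c := by
  have hlittle : (fun L : ℝ => a * log L + b) =o[atTop] fun L => L ^ r :=
    ((isLittleO_log_rpow_atTop hr).const_mul_left a).add
      (Asymptotics.isLittleO_const_left.2
        (Or.inr (tendsto_norm_atTop_atTop.comp (tendsto_rpow_atTop hr))))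
  filter_upwards [hlittle.bound (inv_pos.2 hc), eventually_ge_atTop 0] with L hL hL0
  rw [Real.norm_of_nonneg (by positivity : 0 ≤ L ^ r)] at hL
  exact ((le_norm_self _).trans hL).trans_eq (by ring)

lemma tendsto_rpow_mul_log_rpow_atTop {r s : ℝ} (hr : 0 < r) (hs : 0 < s) :
    Tendsto (fun L : ℝ => L ^ r * log L ^ s) atTop atTop :=
  (tendsto_rpow_atTop hr).atTop_mul_atTop₀ ((tendsto_rpow_atTop hs).comp tendsto_log_atTop)

/- The exponents `2 / 3` and `4 / 3` are dictated by this inequality: if `log K` is at least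
`L ^ (2 / 3) (log L) ^ (4 / 3)`, then `(log K) ^ 3 / L ^ 2` exceeds `(log L) ^ 4`. -/
lemma log_pow_four_div_le {L l u : ℝ} (hL : 1 < L)
    (hl : L ^ ((2 : ℝ) / 3) * log L ^ ((4 : ℝ) / 3) / 2 ≤ l) (hu : 0 < u) (hu' : u ≤ 2 * L) :
    log L ^ 4 / (838860800 * 32) ≤ l ^ 3 / (838860800 * u ^ 2) := by
  have hL0 : 0 < L := by linarith
  have hlogL : 0 < log L := Real.log_pos hL
  have hcube : L ^ 2 * log L ^ 4 / 8 ≤ l ^ 3 := by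
    calc L ^ 2 * log L ^ 4 / 8 =
        (L ^ ((2 : ℝ) / 3) * log L ^ ((4 : ℝ) / 3) / 2) ^ 3 := by
          rw [div_pow, mul_pow, ← Real.rpow_mul_natCast hL0.le, ← Real.rpow_mul_natCast hlogL.le]
          norm_num
      _ ≤ l ^ 3 := by gcongr
  rw [div_le_div_iff₀ (by norm_num) (by positivity)]
  calc log L ^ 4 * (838860800 * u ^ 2) ≤ log L ^ 4 * (838860800 * (2 * L) ^ 2) := by gcongr
    _ = L ^ 2 * log L ^ 4 / 8 * (838860800 * 32) := by ring
    _ ≤ _ := by gcongr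

lemma exp_neg_mul_log_add_log {L c : ℝ} (hL : 0 < L) (hc : 0 < c) (A : ℕ) :
    exp (-(A * log L + log c)) = 1 / (c * L ^ A) := by
  rw [Real.exp_neg, Real.exp_add, Real.exp_log hc, ← Real.log_pow,
    Real.exp_log (pow_pos hL A), one_div, mul_comm]

theorem eventually_norm_sum_expi_div_le (A : ℕ) : ∀ᶠ L : ℝ in atTop, ∀ (K X : ℝ) (a b : ℕ),
    a ≤ b → K ≤ a + 1 → (b : ℝ) ≤ 2 * K → L ^ ((2 : ℝ) / 3) * log L ^ ((4 : ℝ) / 3) / 2 ≤ log K →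
    0 < K → K * exp (L ^ ((2 : ℝ) / 3) / 2) ≤ X → X ≤ exp (2 * L) →
    ‖∑ n ∈ Ioc a b, expi (X / n)‖ ≤ K / L ^ A := by
  filter_upwards [tendsto_log_atTop.eventually (eventually_mul_add_le_pow_four_div A (log 200)
      (by norm_num : (0 : ℝ) < 838860800 * 32)),
    eventually_mul_log_add_le_rpow_div A (log 200) (by norm_num : (0 : ℝ) < 2 / 3)
      (by norm_num : (0 : ℝ) < 6),
    (tendsto_rpow_mul_log_rpow_atTop (by norm_num : (0 : ℝ) < 2 / 3)
      (by norm_num : (0 : ℝ) < 4 / 3)).eventually_ge_atTop (2 * log 5), eventually_gt_atTop 1]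
    with L hpow hrpow hlog5 hL K X a b hab ha hb hlogK hK0 hKX hXL
  have hL0 : 0 < L := by linarith
  have hK4 : 4 < K := by
    have := (Real.log_le_log_iff (by norm_num) hK0).1 (by linarith : log 5 ≤ log K)
    linarith
  have hXK : K ≤ X := (le_mul_of_one_le_right hK0.le (Real.one_le_exp (by positivity))).trans hKX
  have hX0 : 0 < X := by linarith
  have hlower : L ^ ((2 : ℝ) / 3) / 2 ≤ log (X / K) := by
    rw [Real.le_log_iff_exp_le (by positivity), le_div_iff₀ hK0, mul_comm]
    exact hKX
  have hupper : log (X / K) ≤ 2 * L := by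
    rw [Real.log_div hX0.ne' hK0.ne']
    linarith [(Real.log_le_iff_le_exp hX0).2 hXL, Real.log_pos (by linarith : 1 < K)]
  have hpos : 0 < log (X / K) := lt_of_lt_of_le (by positivity) hlower
  calc _ ≤ 100 * K * (exp (-(log K ^ 3 / (838860800 * log (X / K) ^ 2))) +
        exp (-(log (X / K) / 3))) := norm_sum_expi_div_le hK4 hXK hab ha hb
    _ ≤ 100 * K * (exp (-(A * log L + log 200)) + exp (-(A * log L + log 200))) := by
        gcongr
        · exact hpow.trans (log_pow_four_div_le hL hlogK hpos hupper)
        · linarith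
    _ = _ := by
        rw [exp_neg_mul_log_add_log hL0 (by norm_num)]
        field_simp
        norm_num

end LogPowerSaving

section Correlation

/-- All sums `∑ e(X / n)` over dyadic ranges beyond `U` save a factor `η`, provided that `X / n`
is at least `τ` on the range and `X ≤ Z`. -/
def SmallSums (U : ℕ) (τ Z η : ℝ) : Prop :=
  ∀ (X : ℝ) (a b : ℕ), U ≤ a → b ≤ 2 * (a + 1) → b * τ ≤ X → X ≤ Z →
    ‖∑ n ∈ Ioc a b, expi (X / n)‖ ≤ b * η

lemma norm_sum_expi_neg {ι : Type*} (s : Finset ι) (f : ι → ℝ) :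
    ‖∑ i ∈ s, expi (-f i)‖ = ‖∑ i ∈ s, expi (f i)‖ := by
  simp only [expi_neg]
  rw [← map_sum, Complex.norm_conj]

lemma mul_le_mul_sub_div_mul {y η τ d M m₁ m₂ b : ℝ} (hM : 0 < M) (hη : 0 ≤ η)
    (hy : 2 * (d * τ) ≤ y * η) (hy0 : 0 ≤ y) (hm₁ : 0 < m₁) (hm₂ : 0 < m₂) (hm₂M : m₂ ≤ 2 * M)
    (hm : η * M ≤ m₂ - m₁) (hb : 0 ≤ b) (hbd : b ≤ d / m₁) :
    b * τ ≤ y * (m₂ - m₁) / (m₁ * m₂) := by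
  have hsub : 0 ≤ m₂ - m₁ := le_trans (by positivity) hm
  rcases le_total τ 0 with hτ | hτ
  · exact (mul_nonpos_of_nonneg_of_nonpos hb hτ).trans (by positivity)
  calc b * τ ≤ d / m₁ * τ := by gcongr
    _ = 2 * (d * τ) / (2 * m₁) := by field_simp
    _ ≤ y * η / (2 * m₁) := by gcongr
    _ = y * (η * M) / (m₁ * (2 * M)) := by field_simp
    _ ≤ _ := by gcongr

lemma div_le_two_mul_div_add_one {D D' m : ℕ} (hm : 0 < m) (hD : D' ≤ 2 * (D + 1)) :
    D' / m ≤ 2 * (D / m + 1) := by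
  have := Nat.lt_div_mul_add (a := D) hm
  exact Nat.div_le_of_le_mul (by nlinarith)

namespace SmallSums

variable {U M D D' m₁ m₂ : ℕ} {τ Z η y : ℝ}

/- As a function of `k`, the phase `y / (m₁ k) - y / (m₂ k)` is again of the form `X / k`. -/
lemma norm_correlation_le_of_le (h : SmallSums U τ Z η)
    (hη : 0 ≤ η) (hM : 0 < M) (hD : D' ≤ 2 * (D + 1)) (hy : 2 * (D' * τ) ≤ y * η) (hy0 : 0 ≤ y)
    (hyZ : y ≤ Z) (h₁ : M < m₁) (h₁₂ : m₁ ≤ m₂) (h₂ : m₂ ≤ 2 * M) (hsub : η * M ≤ m₂ - m₁) :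
    ‖∑ k ∈ Ioc (max U (max (D / m₁) (D / m₂))) (min (D' / m₁) (D' / m₂)),
      expi (y / (m₁ * k) - y / (m₂ * k))‖ ≤ (D' : ℝ) / M * η := by
  have hM0 : (0 : ℝ) < M := by exact_mod_cast hM
  have hm₁ : (1 : ℝ) ≤ m₁ := by exact_mod_cast (by omega : 1 ≤ m₁)
  have hm₁₂ : (m₁ : ℝ) ≤ m₂ := by exact_mod_cast h₁₂
  have hm₁0 : (0 : ℝ) < m₁ := by linarith
  have hm₂0 : (0 : ℝ) < m₂ := by linarith
  set X : ℝ := y * (m₂ - m₁) / (m₁ * m₂) with hX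
  have hphase (k : ℕ) : y / (m₁ * k) - y / (m₂ * k) = X / k := by
    rw [hX, ← div_div, ← div_div, ← sub_div]
    congr 1
    field_simp
  simp only [hphase]
  have hb : ((min (D' / m₁) (D' / m₂) : ℕ) : ℝ) ≤ D' / m₁ :=
    le_trans (by exact_mod_cast min_le_left _ _) Nat.cast_div_le
  have hdyadic : min (D' / m₁) (D' / m₂) ≤ 2 * (max U (max (D / m₁) (D / m₂)) + 1) := by
    have := div_le_two_mul_div_add_one (by omega : 0 < m₁) hD
    omega
  have hτX := mul_le_mul_sub_div_mul hM0 hη hy hy0 hm₁0 hm₂0 (by exact_mod_cast h₂) hsub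
    (Nat.cast_nonneg _) hb
  have hXZ : X ≤ Z := by
    refine le_trans ?_ hyZ
    rw [hX, div_le_iff₀ (by positivity)]
    gcongr
    nlinarith
  refine (h X _ _ (le_max_left _ _) hdyadic hτX hXZ).trans ?_
  gcongr
  exact hb.trans (by gcongr)

lemma norm_correlation_le (h : SmallSums U τ Z η)
    (hη : 0 ≤ η) (hM : 0 < M) (hD : D' ≤ 2 * (D + 1)) (hy : 2 * (D' * τ) ≤ y * η) (hy0 : 0 ≤ y)
    (hyZ : y ≤ Z) (h₁ : m₁ ∈ Ioc M (2 * M)) (h₂ : m₂ ∈ Ioc M (2 * M))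
    (h₁₂ : η * M ≤ |(m₁ : ℝ) - m₂|) :
    ‖∑ k ∈ Ioc (max U (max (D / m₁) (D / m₂))) (min (D' / m₁) (D' / m₂)),
      expi (y / (m₁ * k) - y / (m₂ * k))‖ ≤ (D' : ℝ) / M * η := by
  wlog hle : m₁ ≤ m₂ generalizing m₁ m₂
  · rw [← norm_sum_expi_neg, max_comm (D / m₁), min_comm]
    simpa only [neg_sub] using this h₂ h₁ (by rwa [abs_sub_comm]) (by omega)
  rw [mem_Ioc] at h₁ h₂
  have hsub : (0 : ℝ) ≤ m₂ - m₁ := sub_nonneg.2 (by exact_mod_cast hle)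
  rw [abs_sub_comm, abs_of_nonneg hsub] at h₁₂
  exact h.norm_correlation_le_of_le hη hM hD hy hy0 hyZ h₁.1 hle h₂.2 h₁₂

end SmallSums

end Correlation

section BilinearBlock

lemma card_filter_abs_sub_le (s : Finset ℕ) (m : ℕ) {δ : ℝ} (hδ : 0 ≤ δ) :
    (#{n ∈ s | |(m : ℝ) - (n : ℕ)| ≤ δ} : ℝ) ≤ 2 * δ + 1 := by
  have hsub : {n ∈ s | |(m : ℝ) - (n : ℕ)| ≤ δ} ⊆ Icc (m - ⌊δ⌋₊) (m + ⌊δ⌋₊) := by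
    intro n hn
    rw [mem_filter, abs_le] at hn
    have hlower : (m : ℝ) < (n + ⌊δ⌋₊ + 1 : ℕ) := by
      push_cast
      linarith [Nat.lt_floor_add_one δ]
    have hupper : (n : ℝ) < (m + ⌊δ⌋₊ + 1 : ℕ) := by
      push_cast
      linarith [Nat.lt_floor_add_one δ]
    rw [Nat.cast_lt] at hlower hupper
    rw [mem_Icc]
    omega
  have hcard : #{n ∈ s | |(m : ℝ) - (n : ℕ)| ≤ δ} ≤ 2 * ⌊δ⌋₊ + 1 := by
    refine (card_le_card hsub).trans ?_
    rw [Nat.card_Icc]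
    omega
  calc _ ≤ ((2 * ⌊δ⌋₊ + 1 : ℕ) : ℝ) := by exact_mod_cast hcard
    _ = 2 * (⌊δ⌋₊ : ℝ) + 1 := by push_cast; ring
    _ ≤ _ := by gcongr; exact Nat.floor_le hδ

lemma sum_norm_sum_sq_le {ι κ : Type*} (s : Finset ι) (t : Finset κ) (g : ι → κ → ℂ) :
    ∑ k ∈ t, ‖∑ m ∈ s, g m k‖ ^ 2 ≤
      ∑ m₁ ∈ s, ∑ m₂ ∈ s, ‖∑ k ∈ t, g m₁ k * (starRingEnd ℂ) (g m₂ k)‖ := by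
  have hexpand : ((∑ k ∈ t, ‖∑ m ∈ s, g m k‖ ^ 2 : ℝ) : ℂ) =
      ∑ m₁ ∈ s, ∑ m₂ ∈ s, ∑ k ∈ t, g m₁ k * (starRingEnd ℂ) (g m₂ k) := by
    push_cast
    simp only [← Complex.mul_conj', map_sum, sum_mul_sum]
    rw [sum_comm]
    refine sum_congr rfl fun m₁ _ => ?_
    rw [sum_comm]
  rw [← Complex.norm_of_nonneg (sum_nonneg fun _ _ => sq_nonneg _), hexpand]
  exact norm_sum_le_of_le _ fun m₁ _ => norm_sum_le _ _

lemma norm_sum_mul_sum_sq_le {ι κ : Type*} (s : Finset ι) (t : Finset κ) (g : ι → κ → ℂ)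
    {β : κ → ℂ} (hβ : ∀ k, ‖β k‖ ≤ 1) :
    ‖∑ k ∈ t, β k * ∑ m ∈ s, g m k‖ ^ 2 ≤
      #t * ∑ m₁ ∈ s, ∑ m₂ ∈ s, ‖∑ k ∈ t, g m₁ k * (starRingEnd ℂ) (g m₂ k)‖ := by
  calc _ ≤ (∑ k ∈ t, ‖∑ m ∈ s, g m k‖) ^ 2 := by
        gcongr
        refine norm_sum_le_of_le _ fun k _ => ?_
        rw [norm_mul]
        exact mul_le_of_le_one_left (norm_nonneg _) (hβ k)
    _ ≤ #t * ∑ k ∈ t, ‖∑ m ∈ s, g m k‖ ^ 2 := sq_sum_le_card_mul_sum_sq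
    _ ≤ _ := by gcongr; exact sum_norm_sum_sq_le s t g

/-- The phase `α m e(y / (m k))` cut off to the region `D < m k ≤ D'`, which for natural numbers
is the region `D / m < k ≤ D' / m`. -/
noncomputable def blockKernel (α : ℕ → ℂ) (y : ℝ) (D D' m k : ℕ) : ℂ :=
  if k ∈ Ioc (D / m) (D' / m) then α m * expi (y / (m * k)) else 0

variable {α β : ℕ → ℂ} {U M D D' : ℕ} {τ Z η y : ℝ}

lemma norm_blockKernel_le_one (hα : ∀ m, ‖α m‖ ≤ 1) (m k : ℕ) :
    ‖blockKernel α y D D' m k‖ ≤ 1 := by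
  unfold blockKernel
  split_ifs
  · rw [norm_mul, norm_expi, mul_one]
    exact hα m
  · simp

lemma sum_mul_sum_eq_sum_mul_sum_blockKernel (hM : 0 < M) (hβU : ∀ k ≤ U, β k = 0) :
    ∑ m ∈ Ioc M (2 * M), α m * ∑ k ∈ Ioc (D / m) (D' / m), β k * expi (y / (m * k)) =
      ∑ k ∈ Ioc U (D' / M), β k * ∑ m ∈ Ioc M (2 * M), blockKernel α y D D' m k := by
  simp only [mul_sum]
  rw [sum_comm (s := Ioc U _)]
  refine sum_congr rfl fun m hm => ?_
  simp only [blockKernel, mul_ite, mul_zero, ← sum_filter]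
  symm
  refine sum_subset_zero_on_sdiff (fun k hk => (mem_filter.1 hk).2) (fun k hk => ?_)
    fun k _ => by ring
  rw [Finset.mem_sdiff, mem_filter, mem_Ioc (a := U)] at hk
  have hkM : k ≤ D' / M :=
    (mem_Ioc.1 hk.1).2.trans (Nat.div_le_div_left (mem_Ioc.1 hm).1.le hM)
  have hkU : k ≤ U := by
    by_contra! hU
    exact hk.2 ⟨⟨hU, hkM⟩, hk.1⟩
  rw [hβU k hkU, zero_mul, mul_zero]

lemma sum_blockKernel_mul_conj {m₁ m₂ : ℕ} (hM : 0 < M) (h₁ : M ≤ m₁) :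
    ∑ k ∈ Ioc U (D' / M), blockKernel α y D D' m₁ k *
        (starRingEnd ℂ) (blockKernel α y D D' m₂ k) =
      α m₁ * (starRingEnd ℂ) (α m₂) *
        ∑ k ∈ Ioc (max U (max (D / m₁) (D / m₂))) (min (D' / m₁) (D' / m₂)),
          expi (y / (m₁ * k) - y / (m₂ * k)) := by
  rw [mul_sum]
  symm
  refine sum_subset_zero_on_sdiff (fun k hk => ?_) (fun k hk => ?_) fun k hk => ?_
  · rw [mem_Ioc] at hk ⊢
    have := Nat.div_le_div_left h₁ hM (a := D')
    omega
  · rw [Finset.mem_sdiff, mem_Ioc, mem_Ioc] at hk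
    simp only [blockKernel, mem_Ioc]
    split_ifs with hk₁ hk₂
    · exact absurd (by omega) hk.2
    all_goals simp
  · rw [mem_Ioc] at hk
    simp only [blockKernel, mem_Ioc]
    rw [if_pos (by omega), if_pos (by omega), sub_eq_add_neg, expi_add, expi_neg, map_mul]
    ring

lemma norm_sum_blockKernel_mul_conj_le (h : SmallSums U τ Z η)
    (hη : 0 ≤ η) (hM : 0 < M) (hD : D' ≤ 2 * (D + 1))
    (hy : 2 * (D' * τ) ≤ y * η) (hy0 : 0 ≤ y) (hyZ : y ≤ Z) (hα : ∀ m, ‖α m‖ ≤ 1)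
    {m₁ m₂ : ℕ} (h₁ : m₁ ∈ Ioc M (2 * M)) (h₂ : m₂ ∈ Ioc M (2 * M)) :
    ‖∑ k ∈ Ioc U (D' / M), blockKernel α y D D' m₁ k *
        (starRingEnd ℂ) (blockKernel α y D D' m₂ k)‖ ≤
      (D' : ℝ) / M * ((if |(m₁ : ℝ) - m₂| ≤ η * M then 1 else 0) + η) := by
  split_ifs with hclose
  · have hcard : (#(Ioc U (D' / M)) : ℝ) ≤ D' / M := by
      refine le_trans ?_ (Nat.cast_div_le (m := D') (n := M))
      rw [Nat.card_Ioc]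
      exact_mod_cast Nat.sub_le _ _
    calc _ ≤ ∑ _k ∈ Ioc U (D' / M), (1 : ℝ) := by
          refine norm_sum_le_of_le _ fun k _ => ?_
          rw [norm_mul, Complex.norm_conj]
          exact mul_le_one₀ (norm_blockKernel_le_one hα _ _) (norm_nonneg _)
            (norm_blockKernel_le_one hα _ _)
      _ = #(Ioc U (D' / M)) := by simp
      _ ≤ D' / M * 1 := by rwa [mul_one]
      _ ≤ _ := by gcongr; linarith
  · rw [zero_add, sum_blockKernel_mul_conj hM (mem_Ioc.1 h₁).1.le, norm_mul, norm_mul,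
      Complex.norm_conj]
    exact (mul_le_of_le_one_left (norm_nonneg _) (mul_le_one₀ (hα _) (norm_nonneg _) (hα _))).trans
      (h.norm_correlation_le hη hM hD hy hy0 hyZ h₁ h₂ (not_le.1 hclose).le)

lemma sum_norm_sum_blockKernel_mul_conj_le (h : SmallSums U τ Z η)
    (hM : 0 < M) (hMη : 1 ≤ η * M) (hD : D' ≤ 2 * (D + 1))
    (hy : 2 * (D' * τ) ≤ y * η) (hy0 : 0 ≤ y) (hyZ : y ≤ Z) (hα : ∀ m, ‖α m‖ ≤ 1) :
    ∑ m₁ ∈ Ioc M (2 * M), ∑ m₂ ∈ Ioc M (2 * M),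
        ‖∑ k ∈ Ioc U (D' / M), blockKernel α y D D' m₁ k *
          (starRingEnd ℂ) (blockKernel α y D D' m₂ k)‖ ≤
      (D' : ℝ) / M * (M * (4 * (η * M))) := by
  have hη : 0 ≤ η := nonneg_of_mul_nonneg_left (zero_le_one.trans hMη) (Nat.cast_pos.2 hM)
  have hcard : #(Ioc M (2 * M)) = M := by
    rw [Nat.card_Ioc]
    omega
  calc _ ≤ ∑ m₁ ∈ Ioc M (2 * M), (D' : ℝ) / M * (4 * (η * M)) := by
        refine sum_le_sum fun m₁ h₁ => ?_
        refine (sum_le_sum fun m₂ h₂ =>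
          norm_sum_blockKernel_mul_conj_le h hη hM hD hy hy0 hyZ hα h₁ h₂).trans ?_
        rw [← mul_sum, sum_add_distrib, sum_boole, sum_const, hcard, nsmul_eq_mul]
        gcongr
        linarith [card_filter_abs_sub_le (Ioc M (2 * M)) m₁ (zero_le_one.trans hMη)]
    _ = _ := by
        rw [sum_const, hcard, nsmul_eq_mul]
        ring

theorem SmallSums.norm_bilinear_block_le (h : SmallSums U τ Z η)
    (hM : 0 < M) (hMη : 1 ≤ η * M) (hD : D' ≤ 2 * (D + 1))
    (hy : 2 * (D' * τ) ≤ y * η) (hy0 : 0 ≤ y) (hyZ : y ≤ Z) (hα : ∀ m, ‖α m‖ ≤ 1)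
    (hβ : ∀ k, ‖β k‖ ≤ 1) (hβU : ∀ k ≤ U, β k = 0) :
    ‖∑ m ∈ Ioc M (2 * M), α m * ∑ k ∈ Ioc (D / m) (D' / m), β k * expi (y / (m * k))‖ ≤
      2 * D' * √η := by
  have hη : 0 ≤ η := nonneg_of_mul_nonneg_left (zero_le_one.trans hMη) (Nat.cast_pos.2 hM)
  have hcard : (#(Ioc U (D' / M)) : ℝ) ≤ D' / M := by
    refine le_trans ?_ (Nat.cast_div_le (m := D') (n := M))
    rw [Nat.card_Ioc]
    exact_mod_cast Nat.sub_le _ _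
  rw [sum_mul_sum_eq_sum_mul_sum_blockKernel hM hβU,
    ← sq_le_sq₀ (norm_nonneg _) (by positivity)]
  calc _ ≤ _ := norm_sum_mul_sum_sq_le _ _ _ hβ
    _ ≤ (D' : ℝ) / M * ((D' : ℝ) / M * (M * (4 * (η * M)))) := by
        gcongr
        exact sum_norm_sum_blockKernel_mul_conj_le h hM hMη hD hy hy0 hyZ hα
    _ = (2 * D') ^ 2 * η := by field_simp; ring
    _ = _ := by rw [mul_pow _ (√η), Real.sq_sqrt hη]

end BilinearBlock

open scoped ArithmeticFunction.Moebius ArithmeticFunction.zeta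

section Convolution

lemma sum_Ioc_mul_apply {R : Type*} [Semiring R] (f g : ArithmeticFunction R) (F : ℕ → R)
    (D D' : ℕ) :
    ∑ n ∈ Ioc D D', (f * g) n * F n =
      ∑ a ∈ Ioc 0 D', f a * ∑ b ∈ Ioc (D / a) (D' / a), g b * F (a * b) := by
  simp only [ArithmeticFunction.mul_apply, sum_mul, mul_sum]
  rw [sum_sigma', sum_sigma']
  refine sum_bij' (fun p _ => ⟨p.2.1, p.2.2⟩) (fun p _ => ⟨p.1 * p.2, (p.1, p.2)⟩)
    ?_ ?_ ?_ (fun _ _ => rfl) ?_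
  · rintro ⟨n, a, b⟩ hp
    simp only [mem_sigma, mem_Ioc, Nat.mem_divisorsAntidiagonal] at hp ⊢
    obtain ⟨⟨hD, hD'⟩, rfl, hab⟩ := hp
    have ha : 0 < a := Nat.pos_of_ne_zero (left_ne_zero_of_mul hab)
    have hb : 0 < b := Nat.pos_of_ne_zero (right_ne_zero_of_mul hab)
    rw [Nat.div_lt_iff_lt_mul ha, Nat.le_div_iff_mul_le ha, mul_comm b]
    exact ⟨⟨ha, (Nat.le_mul_of_pos_right a hb).trans hD'⟩, hD, hD'⟩
  · rintro ⟨a, b⟩ hp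
    simp only [mem_sigma, mem_Ioc, Nat.mem_divisorsAntidiagonal] at hp ⊢
    obtain ⟨⟨ha, -⟩, hD, hD'⟩ := hp
    rw [Nat.div_lt_iff_lt_mul ha, mul_comm] at hD
    rw [Nat.le_div_iff_mul_le ha, mul_comm] at hD'
    exact ⟨⟨hD, hD'⟩, trivial, (Nat.zero_le D |>.trans_lt hD).ne'⟩
  all_goals
    rintro ⟨n, a, b⟩ hp
    simp only [mem_sigma, Nat.mem_divisorsAntidiagonal] at hp
    obtain ⟨-, rfl, -⟩ := hp
    simp only [mul_assoc]

lemma sum_Ioc_inv_le (N : ℕ) : ∑ n ∈ Ioc 0 N, (n : ℝ)⁻¹ ≤ 1 + log N := by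
  have h := harmonic_le_one_add_log N
  rw [harmonic_eq_sum_Icc] at h
  push_cast at h
  exact h

lemma norm_sum_mul_le_mul_one_add_log {N : ℕ} {c G : ℕ → ℂ} {B : ℝ} (hB : 0 ≤ B)
    (hc : ∀ a, ‖c a‖ ≤ 1) (hG : ∀ a ∈ Ioc 0 N, c a ≠ 0 → ‖G a‖ ≤ B / a) :
    ‖∑ a ∈ Ioc 0 N, c a * G a‖ ≤ B * (1 + log N) := by
  calc _ ≤ ∑ a ∈ Ioc 0 N, B * (a : ℝ)⁻¹ := by
        refine norm_sum_le_of_le _ fun a ha => ?_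
        rcases eq_or_ne (c a) 0 with hca | hca
        · rw [hca, zero_mul, norm_zero]
          positivity
        · rw [norm_mul, ← div_eq_mul_inv]
          exact (mul_le_of_le_one_left (norm_nonneg _) (hc a)).trans (hG a ha hca)
    _ ≤ _ := by
        rw [← mul_sum]
        gcongr
        exact sum_Ioc_inv_le N

end Convolution

section Vaughan

/-- The Möbius function restricted to `n ≤ U`, used in Vaughan's identity. -/
noncomputable def moebiusLow (U : ℕ) : ArithmeticFunction ℂ :=
  ⟨fun n => if n ≤ U then (μ n : ℂ) else 0, by simp⟩

/-- The Möbius function restricted to `n > U`, used in Vaughan's identity. -/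
noncomputable def moebiusHigh (U : ℕ) : ArithmeticFunction ℂ :=
  ⟨fun n => if n ≤ U then 0 else (μ n : ℂ), by simp⟩

variable {U n : ℕ}

lemma norm_moebius_le_one (n : ℕ) : ‖(μ n : ℂ)‖ ≤ 1 := by
  rw [Complex.norm_intCast]
  exact_mod_cast ArithmeticFunction.abs_moebius_le_one

lemma norm_moebiusLow_le_one (U n : ℕ) : ‖moebiusLow U n‖ ≤ 1 := by
  simp only [moebiusLow, ArithmeticFunction.coe_mk]
  split_ifs
  · exact norm_moebius_le_one n
  · simp

lemma norm_moebiusHigh_le_one (U n : ℕ) : ‖moebiusHigh U n‖ ≤ 1 := by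
  simp only [moebiusHigh, ArithmeticFunction.coe_mk]
  split_ifs
  · simp
  · exact norm_moebius_le_one n

lemma moebiusLow_eq_zero (h : U < n) : moebiusLow U n = 0 := if_neg (not_le.2 h)

lemma moebiusHigh_eq_zero (h : n ≤ U) : moebiusHigh U n = 0 := if_pos h

lemma le_of_moebiusLow_ne_zero (h : moebiusLow U n ≠ 0) : n ≤ U :=
  not_lt.1 (mt moebiusLow_eq_zero h)

lemma moebiusLow_add_moebiusHigh (U : ℕ) :
    moebiusLow U + moebiusHigh U = (μ : ArithmeticFunction ℂ) := by
  ext k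
  rw [ArithmeticFunction.add_apply, ArithmeticFunction.intCoe_apply]
  simp only [moebiusLow, moebiusHigh, ArithmeticFunction.coe_mk]
  split_ifs <;> simp

/- Vaughan's identity `μ + μ_≤ * μ_≤ * ζ = ζ * μ_> * μ_> + 2 μ_≤`, evaluated beyond `U`. -/
theorem moebius_eq_vaughan (hn : U < n) :
    (μ n : ℂ) = ((ζ : ArithmeticFunction ℂ) * (moebiusHigh U * moebiusHigh U)) n -
      (moebiusLow U * (moebiusLow U * (ζ : ArithmeticFunction ℂ))) n := by
  have hinv : (ζ : ArithmeticFunction ℂ) * (μ : ArithmeticFunction ℂ) = 1 :=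
    ArithmeticFunction.coe_zeta_mul_coe_moebius
  have hvaughan : (μ : ArithmeticFunction ℂ) + moebiusLow U * (moebiusLow U * ζ) =
      ζ * (moebiusHigh U * moebiusHigh U) + 2 * moebiusLow U := by
    rw [eq_sub_of_add_eq' (moebiusLow_add_moebiusHigh U)]
    linear_combination (2 * moebiusLow U - μ) * hinv
  have happly := congrArg (fun f : ArithmeticFunction ℂ => f n) hvaughan
  simp only [two_mul, ArithmeticFunction.add_apply, moebiusLow_eq_zero hn, add_zero,
    ArithmeticFunction.intCoe_apply] at happly
  linear_combination happly

end Vaughan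

namespace SmallSums

variable {U D D' J : ℕ} {τ Z η y : ℝ}

lemma norm_bilinear_sum_Ioc_le (h : SmallSums U τ Z η) (hU : 0 < U) (hUη : 1 ≤ η * U)
    (hD : D' ≤ 2 * (D + 1)) (hy : 2 * (D' * τ) ≤ y * η) (hy0 : 0 ≤ y) (hyZ : y ≤ Z)
    {α β : ℕ → ℂ} (hα : ∀ m, ‖α m‖ ≤ 1) (hβ : ∀ k, ‖β k‖ ≤ 1) (hβU : ∀ k ≤ U, β k = 0) (i : ℕ) :
    ‖∑ m ∈ Ioc U (2 ^ i * U), α m * ∑ k ∈ Ioc (D / m) (D' / m), β k * expi (y / (m * k))‖ ≤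
      i * (2 * D' * √η) := by
  have hη : 0 ≤ η := nonneg_of_mul_nonneg_left (zero_le_one.trans hUη) (Nat.cast_pos.2 hU)
  induction i with
  | zero => simp
  | succ i ih =>
    have hle : U ≤ 2 ^ i * U := Nat.le_mul_of_pos_left U Nat.one_le_two_pow
    have hblock := h.norm_bilinear_block_le (M := 2 ^ i * U) (by positivity)
      (hUη.trans (by gcongr)) hD hy hy0 hyZ hα hβ hβU
    rw [pow_succ', mul_assoc,
      ← sum_Ioc_consecutive _ hle (by omega : 2 ^ i * U ≤ 2 * (2 ^ i * U))]
    refine (norm_add_le_of_le ih hblock).trans_eq ?_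
    push_cast
    ring

lemma norm_bilinear_sum_le (h : SmallSums U τ Z η) (hU : 0 < U) (hUη : 1 ≤ η * U)
    (hD : D' ≤ 2 * (D + 1)) (hy : 2 * (D' * τ) ≤ y * η) (hy0 : 0 ≤ y) (hyZ : y ≤ Z)
    (hJ : D' ≤ 2 ^ J) {α β : ℕ → ℂ} (hα : ∀ m, ‖α m‖ ≤ 1) (hβ : ∀ k, ‖β k‖ ≤ 1)
    (hαU : ∀ m ≤ U, α m = 0) (hβU : ∀ k ≤ U, β k = 0) :
    ‖∑ m ∈ Ioc 0 D', α m * ∑ k ∈ Ioc (D / m) (D' / m), β k * expi (y / (m * k))‖ ≤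
      J * (2 * D' * √η) := by
  have hDJ : D' ≤ 2 ^ J * U := hJ.trans (Nat.le_mul_of_pos_right _ hU)
  have hUJ : U ≤ 2 ^ J * U := Nat.le_mul_of_pos_left U Nat.one_le_two_pow
  rw [sum_subset (Ioc_subset_Ioc_right hDJ) fun m hm hm' => ?_,
    ← sum_Ioc_consecutive _ (Nat.zero_le U) hUJ, sum_eq_zero fun m hm => ?_, zero_add]
  · exact h.norm_bilinear_sum_Ioc_le hU hUη hD hy hy0 hyZ hα hβ hβU J
  · rw [hαU m (mem_Ioc.1 hm).2, zero_mul]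
  · rw [mem_Ioc] at hm hm'
    rw [Nat.div_eq_of_lt (by omega : D' < m), Ioc_eq_empty (by simp), sum_empty, mul_zero]

lemma norm_typeII_le (h : SmallSums U τ Z η) (hτ : 0 ≤ τ) (hU : 0 < U) (hUη : 1 ≤ η * U)
    (hD : D' ≤ 2 * (D + 1)) (hy : 2 * (D' * τ) ≤ y * η) (hy0 : 0 ≤ y) (hyZ : y ≤ Z)
    (hJ : D' ≤ 2 ^ J) :
    ‖∑ n ∈ Ioc D D', ((ζ : ArithmeticFunction ℂ) * (moebiusHigh U * moebiusHigh U)) n *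
      expi (y / n)‖ ≤ J * (2 * D' * √η) * (1 + log D') := by
  rw [sum_Ioc_mul_apply]
  refine norm_sum_mul_le_mul_one_add_log (by positivity) (fun c => ?_) fun c hc _ => ?_
  · rw [ArithmeticFunction.natCoe_apply, ArithmeticFunction.zeta_apply]
    split_ifs <;> simp
  have hc0 : 0 < c := (mem_Ioc.1 hc).1
  have hc1 : (1 : ℝ) ≤ c := by exact_mod_cast hc0
  have hcast : ((D' / c : ℕ) : ℝ) ≤ D' / c := Nat.cast_div_le
  have hphase (m k : ℕ) : y / ((c * (m * k) : ℕ) : ℝ) = y / c / (m * k) := by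
    push_cast
    rw [div_div]
  have hyc : 2 * (((D' / c : ℕ) : ℝ) * τ) ≤ y / c * η := by
    calc 2 * (((D' / c : ℕ) : ℝ) * τ) ≤ 2 * ((D' / c : ℝ) * τ) := by gcongr
      _ = 2 * (D' * τ) / c := by ring
      _ ≤ y * η / c := by gcongr
      _ = _ := by ring
  rw [sum_Ioc_mul_apply]
  simp only [hphase]
  calc _ ≤ (J : ℝ) * (2 * (D' / c : ℕ) * √η) :=
        h.norm_bilinear_sum_le hU hUη (div_le_two_mul_div_add_one hc0 hD) hyc (by positivity)
          ((div_le_self hy0 hc1).trans hyZ) ((Nat.div_le_self _ _).trans hJ)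
          (norm_moebiusHigh_le_one U) (norm_moebiusHigh_le_one U)
          (fun _ => moebiusHigh_eq_zero) fun _ => moebiusHigh_eq_zero
    _ ≤ (J : ℝ) * (2 * (D' / c) * √η) := by gcongr
    _ = _ := by ring

lemma norm_sum_zeta_mul_expi_le (h : SmallSums U τ Z η) (hτ : 0 ≤ τ) (hη : 0 ≤ η)
    (hD : D' ≤ 2 * (D + 1)) (hy : D' * τ ≤ y) (hyZ : y ≤ Z) {c : ℕ} (hc : 0 < c)
    (hcD : U * c ≤ D) :
    ‖∑ k ∈ Ioc (D / c) (D' / c), (ζ : ArithmeticFunction ℂ) k *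
      expi (y / ((c * k : ℕ) : ℝ))‖ ≤ D' * η / c := by
  have hc1 : (1 : ℝ) ≤ c := by exact_mod_cast hc
  have hcast : ((D' / c : ℕ) : ℝ) ≤ D' / c := Nat.cast_div_le
  have hphase : ∀ k ∈ Ioc (D / c) (D' / c), (ζ : ArithmeticFunction ℂ) k *
      expi (y / ((c * k : ℕ) : ℝ)) = expi (y / c / k) := by
    intro k hk
    have hk0 : k ≠ 0 := (Nat.zero_le _ |>.trans_lt (mem_Ioc.1 hk).1).ne'
    rw [ArithmeticFunction.natCoe_apply, ArithmeticFunction.zeta_apply_ne hk0, Nat.cast_one,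
      one_mul, div_div, Nat.cast_mul]
  rw [sum_congr rfl hphase]
  calc _ ≤ ((D' / c : ℕ) : ℝ) * η := by
        refine h _ _ _ ((Nat.le_div_iff_mul_le hc).2 hcD) (div_le_two_mul_div_add_one hc hD) ?_ ?_
        · calc _ ≤ (D' : ℝ) / c * τ := by gcongr
            _ = D' * τ / c := by ring
            _ ≤ _ := by gcongr
        · exact (div_le_self (le_trans (by positivity) hy) hc1).trans hyZ
    _ ≤ D' / c * η := by gcongr
    _ = _ := by ring

lemma norm_typeI_le (h : SmallSums U τ Z η) (hτ : 0 ≤ τ)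
    (hη : 0 ≤ η) (hD : D' ≤ 2 * (D + 1)) (hUD : U ^ 3 ≤ D) (hy : D' * τ ≤ y) (hyZ : y ≤ Z) :
    ‖∑ n ∈ Ioc D D', (moebiusLow U * (moebiusLow U * (ζ : ArithmeticFunction ℂ))) n *
      expi (y / n)‖ ≤ D' * η * (1 + log D') ^ 2 := by
  rw [sum_Ioc_mul_apply, sq, ← mul_assoc]
  refine norm_sum_mul_le_mul_one_add_log
    (mul_nonneg (by positivity) (add_nonneg zero_le_one (Real.log_natCast_nonneg _)))
    (norm_moebiusLow_le_one U) fun a ha haU => ?_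
  have ha0 : 0 < a := (mem_Ioc.1 ha).1
  rw [sum_Ioc_mul_apply]
  calc _ ≤ D' * η / a * (1 + log (D' / a : ℕ)) := by
        refine norm_sum_mul_le_mul_one_add_log (by positivity) (norm_moebiusLow_le_one U)
          fun b hb hbU => ?_
        have hb0 : 0 < b := (mem_Ioc.1 hb).1
        have habD : U * (a * b) ≤ D := by
          calc U * (a * b) ≤ U * (U * U) := by
                gcongr
                · exact le_of_moebiusLow_ne_zero haU
                · exact le_of_moebiusLow_ne_zero hbU
            _ = U ^ 3 := by ring
            _ ≤ D := hUD
        simpa only [Nat.div_div_eq_div_mul, mul_assoc, div_div, Nat.cast_mul] using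
          h.norm_sum_zeta_mul_expi_le hτ hη hD hy hyZ (Nat.mul_pos ha0 hb0) habD
    _ ≤ D' * η / a * (1 + log D') := by
        gcongr
        · exact_mod_cast Nat.div_pos (mem_Ioc.1 ha).2 ha0
        · exact Nat.div_le_self _ _
    _ = _ := by ring

theorem norm_sum_moebius_expi_le (h : SmallSums U τ Z η) (hτ : 0 ≤ τ)
    (hη1 : η ≤ 1) (hU : 0 < U) (hUη : 1 ≤ η * U) (hD : D' ≤ 2 * (D + 1))
    (hUD : U ^ 3 ≤ D) (hy : 2 * (D' * τ) ≤ y * η) (hy0 : 0 ≤ y) (hyZ : y ≤ Z) (hJ : D' ≤ 2 ^ J) :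
    ‖∑ n ∈ Ioc D D', (μ n : ℂ) * expi (y / n)‖ ≤
      J * (2 * D' * √η) * (1 + log D') + D' * η * (1 + log D') ^ 2 := by
  have hη : 0 ≤ η := nonneg_of_mul_nonneg_left (zero_le_one.trans hUη) (Nat.cast_pos.2 hU)
  have hUD1 : U ≤ D := (le_self_pow₀ hU three_ne_zero).trans hUD
  have hy1 : D' * τ ≤ y := by
    have : 0 ≤ (D' : ℝ) * τ := by positivity
    linarith [mul_le_of_le_one_right hy0 hη1]
  rw [sum_congr rfl fun n hn => by
    rw [moebius_eq_vaughan (hUD1.trans_lt (mem_Ioc.1 hn).1), sub_mul], sum_sub_distrib]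
  exact norm_sub_le_of_le (h.norm_typeII_le hτ hU hUη hD hy hy0 hyZ hJ)
    (h.norm_typeI_le hτ hη hD hUD hy1 hyZ)

end SmallSums

section Sawtooth

/-- The sawtooth function `{t} - 1 / 2`, through which the fractional parts in the totient sum
enter. Unlike the usual convention it does not vanish at integers. -/
noncomputable def sawtooth (t : ℝ) : ℝ := Int.fract t - 1 / 2

/-- The periodic primitive of the sawtooth function that has mean zero. -/
noncomputable def sawPrim (t : ℝ) : ℝ := (Int.fract t ^ 2 - Int.fract t + 1 / 6) / 2

lemma abs_sawtooth_le_one (t : ℝ) : |sawtooth t| ≤ 1 := by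
  rw [sawtooth, abs_le]
  constructor <;> linarith [Int.fract_nonneg t, Int.fract_lt_one t]

variable {δ : ℝ}

lemma sawPrim_add_sub_le (hδ0 : 0 ≤ δ) (hδ1 : δ < 1) (t : ℝ) :
    sawPrim (t + δ) - sawPrim t ≤ δ * sawtooth t + δ ^ 2 / 2 := by
  have h0 := Int.fract_nonneg t
  have h1 := Int.fract_lt_one t
  have ht := Int.fract_add_floor t
  simp only [sawPrim, sawtooth]
  rcases lt_or_ge (Int.fract t + δ) 1 with h | h
  · rw [(Int.fract_eq_iff.2 ⟨by linarith, h, ⌊t⌋, by linarith⟩ :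
      Int.fract (t + δ) = Int.fract t + δ)]
    nlinarith
  · rw [(Int.fract_eq_iff.2 ⟨by linarith, by linarith, ⌊t⌋ + 1, by push_cast; linarith⟩ :
      Int.fract (t + δ) = Int.fract t + δ - 1)]
    nlinarith

lemma le_sawPrim_sub_sub (hδ0 : 0 ≤ δ) (hδ1 : δ < 1) (t : ℝ) :
    δ * sawtooth t - δ ^ 2 / 2 ≤ sawPrim t - sawPrim (t - δ) := by
  have h0 := Int.fract_nonneg t
  have h1 := Int.fract_lt_one t
  have ht := Int.fract_add_floor t
  simp only [sawPrim, sawtooth]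
  rcases le_or_gt 0 (Int.fract t - δ) with h | h
  · rw [(Int.fract_eq_iff.2 ⟨h, by linarith, ⌊t⌋, by linarith⟩ :
      Int.fract (t - δ) = Int.fract t - δ)]
    nlinarith
  · rw [(Int.fract_eq_iff.2 ⟨by linarith, by linarith, ⌊t⌋ - 1, by push_cast; linarith⟩ :
      Int.fract (t - δ) = Int.fract t - δ + 1)]
    nlinarith

/- The primitive is convex up to an error `O(δ ^ 2)`, so that the sawtooth lies between its two
one-sided difference quotients; the distance between these is a second difference. -/
lemma abs_sawtooth_sub_le (hδ0 : 0 < δ) (hδ1 : δ < 1) (t : ℝ) :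
    |sawtooth t - (sawPrim (t + δ) - sawPrim t) / δ| ≤
      2 * δ + (2 * sawPrim t - sawPrim (t - δ) - sawPrim (t + δ)) / δ := by
  have hright : (sawPrim (t + δ) - sawPrim t) / δ ≤ sawtooth t + δ / 2 := by
    rw [div_le_iff₀ hδ0]
    linarith [sawPrim_add_sub_le hδ0.le hδ1 t]
  have hleft : sawtooth t - δ / 2 ≤ (sawPrim t - sawPrim (t - δ)) / δ := by
    rw [le_div_iff₀ hδ0]
    linarith [le_sawPrim_sub_sub hδ0.le hδ1 t]
  have hsecond : (2 * sawPrim t - sawPrim (t - δ) - sawPrim (t + δ)) / δ =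
      (sawPrim t - sawPrim (t - δ)) / δ - (sawPrim (t + δ) - sawPrim t) / δ := by ring
  rw [hsecond, abs_le]
  constructor <;> linarith

lemma eval_map_bernoulli_two (x : ℝ) :
    (Polynomial.map (algebraMap ℚ ℝ) (Polynomial.bernoulli 2)).eval x = x ^ 2 - x + 1 / 6 := by
  rw [Polynomial.bernoulli]
  simp [sum_range_succ, Polynomial.eval_monomial, bernoulli_one,
    bernoulli_eq_bernoulli'_of_ne_one, bernoulli'_two]
  ring

lemma hasSum_sawPrim (t : ℝ) :
    HasSum (fun n : ℕ => 1 / (n : ℝ) ^ 2 * cos (2 * π * (n * t))) (2 * π ^ 2 * sawPrim t) := by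
  have hfourier := hasSum_one_div_nat_pow_mul_cos (k := 1) one_ne_zero (x := Int.fract t)
    ⟨Int.fract_nonneg t, (Int.fract_lt_one t).le⟩
  rw [mul_one, eval_map_bernoulli_two] at hfourier
  convert! hfourier using 1
  · funext n
    have hperiod : 2 * π * (n * t) = 2 * π * n * Int.fract t + ((n * ⌊t⌋ : ℤ) : ℝ) * (2 * π) := by
      nth_rewrite 1 [← Int.fract_add_floor t]
      push_cast
      ring
    rw [hperiod, Real.cos_add_int_mul_two_pi]
  · rw [sawPrim, Nat.factorial_two]
    push_cast
    ring

end Sawtooth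

section Truncation

variable {ι : Type*} {s : Finset ι} {w : ι → ℝ}

lemma norm_sum_mul_expi_le_card (hw : ∀ d, |w d| ≤ 1) (t : ι → ℝ) :
    ‖∑ d ∈ s, (w d : ℂ) * expi (t d)‖ ≤ #s := by
  refine (norm_sum_le_of_le (n := fun _ => (1 : ℝ)) _ fun d _ => ?_).trans (by simp)
  rw [norm_mul, norm_expi, mul_one, Complex.norm_real]
  exact hw d

lemma abs_sum_mul_cos_le (s : Finset ι) (w t : ι → ℝ) (h u : ℝ) :
    |∑ d ∈ s, w d * cos (2 * π * (h * (t d + u)))| ≤ ‖∑ d ∈ s, (w d : ℂ) * expi (h * t d)‖ := by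
  have hre : ∑ d ∈ s, w d * cos (2 * π * (h * (t d + u))) =
      ((∑ d ∈ s, (w d : ℂ) * expi (h * t d)) * expi (h * u)).re := by
    rw [sum_mul, Complex.re_sum]
    refine sum_congr rfl fun d _ => ?_
    rw [mul_assoc (w d : ℂ), ← expi_add, ← mul_add, Complex.re_ofReal_mul, expi_eq_exp,
      Complex.exp_ofReal_mul_I_re]
  rw [hre]
  refine (Complex.abs_re_le_norm _).trans_eq ?_
  rw [norm_mul, norm_expi, mul_one]

lemma one_div_sq_mul_le {x E N H : ℝ} {h : ℕ} (hH : 0 < H) (hE : 0 ≤ E) (hN : 0 ≤ N)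
    (hxN : x ≤ N) (hxE : 1 ≤ h → (h : ℝ) ≤ H → x ≤ E) :
    1 / (h : ℝ) ^ 2 * x ≤ E * (1 / (h : ℝ) ^ 2) + N / √H * (1 / (h : ℝ) ^ ((3 : ℝ) / 2)) := by
  rcases Nat.eq_zero_or_pos h with rfl | hh
  · norm_num
  have hh0 : (0 : ℝ) < h := by exact_mod_cast hh
  rcases le_or_gt (h : ℝ) H with hle | hlt
  · calc _ ≤ 1 / (h : ℝ) ^ 2 * E := by gcongr; exact hxE hh hle
      _ = E * (1 / (h : ℝ) ^ 2) := by ring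
      _ ≤ _ := le_add_of_nonneg_right (by positivity)
  · have hsplit : (h : ℝ) ^ 2 = √h * (h : ℝ) ^ ((3 : ℝ) / 2) := by
      rw [Real.sqrt_eq_rpow, ← Real.rpow_add hh0, ← Real.rpow_natCast]
      norm_num
    calc _ ≤ 1 / (h : ℝ) ^ 2 * N := by gcongr
      _ = N / √h * (1 / (h : ℝ) ^ ((3 : ℝ) / 2)) := by rw [hsplit]; field_simp
      _ ≤ N / √H * (1 / (h : ℝ) ^ ((3 : ℝ) / 2)) := by gcongr
      _ ≤ _ := le_add_of_nonneg_left (by positivity)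

lemma exists_abs_sum_sawPrim_le (ι : Type*) : ∃ C : ℝ, 0 < C ∧
    ∀ (s : Finset ι) (w t : ι → ℝ) (E N H u : ℝ),
    (∀ d, |w d| ≤ 1) → (#s : ℝ) ≤ N → 0 ≤ E → 0 < H →
    (∀ h : ℕ, 1 ≤ h → (h : ℝ) ≤ H → ‖∑ d ∈ s, (w d : ℂ) * expi (h * t d)‖ ≤ E) →
    |∑ d ∈ s, w d * sawPrim (t d + u)| ≤ C * (E + N / √H) := by
  set Z₁ := ∑' n : ℕ, 1 / (n : ℝ) ^ 2
  set Z₂ := ∑' n : ℕ, 1 / (n : ℝ) ^ ((3 : ℝ) / 2)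
  have hZ₁ : 0 ≤ Z₁ := tsum_nonneg fun n => by positivity
  have hZ₂ : 0 ≤ Z₂ := tsum_nonneg fun n => by positivity
  refine ⟨Z₁ + Z₂ + 1, by positivity, fun s w t E N H u hw hN hE hH hF => ?_⟩
  have hN0 : 0 ≤ N := (Nat.cast_nonneg _).trans hN
  have hfourier := hasSum_sum fun d (_ : d ∈ s) => (hasSum_sawPrim (t d + u)).mul_left (w d)
  have hmajorant : HasSum
      (fun h : ℕ => E * (1 / (h : ℝ) ^ 2) + N / √H * (1 / (h : ℝ) ^ ((3 : ℝ) / 2)))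
      (E * Z₁ + N / √H * Z₂) :=
    ((Real.summable_one_div_nat_pow.2 (by norm_num)).hasSum.mul_left _).add
      ((Real.summable_one_div_nat_rpow.2 (by norm_num)).hasSum.mul_left _)
  have hbound := hfourier.norm_le_of_bounded hmajorant fun h => by
    simp only [mul_left_comm (w _) (1 / (h : ℝ) ^ 2)]
    rw [← mul_sum, norm_mul, Real.norm_of_nonneg (by positivity : 0 ≤ 1 / (h : ℝ) ^ 2),
      Real.norm_eq_abs]
    exact one_div_sq_mul_le hH hE hN0
      ((abs_sum_mul_cos_le s w t h u).trans ((norm_sum_mul_expi_le_card hw _).trans hN))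
      fun hh hhH => (abs_sum_mul_cos_le s w t h u).trans (hF h hh hhH)
  simp only [mul_left_comm (w _) (2 * π ^ 2)] at hbound
  rw [← mul_sum, norm_mul, Real.norm_of_nonneg (by positivity), Real.norm_eq_abs] at hbound
  have hNH : 0 ≤ N / √H := by positivity
  calc |∑ d ∈ s, w d * sawPrim (t d + u)| ≤ 2 * π ^ 2 * |∑ d ∈ s, w d * sawPrim (t d + u)| :=
        le_mul_of_one_le_left (abs_nonneg _) (by nlinarith [Real.pi_gt_three])
    _ ≤ _ := hbound
    _ ≤ _ := by nlinarith [mul_nonneg hE hZ₂, mul_nonneg hNH hZ₁]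

lemma abs_sum_mul_sawtooth_le_of_abs_sum_sawPrim_le {t : ι → ℝ} {N δ B : ℝ}
    (hw : ∀ d, |w d| ≤ 1) (hN : (#s : ℝ) ≤ N) (hδ0 : 0 < δ) (hδ1 : δ < 1)
    (hB : ∀ u, |∑ d ∈ s, sawPrim (t d + u)| ≤ B)
    (hBw : ∀ u, |∑ d ∈ s, w d * sawPrim (t d + u)| ≤ B) :
    |∑ d ∈ s, w d * sawtooth (t d)| ≤ 2 * δ * N + 6 * B / δ := by
  set q : ι → ℝ := fun d => (sawPrim (t d + δ) - sawPrim (t d + 0)) / δ with hq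
  have happrox : |∑ d ∈ s, w d * (sawtooth (t d) - q d)| ≤ 2 * δ * N + 4 * B / δ := by
    calc _ ≤ ∑ d ∈ s, (2 * δ + (2 * sawPrim (t d + 0) - sawPrim (t d + -δ) -
          sawPrim (t d + δ)) / δ) := by
          refine (abs_sum_le_sum_abs _ _).trans (sum_le_sum fun d _ => ?_)
          simp only [hq, add_zero]
          rw [abs_mul, ← sub_eq_add_neg]
          exact (mul_le_of_le_one_left (abs_nonneg _) (hw d)).trans
            (abs_sawtooth_sub_le hδ0 hδ1 (t d))
      _ = 2 * δ * #s + (2 * ∑ d ∈ s, sawPrim (t d + 0) - ∑ d ∈ s, sawPrim (t d + -δ) -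
          ∑ d ∈ s, sawPrim (t d + δ)) / δ := by
          rw [sum_add_distrib, sum_const, ← sum_div, sum_sub_distrib, sum_sub_distrib, mul_sum,
            nsmul_eq_mul]
          ring
      _ ≤ _ := by
          gcongr
          linarith [(abs_le.1 (hB 0)).2, (abs_le.1 (hB (-δ))).1, (abs_le.1 (hB δ)).1]
  have hquotient : |∑ d ∈ s, w d * q d| ≤ 2 * B / δ := by
    simp only [hq, mul_div_assoc', mul_sub]
    rw [← sum_div, sum_sub_distrib, abs_div, abs_of_pos hδ0]
    gcongr
    linarith [abs_sub (∑ d ∈ s, w d * sawPrim (t d + δ)) (∑ d ∈ s, w d * sawPrim (t d + 0)),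
      hBw δ, hBw 0]
  have hsplit : ∑ d ∈ s, w d * sawtooth (t d) =
      ∑ d ∈ s, w d * (sawtooth (t d) - q d) + ∑ d ∈ s, w d * q d := by
    rw [← sum_add_distrib]
    exact sum_congr rfl fun d _ => by ring
  rw [hsplit]
  exact (abs_add_le _ _).trans ((add_le_add happrox hquotient).trans_eq (by ring))

lemma exists_abs_sum_sawtooth_le (ι : Type*) : ∃ C : ℝ, 0 < C ∧
    ∀ (s : Finset ι) (w t : ι → ℝ) (E N δ H : ℝ),
    (∀ d, |w d| ≤ 1) → (#s : ℝ) ≤ N → 0 ≤ E → 0 < δ → δ < 1 → 0 < H →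
    (∀ h : ℕ, 1 ≤ h → (h : ℝ) ≤ H → ‖∑ d ∈ s, (w d : ℂ) * expi (h * t d)‖ ≤ E) →
    (∀ h : ℕ, 1 ≤ h → (h : ℝ) ≤ H → ‖∑ d ∈ s, expi (h * t d)‖ ≤ E) →
    |∑ d ∈ s, w d * sawtooth (t d)| ≤ C * (N * δ + (E + N / √H) / δ) := by
  obtain ⟨C, hC, hmain⟩ := exists_abs_sum_sawPrim_le ι
  refine ⟨6 * C + 2, by positivity, fun s w t E N δ H hw hN hE hδ0 hδ1 hH hFw hF => ?_⟩
  have hN0 : 0 ≤ N := (Nat.cast_nonneg _).trans hN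
  have hB (u : ℝ) : |∑ d ∈ s, sawPrim (t d + u)| ≤ C * (E + N / √H) := by
    simpa only [one_mul] using hmain s (fun _ => 1) t E N H u (by simp) hN hE hH
      (by simpa only [Complex.ofReal_one, one_mul] using hF)
  calc _ ≤ 2 * δ * N + 6 * (C * (E + N / √H)) / δ :=
        abs_sum_mul_sawtooth_le_of_abs_sum_sawPrim_le hw hN hδ0 hδ1 hB
          fun u => hmain s w t E N H u hw hN hE hH hFw
    _ = 2 * (N * δ) + 6 * C * ((E + N / √H) / δ) := by ring
    _ ≤ (6 * C + 2) * (N * δ) + (6 * C + 2) * ((E + N / √H) / δ) := by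
        gcongr <;> linarith
    _ = _ := by ring

end Truncation

section Cutoff

/-- The threshold `exp (L ^ (2 / 3) * (log L) ^ (4 / 3))` beyond which the sums of `e(X / n)`, with
`log X` of order `L`, exhibit cancellation. -/
noncomputable def cutoff (L : ℝ) : ℕ := ⌈exp (L ^ ((2 : ℝ) / 3) * log L ^ ((4 : ℝ) / 3))⌉₊

variable {L : ℝ}

lemma cutoff_pos (L : ℝ) : 0 < cutoff L := Nat.ceil_pos.2 (exp_pos _)

lemma exp_rpow_le_cutoff (hL : exp 1 ≤ L) : exp (L ^ ((2 : ℝ) / 3)) ≤ cutoff L := by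
  have hL0 : 0 < L := (exp_pos 1).trans_le hL
  have hlog : 1 ≤ log L := (le_log_iff_exp_le hL0).2 hL
  refine (exp_le_exp.2 ?_).trans (Nat.le_ceil _)
  exact le_mul_of_one_le_right (by positivity) (one_le_rpow hlog (by norm_num))

lemma log_cutoff_le (hL : 1 ≤ L) :
    log (cutoff L) ≤ 1 + L ^ ((2 : ℝ) / 3) * log L ^ ((4 : ℝ) / 3) := by
  have hlog := log_nonneg hL
  have hexp : 1 ≤ exp (L ^ ((2 : ℝ) / 3) * log L ^ ((4 : ℝ) / 3)) := one_le_exp (by positivity)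
  have hceil : (cutoff L : ℝ) < exp (L ^ ((2 : ℝ) / 3) * log L ^ ((4 : ℝ) / 3)) + 1 :=
    Nat.ceil_lt_add_one (exp_pos _).le
  rw [log_le_iff_le_exp (by exact_mod_cast cutoff_pos L), exp_add]
  nlinarith [add_one_le_exp (1 : ℝ)]

lemma exp_rpow_div_two_mul_self (L : ℝ) :
    exp (L ^ ((2 : ℝ) / 3) / 2) * exp (L ^ ((2 : ℝ) / 3) / 2) = exp (L ^ ((2 : ℝ) / 3)) := by
  rw [← exp_add, add_halves]

lemma eventually_two_mul_pow_le_exp_rpow (n : ℕ) :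
    ∀ᶠ L : ℝ in atTop, 2 * L ^ n ≤ exp (L ^ ((2 : ℝ) / 3) / 2) := by
  filter_upwards [eventually_mul_log_add_le_rpow_div n (log 2) (by norm_num : (0 : ℝ) < 2 / 3)
    two_pos, eventually_gt_atTop 0] with L hL hL0
  calc 2 * L ^ n = exp (n * log L + log 2) := by
        rw [exp_add, exp_log two_pos, mul_comm (n : ℝ), exp_mul, exp_log hL0, rpow_natCast,
          mul_comm]
    _ ≤ _ := exp_le_exp.2 hL

theorem eventually_smallSums (A : ℕ) : ∀ᶠ L : ℝ in atTop,
    SmallSums (cutoff L) (exp (L ^ ((2 : ℝ) / 3) / 2)) (exp (2 * L)) (1 / L ^ A) := by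
  filter_upwards [eventually_norm_sum_expi_div_le A, eventually_gt_atTop 1] with L hmain hL
  intro X a b ha hb hX hXZ
  rcases le_or_gt b a with hab | hab
  · rw [Ioc_eq_empty (by omega), sum_empty, norm_zero]
    positivity
  have hab' : (a : ℝ) + 1 ≤ b := by exact_mod_cast hab
  have hW : 0 ≤ L ^ ((2 : ℝ) / 3) * log L ^ ((4 : ℝ) / 3) := by
    have := log_pos hL
    positivity
  have hlog : L ^ ((2 : ℝ) / 3) * log L ^ ((4 : ℝ) / 3) ≤ log ((a : ℝ) + 1) := by
    rw [le_log_iff_exp_le (by positivity)]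
    exact (Nat.ceil_le.1 ha).trans (le_add_of_nonneg_right zero_le_one)
  calc _ ≤ ((a : ℝ) + 1) / L ^ A :=
        hmain (a + 1) X a b hab.le le_rfl (by exact_mod_cast hb) (by linarith) (by positivity)
          (hX.trans' (by gcongr)) hXZ
    _ ≤ b / L ^ A := by gcongr
    _ = b * (1 / L ^ A) := by ring

end Cutoff

section MoebiusExpi

variable {L : ℝ} {D : ℕ}

lemma exp_le_two_pow_ceil (L : ℝ) : exp L ≤ 2 ^ ⌈2 * L⌉₊ := by
  rw [← rpow_natCast, rpow_def_of_pos two_pos]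
  refine exp_le_exp.2 ?_
  nlinarith [log_two_gt_d9, Nat.le_ceil (2 * L), (Nat.cast_nonneg ⌈2 * L⌉₊ : (0 : ℝ) ≤ _)]

lemma one_add_log_natCast_le (hL : 1 ≤ L) (hD : (D : ℝ) ≤ exp L) : 1 + log D ≤ 2 * L := by
  rcases Nat.eq_zero_or_pos D with rfl | hD0
  · rw [Nat.cast_zero, log_zero]
    linarith
  · linarith [(log_le_iff_le_exp (by exact_mod_cast hD0)).2 hD]

lemma vaughan_error_le (hL : 16 ≤ L) (hD : (D : ℝ) ≤ exp L) :
    ⌈2 * L⌉₊ * (2 * D * √(1 / L ^ 10)) * (1 + log D) + D * (1 / L ^ 10) * (1 + log D) ^ 2 ≤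
      D / L ^ 2 := by
  have hL0 : 0 < L := by linarith
  have hceil : (⌈2 * L⌉₊ : ℝ) ≤ 3 * L := by
    linarith [Nat.ceil_lt_add_one (mul_nonneg zero_le_two hL0.le)]
  have hlog := one_add_log_natCast_le (by linarith) hD
  have := log_natCast_nonneg D
  have hsqrt : √(1 / L ^ 10) = 1 / L ^ 5 := by
    rw [sqrt_eq_iff_mul_self_eq (by positivity) (by positivity)]
    field_simp
  have hsmall : 12 / L + 4 / L ^ 6 ≤ 1 := by
    calc 12 / L + 4 / L ^ 6 ≤ 12 / 16 + 4 / 16 ^ 6 := by gcongr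
      _ ≤ 1 := by norm_num
  rw [hsqrt]
  calc _ ≤ 3 * L * (2 * D * (1 / L ^ 5)) * (2 * L) + D * (1 / L ^ 10) * (2 * L) ^ 2 := by
        gcongr
    _ = D / L ^ 2 * (12 / L + 4 / L ^ 6) := by field_simp; ring
    _ ≤ D / L ^ 2 := mul_le_of_le_one_right (by positivity) hsmall

theorem eventually_norm_sum_moebius_expi_le : ∀ᶠ L : ℝ in atTop, ∀ (D D' : ℕ) (y : ℝ),
    cutoff L ^ 3 ≤ D → D' ≤ 2 * (D + 1) → (D' : ℝ) ≤ exp L → D' * exp (L ^ ((2 : ℝ) / 3)) ≤ y →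
    y ≤ exp (2 * L) → ‖∑ n ∈ Ioc D D', (μ n : ℂ) * expi (y / n)‖ ≤ D' / L ^ 2 := by
  filter_upwards [eventually_smallSums 10, eventually_two_mul_pow_le_exp_rpow 10,
    eventually_ge_atTop 16] with L hS hexp hL D D' y hUD hD hD' hy hyZ
  have hL0 : 0 < L := by linarith
  have hη1 : 1 / L ^ 10 ≤ 1 := by
    rw [div_le_one (by positivity)]
    exact one_le_pow₀ (by linarith)
  have hUη : 1 ≤ 1 / L ^ 10 * cutoff L := by
    rw [one_div_mul_eq_div, one_le_div (by positivity)]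
    refine le_trans ?_ (exp_rpow_le_cutoff (by linarith [exp_one_lt_d9]))
    rw [← exp_rpow_div_two_mul_self]
    nlinarith [pow_pos hL0 10, one_le_exp (by positivity : 0 ≤ L ^ ((2 : ℝ) / 3) / 2)]
  have hyη : 2 * (D' * exp (L ^ ((2 : ℝ) / 3) / 2)) ≤ y * (1 / L ^ 10) := by
    rw [mul_one_div, le_div_iff₀ (by positivity)]
    calc _ = D' * (exp (L ^ ((2 : ℝ) / 3) / 2) * (2 * L ^ 10)) := by ring
      _ ≤ D' * (exp (L ^ ((2 : ℝ) / 3) / 2) * exp (L ^ ((2 : ℝ) / 3) / 2)) := by gcongr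
      _ ≤ y := by rwa [exp_rpow_div_two_mul_self]
  have hJ : D' ≤ 2 ^ ⌈2 * L⌉₊ := by exact_mod_cast hD'.trans (exp_le_two_pow_ceil L)
  exact (hS.norm_sum_moebius_expi_le (by positivity) hη1 (cutoff_pos L) hUη hD hUD hyη
    (hy.trans' (by positivity)) hyZ hJ).trans (vaughan_error_le hL hD')

end MoebiusExpi

section MoebiusSawtooth

lemma harmonic_range_of_le_pow {L T : ℝ} {D h : ℕ} (hLexp : L ^ 4 ≤ exp L)
    (hD : D * T ≤ exp L) (hh : 1 ≤ h) (hhL : (h : ℝ) ≤ L ^ 4) :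
    D * T ≤ h * exp L ∧ h * exp L ≤ exp (2 * L) := by
  refine ⟨hD.trans (le_mul_of_one_le_left (exp_pos L).le (by exact_mod_cast hh)), ?_⟩
  calc (h : ℝ) * exp L ≤ exp L * exp L := by gcongr; exact hhL.trans hLexp
    _ = exp (2 * L) := by rw [← exp_add, two_mul]

lemma eventually_pow_le_exp (n : ℕ) : ∀ᶠ L : ℝ in atTop, L ^ n ≤ exp L := by
  filter_upwards [(isLittleO_pow_exp_atTop (n := n)).bound one_pos] with L hL
  rw [one_mul, norm_of_nonneg (exp_pos L).le] at hL
  exact (le_norm_self _).trans hL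

theorem exists_eventually_abs_sum_moebius_sawtooth_le : ∃ C : ℝ, 0 < C ∧ ∀ᶠ L : ℝ in atTop,
    ∀ D D' : ℕ, cutoff L ^ 3 ≤ D → D' ≤ 2 * (D + 1) → D' * exp (L ^ ((2 : ℝ) / 3)) ≤ exp L →
    |∑ d ∈ Ioc D D', (μ d : ℝ) * sawtooth (exp L / d)| ≤ C * (D' / L) := by
  obtain ⟨C, hC, hsawtooth⟩ := exists_abs_sum_sawtooth_le ℕ
  refine ⟨3 * C, by positivity, ?_⟩
  filter_upwards [eventually_norm_sum_moebius_expi_le, eventually_smallSums 2,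
    eventually_pow_le_exp 4, eventually_gt_atTop 1] with L hμ hS hpow hL D D' hUD hD hD'
  have hL0 : 0 < L := by linarith
  have hD'exp : (D' : ℝ) ≤ exp L :=
    (le_mul_of_one_le_right (Nat.cast_nonneg _) (one_le_exp (by positivity))).trans hD'
  have hmoebius (h : ℕ) (h1 : 1 ≤ h) (hhL : (h : ℝ) ≤ L ^ 4) :
      ‖∑ d ∈ Ioc D D', ((μ d : ℝ) : ℂ) * expi (h * (exp L / d))‖ ≤ D' / L ^ 2 := by
    obtain ⟨hlow, hhigh⟩ := harmonic_range_of_le_pow hpow hD' h1 hhL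
    simpa only [mul_div_assoc, Complex.ofReal_intCast] using
      hμ D D' (h * exp L) hUD hD hD'exp hlow hhigh
  have hplain (h : ℕ) (h1 : 1 ≤ h) (hhL : (h : ℝ) ≤ L ^ 4) :
      ‖∑ d ∈ Ioc D D', expi (h * (exp L / d))‖ ≤ D' / L ^ 2 := by
    obtain ⟨hlow, hhigh⟩ := harmonic_range_of_le_pow hpow hD' h1 hhL
    have hτ : D' * exp (L ^ ((2 : ℝ) / 3) / 2) ≤ D' * exp (L ^ ((2 : ℝ) / 3)) := by
      gcongr
      exact half_le_self (by positivity)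
    simpa only [mul_div_assoc, mul_one_div] using
      hS (h * exp L) D D' ((Nat.le_self_pow three_ne_zero _).trans hUD) hD (hτ.trans hlow) hhigh
  have hsqrt : √(L ^ 4) = L ^ 2 := by
    rw [show L ^ 4 = (L ^ 2) ^ 2 by ring, sqrt_sq (by positivity)]
  calc _ ≤ C * (D' * (1 / L) + (D' / L ^ 2 + D' / √(L ^ 4)) / (1 / L)) :=
        hsawtooth (Ioc D D') (fun d => μ d) (fun d => exp L / d) _ D' (1 / L) (L ^ 4)
          (fun d => by exact_mod_cast ArithmeticFunction.abs_moebius_le_one)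
          (by rw [Nat.card_Ioc]; exact_mod_cast Nat.sub_le _ _) (by positivity) (by positivity)
          ((div_lt_one hL0).2 hL) (by positivity) hmoebius hplain
    _ = 3 * C * (D' / L) := by
        rw [hsqrt]
        field_simp
        ring

end MoebiusSawtooth

section Dyadic

lemma norm_sum_Ioc_le_of_dyadic {E : Type*} [SeminormedAddCommGroup E] {a : ℕ → E} {A N : ℕ}
    {K : ℝ} (hK : 0 ≤ K)
    (ha : ∀ D D', A ≤ D → D' ≤ 2 * (D + 1) → D' ≤ N → ‖∑ d ∈ Ioc D D', a d‖ ≤ K * D')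
    {D : ℕ} (hAD : A ≤ D) (hDN : D ≤ N) : ‖∑ d ∈ Ioc A D, a d‖ ≤ 2 * K * D := by
  induction D using Nat.strong_induction_on with
  | _ D ih =>
    rcases le_or_gt D (2 * (A + 1)) with hD | hD
    · refine (ha A D le_rfl hD hDN).trans ?_
      rw [mul_assoc]
      exact le_mul_of_one_le_left (by positivity) one_le_two
    · rw [← sum_Ioc_consecutive _ (by omega : A ≤ D / 2) (by omega : D / 2 ≤ D)]
      calc _ ≤ 2 * K * (D / 2 : ℕ) + K * D :=
            norm_add_le_of_le (ih (D / 2) (by omega) (by omega) (by omega))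
              (ha (D / 2) D (by omega) (by omega) hDN)
        _ ≤ 2 * K * (D / 2) + K * D := by gcongr; exact Nat.cast_div_le
        _ = 2 * K * D := by ring

lemma sum_Ioc_div_eq {𝕜 : Type*} [Field 𝕜] [CharZero 𝕜] (a : ℕ → 𝕜) {A N : ℕ} (h : A ≤ N) :
    ∑ d ∈ Ioc A N, a d / d = (∑ d ∈ Ioc A N, a d) / (N + 1) +
      ∑ d ∈ Ioc A N, (∑ e ∈ Ioc A d, a e) * (1 / (d : 𝕜) - 1 / (d + 1)) := by
  induction N, h using Nat.le_induction with
  | base => simp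
  | succ N hN ih =>
    have hN1 : (N : 𝕜) + 1 ≠ 0 := by exact_mod_cast N.succ_ne_zero
    have hN2 : (N : 𝕜) + 1 + 1 ≠ 0 := by exact_mod_cast (N + 1).succ_ne_zero
    rw [sum_Ioc_succ_top (by omega), ih, sum_Ioc_succ_top (b := N) (f := fun d => _ * _) (by omega),
      sum_Ioc_succ_top (by omega)]
    push_cast
    field_simp
    ring

lemma mul_one_div_sub_one_div_add_one_le_inv {d : ℝ} (hd : 0 < d) :
    d * (1 / d - 1 / (d + 1)) ≤ d⁻¹ := by
  rw [show d * (1 / d - 1 / (d + 1)) = (d + 1)⁻¹ by field_simp; ring]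
  gcongr
  linarith

lemma abs_sum_Ioc_div_le {a : ℕ → ℝ} {A N : ℕ} {K : ℝ} (hK : 0 ≤ K) (h : A ≤ N)
    (ha : ∀ D, A ≤ D → D ≤ N → |∑ d ∈ Ioc A D, a d| ≤ K * D) :
    |∑ d ∈ Ioc A N, a d / d| ≤ K * (2 + log N) := by
  have hboundary : |(∑ d ∈ Ioc A N, a d) / (N + 1)| ≤ K := by
    rw [abs_div, abs_of_pos (by positivity : (0 : ℝ) < N + 1), div_le_iff₀ (by positivity)]
    linarith [ha N h le_rfl]
  have hsum : |∑ d ∈ Ioc A N, (∑ e ∈ Ioc A d, a e) * (1 / (d : ℝ) - 1 / (d + 1))| ≤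
      K * ∑ d ∈ Ioc 0 N, (d : ℝ)⁻¹ := by
    rw [mul_sum]
    refine (abs_sum_le_sum_abs _ _).trans
      ((sum_le_sum fun d hd => ?_).trans (sum_le_sum_of_subset_of_nonneg
        (Ioc_subset_Ioc_left (Nat.zero_le A)) fun d _ _ => by positivity))
    obtain ⟨hAd, hdN⟩ := mem_Ioc.1 hd
    have hd0 : (0 : ℝ) < d := by exact_mod_cast (by omega : 0 < d)
    have hdiff : 0 ≤ 1 / (d : ℝ) - 1 / (d + 1) :=
      sub_nonneg.2 (one_div_le_one_div_of_le hd0 (by linarith))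
    rw [abs_mul, abs_of_nonneg hdiff]
    calc _ ≤ K * d * (1 / (d : ℝ) - 1 / (d + 1)) := by
          gcongr
          exact ha d hAd.le hdN
      _ = K * (d * (1 / (d : ℝ) - 1 / (d + 1))) := mul_assoc _ _ _
      _ ≤ K * (d : ℝ)⁻¹ := by
          gcongr
          exact mul_one_div_sub_one_div_add_one_le_inv hd0
  rw [sum_Ioc_div_eq a h]
  refine (abs_add_le _ _).trans ?_
  linarith [mul_le_mul_of_nonneg_left (sum_Ioc_inv_le N) hK]

lemma sum_Ioc_inv_le_log_sub {B N : ℕ} (hB : B ≠ 0) (h : B ≤ N) :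
    ∑ d ∈ Ioc B N, (d : ℝ)⁻¹ ≤ log N - log B := by
  induction N, h using Nat.le_induction with
  | base => simp
  | succ N hN ih =>
    have hN0 : (0 : ℝ) < N := by exact_mod_cast (by omega : 0 < N)
    have hlog := one_sub_inv_le_log_of_pos (by positivity : (0 : ℝ) < (N + 1) / N)
    rw [log_div (by positivity) hN0.ne', inv_div, one_sub_div (by positivity), add_sub_cancel_left,
      one_div] at hlog
    rw [sum_Ioc_succ_top (by omega)]
    push_cast
    linarith

variable {w : ℕ → ℝ}

lemma abs_sum_div_le_sum_inv (hw : ∀ d, |w d| ≤ 1) (s : Finset ℕ) :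
    |∑ d ∈ s, w d / d| ≤ ∑ d ∈ s, (d : ℝ)⁻¹ := by
  refine (abs_sum_le_sum_abs _ _).trans (sum_le_sum fun d _ => ?_)
  rw [abs_div, Nat.abs_cast, div_eq_mul_inv]
  exact mul_le_of_le_one_left (by positivity) (hw d)

lemma abs_sum_div_le_of_dyadic (hw : ∀ d, |w d| ≤ 1) {A B N : ℕ} {K : ℝ} (hK : 0 ≤ K)
    (hB : B ≠ 0) (hBN : B ≤ N)
    (hblock : ∀ D D', A ≤ D → D' ≤ 2 * (D + 1) → D' ≤ B → |∑ d ∈ Ioc D D', w d| ≤ K * D') :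
    |∑ d ∈ Ioc 0 N, w d / d| ≤
      1 + log A + 2 * K * (2 + log B) + (log N - log B) := by
  have hlogmin : log (min A B : ℕ) ≤ log A := by
    rcases (min A B).eq_zero_or_pos with h0 | h0
    · rw [h0, Nat.cast_zero, log_zero]
      exact log_natCast_nonneg A
    · exact log_le_log (by exact_mod_cast h0) (by exact_mod_cast min_le_left A B)
  have hhead := (abs_sum_div_le_sum_inv hw (Ioc 0 (min A B))).trans (sum_Ioc_inv_le _)
  have htail := (abs_sum_div_le_sum_inv hw (Ioc B N)).trans (sum_Ioc_inv_le_log_sub hB hBN)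
  have hmiddle : |∑ d ∈ Ioc (min A B) B, w d / d| ≤ 2 * K * (2 + log B) := by
    rcases le_total A B with hAB | hBA
    · rw [min_eq_left hAB]
      exact abs_sum_Ioc_div_le (by positivity) hAB fun _ hAD hDB =>
        norm_sum_Ioc_le_of_dyadic (E := ℝ) hK hblock hAD hDB
    · rw [min_eq_right hBA, Ioc_self, sum_empty, abs_zero]
      have := log_natCast_nonneg B
      positivity
  rw [← sum_Ioc_consecutive _ (Nat.zero_le B) hBN,
    ← sum_Ioc_consecutive _ (Nat.zero_le _) (min_le_right A B)]
  linarith [abs_add_three (∑ d ∈ Ioc 0 (min A B), w d / d) (∑ d ∈ Ioc (min A B) B, w d / d)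
    (∑ d ∈ Ioc B N, w d / d)]

end Dyadic

section MoebiusSawtoothDiv

lemma abs_moebius_mul_le_abs (d : ℕ) (r : ℝ) : |(μ d : ℝ) * r| ≤ |r| := by
  rw [abs_mul]
  exact mul_le_of_le_one_left (abs_nonneg r)
    (by exact_mod_cast ArithmeticFunction.abs_moebius_le_one)

lemma log_sub_one_le_log_floor {y : ℝ} (hy : 1 ≤ y) : log y - 1 ≤ log ⌊y⌋₊ := by
  have hfloor : (1 : ℝ) ≤ ⌊y⌋₊ := by exact_mod_cast (Nat.one_le_floor_iff y).2 hy
  rw [le_log_iff_exp_le (by linarith), exp_sub, exp_log (by linarith), div_le_iff₀ (exp_pos 1)]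
  nlinarith [add_one_le_exp (1 : ℝ), Nat.lt_floor_add_one y]

theorem exists_eventually_abs_sum_moebius_sawtooth_div_le : ∃ C : ℝ, ∀ᶠ L : ℝ in atTop,
    |∑ d ∈ Ioc 0 ⌊exp L⌋₊, (μ d : ℝ) * sawtooth (exp L / d) / d| ≤
      C * (L ^ ((2 : ℝ) / 3) * log L ^ ((4 : ℝ) / 3)) := by
  obtain ⟨C, hC, hdyadic⟩ := exists_eventually_abs_sum_moebius_sawtooth_le
  refine ⟨6 * C + 9, ?_⟩
  filter_upwards [hdyadic, eventually_ge_atTop (exp 1)] with L hblock hL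
  have hL1 : 1 ≤ L := (one_le_exp zero_le_one).trans hL
  have hlogcut := log_cutoff_le hL1
  have hP1 : 1 ≤ L ^ ((2 : ℝ) / 3) := one_le_rpow hL1 (by norm_num)
  have hPL : L ^ ((2 : ℝ) / 3) ≤ L := rpow_le_self_of_one_le hL1 (by norm_num)
  have hPW : L ^ ((2 : ℝ) / 3) ≤ L ^ ((2 : ℝ) / 3) * log L ^ ((4 : ℝ) / 3) :=
    le_mul_of_one_le_right (by positivity)
      (one_le_rpow ((le_log_iff_exp_le (by linarith)).2 hL) (by norm_num))
  set P := L ^ ((2 : ℝ) / 3)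
  set W := P * log L ^ ((4 : ℝ) / 3)
  set B := ⌊exp (L - P)⌋₊
  have hexp : 1 ≤ exp (L - P) := one_le_exp (by linarith)
  have hB : B ≠ 0 := (Nat.floor_pos.2 hexp).ne'
  have hBN : B ≤ ⌊exp L⌋₊ := Nat.floor_mono (exp_le_exp.2 (by linarith))
  have hlogB : L - P - 1 ≤ log B := by simpa using log_sub_one_le_log_floor hexp
  have hlogN : log ⌊exp L⌋₊ ≤ L :=
    (log_le_iff_le_exp (by exact_mod_cast (Nat.pos_of_ne_zero hB).trans_le hBN)).2
      (Nat.floor_le (exp_pos L).le)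
  have hlogBN : log B ≤ log ⌊exp L⌋₊ := log_le_log (by positivity) (by exact_mod_cast hBN)
  have hmain := abs_sum_div_le_of_dyadic (w := fun d => (μ d : ℝ) * sawtooth (exp L / d))
    (A := cutoff L ^ 3) (K := C / L)
    (fun d => (abs_moebius_mul_le_abs d _).trans (abs_sawtooth_le_one _)) (by positivity) hB hBN
    fun D D' hD hD' hD'B => by
      refine (hblock D D' hD hD' ?_).trans_eq (by ring)
      calc (D' : ℝ) * exp P ≤ exp (L - P) * exp P := by
            gcongr
            exact (Nat.cast_le.2 hD'B).trans (Nat.floor_le (exp_pos _).le)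
        _ = exp L := by rw [← exp_add, sub_add_cancel]
  have hmiddle : 2 * (C / L) * (2 + log B) ≤ 6 * C := by
    calc _ ≤ 2 * (C / L) * (2 * L + L) := by gcongr <;> linarith
      _ = 6 * C := by field_simp; ring
  push_cast [log_pow] at hmain
  linarith [le_mul_of_one_le_right (by positivity : 0 ≤ 6 * C) (hP1.trans hPW)]

end MoebiusSawtoothDiv

section Totient

lemma hasSum_moebius_div_sq : HasSum (fun n : ℕ => (μ n : ℝ) / (n : ℝ) ^ 2) (6 / π ^ 2) := by
  have h2 : 1 < (2 : ℂ).re := by norm_num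
  have hsum := (ArithmeticFunction.LSeriesSummable_moebius_iff.2 h2).LSeriesHasSum
  have hvalue : LSeries (fun n => (μ n : ℂ)) 2 = ((6 / π ^ 2 : ℝ) : ℂ) := by
    have hmul := ArithmeticFunction.LSeries_zeta_mul_Lseries_moebius h2
    rw [ArithmeticFunction.LSeries_zeta_eq_riemannZeta h2, riemannZeta_two] at hmul
    push_cast
    rw [eq_div_iff (pow_ne_zero 2 (by exact_mod_cast pi_ne_zero))]
    linear_combination 6 * hmul
  rw [hvalue, LSeriesHasSum] at hsum
  refine Complex.hasSum_ofReal.1 (hsum.congr_fun fun n => ?_)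
  rcases eq_or_ne n 0 with rfl | hn
  · simp
  · rw [LSeries.term_of_ne_zero hn]
    push_cast
    norm_num

lemma abs_sum_moebius_div_sq_sub_le {N : ℕ} (hN : N ≠ 0) :
    |∑ d ∈ Ioc 0 N, (μ d : ℝ) / (d : ℝ) ^ 2 - 6 / π ^ 2| ≤ 1 / (N : ℝ) := by
  have hlim := ((hasSum_moebius_div_sq.tendsto_sum_nat.comp (tendsto_add_atTop_nat 1)).const_sub
    (∑ d ∈ Ioc 0 N, (μ d : ℝ) / (d : ℝ) ^ 2)).abs
  refine le_of_tendsto hlim ?_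
  filter_upwards [eventually_ge_atTop N] with M hM
  have hrange : ∑ d ∈ range (M + 1), (μ d : ℝ) / (d : ℝ) ^ 2 =
      ∑ d ∈ Ioc 0 M, (μ d : ℝ) / (d : ℝ) ^ 2 := by
    rw [Nat.range_succ_eq_Icc_zero, ← sum_Ioc_add_eq_sum_Icc (Nat.zero_le M)]
    simp
  rw [Function.comp_apply, hrange, ← sum_Ioc_consecutive _ (Nat.zero_le N) hM, sub_add_cancel_left,
    abs_neg]
  calc _ ≤ ∑ d ∈ Ioc N M, ((d : ℝ) ^ 2)⁻¹ := by
        refine (abs_sum_le_sum_abs _ _).trans (sum_le_sum fun d _ => ?_)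
        rw [div_eq_mul_inv]
        exact (abs_moebius_mul_le_abs d _).trans_eq (abs_of_nonneg (by positivity))
    _ ≤ (N : ℝ)⁻¹ - (M : ℝ)⁻¹ := sum_Ioc_inv_sq_le_sub hN hM
    _ ≤ 1 / (N : ℝ) := by
        rw [one_div]
        exact sub_le_self _ (by positivity)

lemma sum_Ioc_natCast (m : ℕ) : ∑ b ∈ Ioc 0 m, (b : ℝ) = (m : ℝ) * (m + 1) / 2 := by
  induction m with
  | zero => simp
  | succ m ih =>
    rw [sum_Ioc_succ_top (Nat.zero_le m), ih]
    push_cast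
    ring

lemma sum_totient_eq_sum_moebius (N : ℕ) :
    ∑ n ∈ Ioc 0 N, (Nat.totient n : ℝ) =
      ∑ d ∈ Ioc 0 N, (μ d : ℝ) * (((N / d : ℕ) : ℝ) * ((N / d : ℕ) + 1) / 2) := by
  have hinversion := (ArithmeticFunction.sum_eq_iff_sum_mul_moebius_eq
    (f := fun n => (Nat.totient n : ℝ)) (g := fun n => (n : ℝ))).1 fun n _ => by
      exact_mod_cast Nat.sum_totient n
  have hconv := ArithmeticFunction.sum_Ioc_mul_eq_sum_sum (μ : ArithmeticFunction ℝ)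
    ((ArithmeticFunction.id : ArithmeticFunction ℕ) : ArithmeticFunction ℝ) N
  simp only [ArithmeticFunction.intCoe_apply, ArithmeticFunction.natCoe_apply,
    ArithmeticFunction.id_apply, sum_Ioc_natCast] at hconv
  rw [← hconv]
  refine sum_congr rfl fun n hn => ?_
  rw [ArithmeticFunction.mul_apply, ← hinversion n (mem_Ioc.1 hn).1]
  rfl

lemma natCast_floor_div_eq {x : ℝ} (hx : 0 ≤ x) (d : ℕ) :
    ((⌊x⌋₊ / d : ℕ) : ℝ) = x / d - sawtooth (x / d) - 1 / 2 := by
  rw [← Nat.floor_div_natCast, natCast_floor_eq_intCast_floor (by positivity), sawtooth,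
    ← Int.self_sub_floor]
  ring

lemma sum_totient_eq_sum_sawtooth {x : ℝ} (hx : 0 ≤ x) :
    ∑ n ∈ Ioc 0 ⌊x⌋₊, (Nat.totient n : ℝ) =
      x ^ 2 / 2 * ∑ d ∈ Ioc 0 ⌊x⌋₊, (μ d : ℝ) / (d : ℝ) ^ 2 -
      x * ∑ d ∈ Ioc 0 ⌊x⌋₊, (μ d : ℝ) * sawtooth (x / d) / d +
      ∑ d ∈ Ioc 0 ⌊x⌋₊, (μ d : ℝ) * (sawtooth (x / d) ^ 2 / 2 - 1 / 8) := by
  rw [sum_totient_eq_sum_moebius, mul_sum, mul_sum, ← sum_sub_distrib, ← sum_add_distrib]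
  refine sum_congr rfl fun d hd => ?_
  have hd0 : (d : ℝ) ≠ 0 := Nat.cast_ne_zero.2 (mem_Ioc.1 hd).1.ne'
  rw [natCast_floor_div_eq hx]
  field_simp
  ring

lemma abs_sum_moebius_mul_sawtooth_sq_le {x : ℝ} (hx : 0 ≤ x) :
    |∑ d ∈ Ioc 0 ⌊x⌋₊, (μ d : ℝ) * (sawtooth (x / d) ^ 2 / 2 - 1 / 8)| ≤ x := by
  calc _ ≤ ∑ _d ∈ Ioc 0 ⌊x⌋₊, (1 : ℝ) := by
        refine (abs_sum_le_sum_abs _ _).trans (sum_le_sum fun d _ => ?_)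
        refine (abs_moebius_mul_le_abs d _).trans (abs_le.2 ?_)
        have hsq := (sq_le_one_iff_abs_le_one _).2 (abs_sawtooth_le_one (x / d))
        constructor <;> linarith [sq_nonneg (sawtooth (x / d))]
    _ ≤ x := by simpa using Nat.floor_le hx

lemma abs_sum_totient_sub_le {x : ℝ} (hx : 1 ≤ x) :
    |∑ n ∈ Ioc 0 ⌊x⌋₊, (Nat.totient n : ℝ) - 3 / π ^ 2 * x ^ 2| ≤
      2 * x + x * |∑ d ∈ Ioc 0 ⌊x⌋₊, (μ d : ℝ) * sawtooth (x / d) / d| := by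
  have hx0 : 0 < x := by linarith
  have hN : 0 < ⌊x⌋₊ := Nat.floor_pos.2 hx
  have hmain : |x ^ 2 / 2 * (∑ d ∈ Ioc 0 ⌊x⌋₊, (μ d : ℝ) / (d : ℝ) ^ 2 - 6 / π ^ 2)| ≤ x := by
    rw [abs_mul, abs_of_nonneg (by positivity : 0 ≤ x ^ 2 / 2)]
    refine (mul_le_mul_of_nonneg_left (abs_sum_moebius_div_sq_sub_le hN.ne')
      (by positivity)).trans ?_
    have hN1 : (1 : ℝ) ≤ ⌊x⌋₊ := by exact_mod_cast hN
    rw [mul_one_div, div_le_iff₀ (by linarith)]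
    nlinarith [Nat.lt_floor_add_one x]
  have hrem := abs_sum_moebius_mul_sawtooth_sq_le hx0.le
  rw [sum_totient_eq_sum_sawtooth hx0.le]
  set S := ∑ d ∈ Ioc 0 ⌊x⌋₊, (μ d : ℝ) / (d : ℝ) ^ 2
  set E := ∑ d ∈ Ioc 0 ⌊x⌋₊, (μ d : ℝ) * sawtooth (x / d) / d
  set R := ∑ d ∈ Ioc 0 ⌊x⌋₊, (μ d : ℝ) * (sawtooth (x / d) ^ 2 / 2 - 1 / 8)
  calc |x ^ 2 / 2 * S - x * E + R - 3 / π ^ 2 * x ^ 2|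
      = |x ^ 2 / 2 * (S - 6 / π ^ 2) - x * E + R| := by ring_nf
    _ ≤ |x ^ 2 / 2 * (S - 6 / π ^ 2)| + |x * E| + |R| :=
        (abs_add_le _ _).trans (add_le_add_left (abs_sub _ _) _)
    _ ≤ x + x * |E| + x := by
        rw [abs_mul x, abs_of_pos hx0]
        gcongr
    _ = 2 * x + x * |E| := by ring

end Totient

end Walfisz

/-- `∑_{n ≤ x} φ(n) = (3/π²) x² + O(x (log x)^{2/3} (log log x)^{4/3})` as `x → ∞`. -/
theorem sum_totient_asymptotic :
    (fun x : ℝ => (∑ n ∈ Finset.Icc 1 ⌊x⌋₊, (Nat.totient n : ℝ)) - 3 / π ^ 2 * x ^ 2)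
    =O[atTop] fun x : ℝ =>
      x * Real.log x ^ ((2 : ℝ) / 3) * Real.log (Real.log x) ^ ((4 : ℝ) / 3) := by
  obtain ⟨C, hsawtooth⟩ := Walfisz.exists_eventually_abs_sum_moebius_sawtooth_div_le
  refine Asymptotics.IsBigO.of_bound (2 + C) ?_
  filter_upwards [tendsto_log_atTop.eventually hsawtooth,
    tendsto_log_atTop.eventually_ge_atTop (exp 1), eventually_ge_atTop 1] with x hsum hL hx
  rw [exp_log (by linarith)] at hsum
  have hL1 : 1 ≤ log x := (one_le_exp zero_le_one).trans hL
  have hlog : 1 ≤ log (log x) := (le_log_iff_exp_le (by linarith)).2 hL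
  have hW : 1 ≤ log x ^ ((2 : ℝ) / 3) * log (log x) ^ ((4 : ℝ) / 3) :=
    one_le_mul_of_one_le_of_one_le (one_le_rpow hL1 (by norm_num)) (one_le_rpow hlog (by norm_num))
  rw [norm_eq_abs, norm_of_nonneg (by positivity), mul_assoc x]
  calc _ ≤ 2 * x + x * |∑ d ∈ Ioc 0 ⌊x⌋₊, (ArithmeticFunction.moebius d : ℝ) *
          Walfisz.sawtooth (x / d) / d| := Walfisz.abs_sum_totient_sub_le hx
    _ ≤ 2 * (x * (log x ^ ((2 : ℝ) / 3) * log (log x) ^ ((4 : ℝ) / 3))) +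
          x * (C * (log x ^ ((2 : ℝ) / 3) * log (log x) ^ ((4 : ℝ) / 3))) := by
        gcongr
        exact le_mul_of_one_le_right (by linarith) hW
    _ = _ := by ring
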